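/- arXiv:1803.02017 — 3 statements merged into one kernel-verified Lean document; each statement's English description precedes it below -/
import Mathlib

section
/- Let C be a clutter and let J = I(C)^∨ ⊆ R be its ideal of covers. If C is uniform and its set covering polyhedron Q(A) is integral, then: (a) depth(R/J^{(k)}) ≥ depth(R/J^{(k+1)}) for all k ≥ 1; (b) reg(R/J^{(k)}) ≤ reg(R/J^{(k+1)}) for all k ≥ 1. -/
/-!
The symbolic power `J^{(k)}` of the ideal of covers is the monomial ideal whose exponents `a` satisfy
`∑ i ∈ e, a i ≥ k` for all edges `e`, since the associated primes of `R/J` are generated by the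
edges (`mem_symbPow`). Uniformity makes the face of `Q(A)` given by `x(e) = 1` for all edges `e`
nonempty, and integrality then yields a set `c` of vertices meeting every edge exactly once
(`exists_exact_cover`). Consequently `J^{(k)} = J^{(k+1)} : x^c`, and the theorem reduces to a
comparison of a monomial ideal `I` with `I : x^c` (`depth_reg_colon`).

For that comparison, take a finite minimal multigraded free resolution of `R/I`, recorded by the
multidegrees of its bases and by scalar matrices (`LRes`, `exists_LRes`). Exactness in multidegree
`a` only involves the basis elements of multidegree `≤ a`, and `b - c ≤ a ↔ b ≤ a + c` for truncated
subtraction, so replacing each multidegree `b` by `b - c` and keeping the scalar matrices gives a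
resolution of `R/(I : x^c)` (`LRes.shift`), in general not minimal, with the same ranks and with
twists that are not larger.

* Regularity: every twist of a minimal resolution occurs in any other graded free resolution
  (`exists_dg_eq`), so any bound on the twists of some resolution of `R/I` bounds those of the
  shifted one (`CMreg_le`).
* Depth: in terms of a projective resolution of the residue field, vanishing of `Ext^j(K, R/I)` for
  `j ≤ i` forces the minimal resolution of `R/I` to be zero from homological degree `n - i` on
  (`rk_eq_zero`); conversely a free resolution of such a length forces `Ext^i` to vanish
  (`van_of_rk_eq_zero`). Both rest on the vanishing of `Ext^j(K, R)` for `j < n` and its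
  nonvanishing for `j = n` (`van_ring`). Hence depth does not drop (`depthQ_le`).
-/

open MvPolynomial CategoryTheory Opposite

noncomputable section

/-- The polynomial ring `K[x_v : v ∈ σ]` over the field `K`. -/
abbrev MvPoly (K : Type) [Field K] (σ : Type) : Type := MvPolynomial σ K

variable (K : Type) [Field K] (σ : Type)

/-- The graded maximal ideal `m = (x_v : v ∈ σ)` generated by all the variables. -/
def maxIdeal : Ideal (MvPoly K σ) := Ideal.span (Set.range MvPolynomial.X)

/-- The depth of `R/I` with respect to the graded maximal ideal, defined as
`inf { i | Ext^i(R/m, R/I) ≠ 0 }` (with value `⊤` for the zero module). -/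
def depthQ (I : Ideal (MvPoly K σ)) : ℕ∞ :=
  sInf { d : ℕ∞ | ∃ i : ℕ, d = i ∧
    Nontrivial (((Ext (MvPoly K σ) (ModuleCat (MvPoly K σ)) i).obj
      (op (ModuleCat.of (MvPoly K σ) (MvPoly K σ ⧸ maxIdeal K σ)))).obj
      (ModuleCat.of (MvPoly K σ) (MvPoly K σ ⧸ I))) }

/-- The degree-`e` homogeneous component condition, for an integer `e`
(for `e < 0` the component is zero). -/
def HomogComp (e : ℤ) (p : MvPoly K σ) : Prop :=
  if 0 ≤ e then p ∈ homogeneousSubmodule σ K e.toNat else p = 0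

/-- `v` is a homogeneous element of degree `e` of the graded free module
`⊕_j R(-dg j)`. -/
def IsHomogVec {m : ℕ} (dg : Fin m → ℤ) (e : ℤ) (v : Fin m → MvPoly K σ) : Prop :=
  ∀ j, HomogComp K σ (e - dg j) (v j)

/-- The degree-`e` homogeneous component of `R/I`. -/
def QuotComp (I : Ideal (MvPoly K σ)) (e : ℤ) : Submodule K (MvPoly K σ ⧸ I) :=
  if 0 ≤ e then
    Submodule.map (Ideal.Quotient.mkₐ K I).toLinearMap (homogeneousSubmodule σ K e.toNat)
  else ⊥

/-- A graded free resolution of `R/I` by finitely generated graded free modules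
`F i = ⊕_{j < rk i} R(-dg i j)`, with degree preserving (degree zero) maps. -/
structure GradedFreeRes (I : Ideal (MvPoly K σ)) where
  rk : ℕ → ℕ
  dg : (i : ℕ) → Fin (rk i) → ℤ
  dmap : (i : ℕ) → ((Fin (rk (i + 1)) → MvPoly K σ) →ₗ[MvPoly K σ] (Fin (rk i) → MvPoly K σ))
  aug : (Fin (rk 0) → MvPoly K σ) →ₗ[MvPoly K σ] (MvPoly K σ ⧸ I)
  aug_surj : Function.Surjective aug
  exact0 : Function.Exact (dmap 0) aug
  exactS : ∀ i, Function.Exact (dmap (i + 1)) (dmap i)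
  graded : ∀ i (e : ℤ) v, IsHomogVec K σ (dg (i + 1)) e v → IsHomogVec K σ (dg i) e (dmap i v)
  aug_graded : ∀ (e : ℤ) v, IsHomogVec K σ (dg 0) e v → aug v ∈ QuotComp K σ I e

/-- `R/I` admits a graded free resolution all of whose twists `dg i j` satisfy
`dg i j - i ≤ r`. -/
def ResBound (I : Ideal (MvPoly K σ)) (r : ℤ) : Prop :=
  ∃ F : GradedFreeRes K σ I, ∀ i j, F.dg i j - i ≤ r

open Classical in
/-- The Castelnuovo–Mumford regularity of `R/I`: the least `r` bounding the twists of
a graded free resolution of `R/I` (with the convention `⊥ = -∞` for the zero module). -/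
def CMreg (I : Ideal (MvPoly K σ)) : WithBot ℤ :=
  if h : ∃ r : ℤ, ResBound K σ I r ∧ ∀ s : ℤ, ResBound K σ I s → r ≤ s
  then ((h.choose : ℤ) : WithBot ℤ) else ⊥

variable {n : ℕ}

/-- The monomial `x^a`. -/
def mono (K : Type) [Field K] {n : ℕ} (a : Fin n →₀ ℕ) : MvPoly K (Fin n) :=
  MvPolynomial.monomial a 1

/-- A monomial ideal: an ideal generated by monomials. -/
def IsMonomialIdeal (I : Ideal (MvPoly K (Fin n))) : Prop :=
  ∃ S : Set (Fin n →₀ ℕ), I = Ideal.span (mono K '' S)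

/-- A squarefree exponent vector. -/
def SqfreeExp (a : Fin n →₀ ℕ) : Prop := ∀ i, a i ≤ 1

/-- A squarefree monomial ideal: an ideal generated by squarefree monomials. -/
def IsSqfreeMonomialIdeal (I : Ideal (MvPoly K (Fin n))) : Prop :=
  ∃ S : Set (Fin n →₀ ℕ), (∀ a ∈ S, SqfreeExp a) ∧ I = Ideal.span (mono K '' S)

/-- A clutter on the vertex set `Fin n`: a family of edges none of which contains another. -/
structure Clutter (n : ℕ) where
  edges : Finset (Finset (Fin n))
  antichain : ∀ e ∈ edges, ∀ f ∈ edges, e ⊆ f → e = f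

namespace Clutter

variable {n : ℕ}

/-- The edge ideal of a clutter, generated by the squarefree monomials
`x_e = ∏_{i ∈ e} x_i` for the edges `e`. -/
def edgeIdeal (K : Type) [Field K] (C : Clutter n) : Ideal (MvPoly K (Fin n)) :=
  Ideal.span ((fun e : Finset (Fin n) => ∏ i ∈ e, (MvPolynomial.X i : MvPoly K (Fin n))) ''
    ↑C.edges)

/-- `c` is a vertex cover of `C`: it meets every edge. -/
def IsCover (C : Clutter n) (c : Finset (Fin n)) : Prop :=
  ∀ e ∈ C.edges, ∃ i ∈ e, i ∈ c

/-- `c` is a minimal vertex cover of `C`. -/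
def IsMinCover (C : Clutter n) (c : Finset (Fin n)) : Prop :=
  IsCover C c ∧ ∀ d ⊆ c, IsCover C d → d = c

open Classical in
/-- The clutter of minimal vertex covers (the Alexander dual clutter `C^∨`). -/
def dual (C : Clutter n) : Clutter n where
  edges := Finset.univ.filter fun c => IsMinCover C c
  antichain := by
    intro e he f hf hef
    simp only [Finset.mem_filter] at he hf
    exact hf.2.2 e hef he.2.1

/-- The ideal of covers (Alexander dual ideal) of a clutter: the edge ideal of `C^∨`. -/
def coverIdeal (K : Type) [Field K] (C : Clutter n) : Ideal (MvPoly K (Fin n)) :=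
  edgeIdeal K (dual C)

open Classical in
/-- Deletion `C ∖ V`: delete all edges of `C` that intersect `V`. -/
def del (C : Clutter n) (V : Finset (Fin n)) : Clutter n where
  edges := C.edges.filter fun e => ∀ i ∈ V, i ∉ e
  antichain := by
    intro e he f hf hef
    simp only [Finset.mem_filter] at he hf
    exact C.antichain e he.1 f hf.1 hef

/-- All minimal vertex covers of `C` have the same cardinality. -/
def Unmixed (C : Clutter n) : Prop :=
  ∀ c d, IsMinCover C c → IsMinCover C d → c.card = d.card

/-- All edges of `C` have the same cardinality. -/
def Uniform (C : Clutter n) : Prop :=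
  ∀ e ∈ C.edges, ∀ f ∈ C.edges, e.card = f.card

/-- The set covering polyhedron `Q(A) = {x ∈ ℝ^n : x ≥ 0, xA ≥ 1}` of the clutter. -/
def coverPolyhedron (C : Clutter n) : Set (Fin n → ℝ) :=
  { x | (∀ i, 0 ≤ x i) ∧ ∀ e ∈ C.edges, 1 ≤ ∑ i ∈ e, x i }

/-- The set covering polyhedron is integral: all of its vertices (extreme points)
have integer coordinates. -/
def IntegralPolyhedron (C : Clutter n) : Prop :=
  ∀ x ∈ Set.extremePoints ℝ (coverPolyhedron C), ∀ i, ∃ z : ℤ, x i = (z : ℝ)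

open Classical in
/-- The max-flow min-cut property: for every nonnegative integral vector `α` both sides of
the LP-duality equation `min{⟨α,x⟩ : x ≥ 0, xA ≥ 1} = max{⟨y,1⟩ : y ≥ 0, Ay ≤ α}`
have integral optimum solutions. -/
def HasMFMC (C : Clutter n) : Prop :=
  ∀ α : Fin n → ℕ,
    ∃ x : Fin n → ℕ,
      ((fun i => (x i : ℝ)) ∈ coverPolyhedron C ∧
        ∀ z ∈ coverPolyhedron C, ∑ i, (α i : ℝ) * x i ≤ ∑ i, (α i : ℝ) * z i) ∧
    ∃ y : Finset (Fin n) → ℕ,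
      ((∀ e, e ∉ C.edges → y e = 0) ∧
        (∀ i, ∑ e ∈ C.edges.filter (fun e => i ∈ e), y e ≤ α i) ∧
        (∀ y' : Finset (Fin n) → ℝ, (∀ e, 0 ≤ y' e) → (∀ e, e ∉ C.edges → y' e = 0) →
          (∀ i, ∑ e ∈ C.edges.filter (fun e => i ∈ e), y' e ≤ (α i : ℝ)) →
          ∑ e ∈ C.edges, y' e ≤ ∑ e ∈ C.edges, (y e : ℝ))) ∧
      (∑ i, (α i : ℝ) * x i = ∑ e ∈ C.edges, (y e : ℝ))

end Clutter

open Classical in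
/-- The unique clutter whose edge ideal is a given squarefree monomial ideal `I`:
its edges are the minimal supports of squarefree monomials belonging to `I`. -/
def clutterOf (K : Type) [Field K] {n : ℕ} (I : Ideal (MvPoly K (Fin n))) : Clutter n where
  edges := Finset.univ.filter fun e =>
    ((∏ i ∈ e, MvPolynomial.X i : MvPoly K (Fin n)) ∈ I ∧
      ∀ f ⊆ e, (∏ i ∈ f, MvPolynomial.X i : MvPoly K (Fin n)) ∈ I → f = e)
  antichain := by
    intro e he f hf hef
    simp only [Finset.mem_filter] at he hf
    exact hf.2.2 e hef he.2.1

/-- The Alexander dual of a squarefree monomial ideal. -/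
def idealDual (K : Type) [Field K] {n : ℕ} (I : Ideal (MvPoly K (Fin n))) :
    Ideal (MvPoly K (Fin n)) :=
  Clutter.coverIdeal K (clutterOf K I)

/-- The `k`-th symbolic power of a squarefree monomial ideal `J`:
`J^{(k)} = ⋂_{p ∈ Ass(R/J)} p^k`. -/
def symbPow (K : Type) [Field K] {σ : Type} (J : Ideal (MvPoly K σ)) (k : ℕ) :
    Ideal (MvPoly K σ) :=
  ⨅ p ∈ associatedPrimes (MvPoly K σ) (MvPoly K σ ⧸ J), p ^ k

end

namespace CoverDepthReg

/-! ### Lifting maps and homotopies -/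

section Lifting

variable {R : Type} [CommRing R]

/-- A map out of a projective module lifts along any linear map whose range contains its values. -/
lemma exists_lift {P M N : Type} [AddCommGroup P] [Module R P] [AddCommGroup M] [Module R M]
    [AddCommGroup N] [Module R N] [Module.Projective R P] (f : P →ₗ[R] N) (g : M →ₗ[R] N)
    (h : ∀ x, ∃ y, g y = f x) : ∃ φ : P →ₗ[R] M, ∀ x, g (φ x) = f x := by
  obtain ⟨φ, hφ⟩ := Module.projective_lifting_property (P := P) g.rangeRestrict
    (f.codRestrict (LinearMap.range g) h) g.surjective_rangeRestrict
  refine ⟨φ, fun x => ?_⟩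
  exact congrArg Subtype.val (LinearMap.congr_fun hφ x)

variable {X Y : ℕ → Type} [∀ i, AddCommGroup (X i)] [∀ i, Module R (X i)]
  [∀ i, AddCommGroup (Y i)] [∀ i, Module R (Y i)]
  (dX : ∀ i, X (i + 1) →ₗ[R] X i) (dY : ∀ i, Y (i + 1) →ₗ[R] Y i)

/-- Inductive construction of a chain map `X → Y`, with `Y` exact, from its degree zero part.
The predicate `Q` records a further property (such as compatibility with gradings) that each
one-step lift can be chosen to have. -/
lemma exists_chainMap (hX : ∀ i x, dX i (dX (i + 1) x) = 0)
    (hY : ∀ i, Function.Exact (dY (i + 1)) (dY i))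
    (Q : ∀ i, (X i →ₗ[R] Y i) → Prop)
    (step : ∀ i (φ : X i →ₗ[R] Y i), Q i φ → (∀ x, ∃ y, dY i y = φ (dX i x)) →
      ∃ φ' : X (i + 1) →ₗ[R] Y (i + 1), Q (i + 1) φ' ∧ ∀ x, dY i (φ' x) = φ (dX i x))
    (φ₀ : X 0 →ₗ[R] Y 0) (hQ : Q 0 φ₀) (h₀ : ∀ x, ∃ y, dY 0 y = φ₀ (dX 0 x)) :
    ∃ φ : ∀ i, X i →ₗ[R] Y i, φ 0 = φ₀ ∧ (∀ i, Q i (φ i)) ∧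
      ∀ i x, dY i (φ (i + 1) x) = φ i (dX i x) := by
  classical
  let S : ℕ → Type := fun i =>
    {φ : X i →ₗ[R] Y i // Q i φ ∧ ∀ x, ∃ y, dY i y = φ (dX i x)}
  let next : ∀ i, S i → S (i + 1) := fun i s =>
    ⟨(step i s.1 s.2.1 s.2.2).choose, (step i s.1 s.2.1 s.2.2).choose_spec.1, fun x => by
      refine (hY i _).1 ?_
      rw [(step i s.1 s.2.1 s.2.2).choose_spec.2, hX, map_zero]⟩
  let σ : ∀ i, S i := fun i => Nat.rec ⟨φ₀, hQ, h₀⟩ next i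
  exact ⟨fun i => (σ i).1, rfl, fun i => (σ i).2.1, fun i x =>
    (step i (σ i).1 (σ i).2.1 (σ i).2.2).choose_spec.2 x⟩

/-- A chain map from projectives to an exact complex that lifts zero is null-homotopic. -/
lemma exists_homotopy [∀ i, Module.Projective R (X i)]
    (hX : ∀ i x, dX i (dX (i + 1) x) = 0)
    (hY : ∀ i, Function.Exact (dY (i + 1)) (dY i))
    (θ : ∀ i, X i →ₗ[R] Y i) (hθ : ∀ i x, dY i (θ (i + 1) x) = θ i (dX i x))
    (h₀ : ∀ x, ∃ y, dY 0 y = θ 0 x) :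
    ∃ h : ∀ i, X i →ₗ[R] Y (i + 1), (∀ x, θ 0 x = dY 0 (h 0 x)) ∧
      ∀ i x, θ (i + 1) x = dY (i + 1) (h (i + 1) x) + h i (dX i x) := by
  classical
  let S : ℕ → Type := fun i =>
    {h : X i →ₗ[R] Y (i + 1) // ∀ x, θ i (dX i x) = dY i (h (dX i x))}
  have step : ∀ i (s : S i), ∃ h' : X (i + 1) →ₗ[R] Y (i + 2),
      ∀ x, dY (i + 1) (h' x) = (θ (i + 1) - s.1 ∘ₗ dX i) x := fun i s => by
    refine exists_lift _ _ fun x => (hY i _).1 ?_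
    simp [hθ, s.2]
  let next : ∀ i, S i → S (i + 1) := fun i s =>
    ⟨(step i s).choose, fun x => by rw [(step i s).choose_spec]; simp [hX]⟩
  obtain ⟨g, hg⟩ := exists_lift (θ 0) (dY 0) h₀
  let σ : ∀ i, S i := fun i => Nat.rec ⟨g, fun x => (hg _).symm⟩ next i
  refine ⟨fun i => (σ i).1, fun x => (hg x).symm, fun i x => ?_⟩
  have := (step i (σ i)).choose_spec x
  change θ (i + 1) x = dY (i + 1) ((step i (σ i)).choose x) + _
  rw [this]; simp

end Lifting

/-! ### Cohomology of `Hom(P, M)` -/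

section Van

variable {R : Type} [CommRing R] {P : ℕ → Type} [∀ i, AddCommGroup (P i)] [∀ i, Module R (P i)]
  (d : ∀ i, P (i + 1) →ₗ[R] P i)

/-- `φ : P i → M` is a coboundary of the complex `Hom(P, M)`. -/
def Cobdry {M : Type} [AddCommGroup M] [Module R M] : ∀ i, (P i →ₗ[R] M) → Prop
  | 0, φ => φ = 0
  | i + 1, φ => ∃ ψ : P i →ₗ[R] M, φ = ψ ∘ₗ d i

/-- The cohomology of `Hom(P, M)` in degree `i` vanishes. For `P` a projective resolution of `N`
this says `Ext^i(N, M) = 0`. -/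
def Van (i : ℕ) (M : Type) [AddCommGroup M] [Module R M] : Prop :=
  ∀ φ : P i →ₗ[R] M, φ ∘ₗ d i = 0 → Cobdry d i φ

variable {d} {A B C : Type} [AddCommGroup A] [Module R A] [AddCommGroup B] [Module R B]
  [AddCommGroup C] [Module R C]

lemma Cobdry.comp {i : ℕ} {φ : P i →ₗ[R] A} (h : Cobdry d i φ) (f : A →ₗ[R] B) :
    Cobdry d i (f ∘ₗ φ) := by
  cases i with
  | zero => rw [show φ = 0 from h]; exact LinearMap.comp_zero f
  | succ i => obtain ⟨ψ, rfl⟩ := h; exact ⟨f ∘ₗ ψ, rfl⟩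

lemma Cobdry.zero (i : ℕ) : Cobdry d i (0 : P i →ₗ[R] A) := by
  cases i with
  | zero => rfl
  | succ i => exact ⟨0, by simp⟩

lemma Cobdry.add {i : ℕ} {φ ψ : P i →ₗ[R] A} (h : Cobdry d i φ) (h' : Cobdry d i ψ) :
    Cobdry d i (φ + ψ) := by
  cases i with
  | zero => rw [show φ = 0 from h, show ψ = 0 from h']; exact add_zero (0 : P 0 →ₗ[R] A)
  | succ i => obtain ⟨a, rfl⟩ := h; obtain ⟨b, rfl⟩ := h'; exact ⟨a + b, by ext; simp⟩

lemma Cobdry.sum {ι : Type} (s : Finset ι) {i : ℕ} {φ : ι → (P i →ₗ[R] A)}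
    (h : ∀ j ∈ s, Cobdry d i (φ j)) : Cobdry d i (∑ j ∈ s, φ j) := by
  classical
  induction s using Finset.induction_on with
  | empty => simpa using Cobdry.zero i
  | insert a s ha ih =>
    rw [Finset.sum_insert ha]
    exact (h a (by simp)).add (ih fun j hj => h j (by simp [hj]))

lemma Van.of_retract {i : ℕ} (h : Van d i B) (f : A →ₗ[R] B) (g : B →ₗ[R] A)
    (hgf : ∀ x, g (f x) = x) : Van d i A := by
  intro φ hφ
  have := (h (f ∘ₗ φ) (by rw [LinearMap.comp_assoc, hφ, LinearMap.comp_zero])).comp g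
  convert this using 1
  ext x; simp [hgf]

lemma Van.of_subsingleton [Subsingleton A] (i : ℕ) : Van d i A := by
  intro φ _
  rw [show φ = 0 from by ext x; exact Subsingleton.elim _ _]
  exact Cobdry.zero i

lemma Van.pi {i : ℕ} (h : Van d i A) (q : ℕ) : Van d i (Fin q → A) := by
  classical
  intro φ hφ
  have : φ = ∑ j, LinearMap.single R (fun _ => A) j ∘ₗ (LinearMap.proj j ∘ₗ φ) := by
    ext x k; simp [Pi.single_apply]
  rw [this]
  refine Cobdry.sum _ fun j _ => (h _ ?_).comp _
  rw [LinearMap.comp_assoc, hφ, LinearMap.comp_zero]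

lemma Van.zero_of_null {f : A →ₗ[R] B} (hf : Function.Injective f)
    (hnull : ∀ φ : P 0 →ₗ[R] A, φ ∘ₗ d 0 = 0 → Cobdry d 0 (f ∘ₗ φ)) : Van d 0 A := by
  intro φ hφ
  have : f ∘ₗ φ = 0 := hnull φ hφ
  change φ = 0
  ext x; apply hf; simpa using LinearMap.congr_fun this x

variable [∀ i, Module.Projective R (P i)]

/-- Part of the long exact sequence: `Ext^i(B) = 0` and `Ext^(i+1)(A) = 0` give `Ext^i(C) = 0`. -/
lemma Van.right {f : A →ₗ[R] B} {g : B →ₗ[R] C} (hd : ∀ i x, d i (d (i + 1) x) = 0)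
    (hf : Function.Injective f) (hfg : Function.Exact f g)
    (hg : Function.Surjective g) {i : ℕ} (hB : Van d i B) (hA : Van d (i + 1) A) :
    Van d i C := by
  intro φ hφ
  obtain ⟨φ', hφ'⟩ := exists_lift φ g fun x => hg _
  obtain ⟨α, hα⟩ := exists_lift (φ' ∘ₗ d i) f fun x => (hfg _).1 (by
    simpa [hφ'] using LinearMap.congr_fun hφ x)
  obtain ⟨β, rfl⟩ := hA α (by ext x; apply hf; simp [hα, hd])
  have hB' := (hB (φ' - f ∘ₗ β) (by ext x; simpa [sub_eq_zero] using (hα x).symm)).comp g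
  convert hB' using 1
  ext x; simp [hφ', (hfg _).2 ⟨β x, rfl⟩]

/-- If `f : A → B` is zero on cohomology in degree `i + 1` and `Ext^i(C) = 0`,
then `Ext^(i+1)(A) = 0`. -/
lemma Van.left {f : A →ₗ[R] B} {g : B →ₗ[R] C} (hd : ∀ i x, d i (d (i + 1) x) = 0)
    (hf : Function.Injective f) (hfg : Function.Exact f g)
    (hg : Function.Surjective g) {i : ℕ} (hC : Van d i C)
    (hnull : ∀ φ : P (i + 1) →ₗ[R] A, φ ∘ₗ d (i + 1) = 0 → Cobdry d (i + 1) (f ∘ₗ φ)) :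
    Van d (i + 1) A := by
  intro φ hφ
  obtain ⟨ψ, hψ⟩ := hnull φ hφ
  have hψ' : ∀ x, f (φ x) = ψ (d i x) := fun x => LinearMap.congr_fun hψ x
  have hc := hC (g ∘ₗ ψ) (by ext x; simp [← hψ', (hfg _).2 ⟨φ x, rfl⟩])
  -- Correct `ψ` by a coboundary so that it takes values in `A`.
  obtain ⟨ψ', h1, h2⟩ : ∃ ψ' : P i →ₗ[R] B, (∀ x, ψ' (d i x) = ψ (d i x)) ∧ ∀ x, g (ψ' x) = 0 := by
    cases i with
    | zero => exact ⟨ψ, fun _ => rfl, fun x => LinearMap.congr_fun (show g ∘ₗ ψ = 0 from hc) x⟩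
    | succ i =>
      obtain ⟨χ, hχ⟩ := hc
      obtain ⟨χ', hχ'⟩ := exists_lift χ g fun x => hg _
      exact ⟨ψ - χ' ∘ₗ d i, fun x => by simp [hd], fun x => by
        simpa [hχ', sub_eq_zero] using LinearMap.congr_fun hχ x⟩
  obtain ⟨η, hη⟩ := exists_lift ψ' f fun x => (hfg _).1 (h2 x)
  exact ⟨η, by ext x; apply hf; simp [hη, h1, hψ']⟩

end Van

/-! ### Depth and free resolutions -/

section Depth

variable {R : Type} [CommRing R] {P : ℕ → Type} [∀ i, AddCommGroup (P i)] [∀ i, Module R (P i)]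
  [∀ i, Module.Projective R (P i)] {d : ∀ i, P (i + 1) →ₗ[R] P i}
  {k : Type} [AddCommGroup k] [Module R k] {ε : P 0 →ₗ[R] k}

/-- Elements annihilating `k` annihilate the cohomology `Ext^i(k, M)`. -/
lemma cobdry_smul (hd : ∀ i, Function.Exact (d (i + 1)) (d i)) (hε : Function.Exact (d 0) ε)
    {r : R} (hr : ∀ y : k, r • y = 0) {M : Type} [AddCommGroup M] [Module R M] {i : ℕ}
    {φ : P i →ₗ[R] M} (hφ : φ ∘ₗ d i = 0) : Cobdry d i (r • φ) := by
  obtain ⟨h, h0, hs⟩ := exists_homotopy d d (fun i x => (hd i).apply_apply_eq_zero x) hd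
    (fun i => r • LinearMap.id) (fun i x => by simp) (fun x => (hε _).1 (by simp [hr]))
  cases i with
  | zero =>
    change r • φ = 0
    ext x
    have := congrArg φ (h0 x)
    rw [show φ (d 0 (h 0 x)) = 0 from LinearMap.congr_fun hφ _] at this
    simpa using this
  | succ i =>
    refine ⟨φ ∘ₗ h i, ?_⟩
    ext x
    have := congrArg φ (hs i x)
    rw [map_add, show φ (d (i + 1) (h (i + 1) x)) = 0 from LinearMap.congr_fun hφ _, zero_add]
      at this
    simpa using this

end Depth

section DepthPoly

variable {K : Type} [Field K] {n : ℕ} {P : ℕ → Type} [∀ i, AddCommGroup (P i)]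
  [∀ i, Module (MvPoly K (Fin n)) (P i)] [∀ i, Module.Projective (MvPoly K (Fin n)) (P i)]
  {d : ∀ i, P (i + 1) →ₗ[MvPoly K (Fin n)] P i}
  {ε : P 0 →ₗ[MvPoly K (Fin n)] (MvPoly K (Fin n) ⧸ maxIdeal K (Fin n))}

lemma smul_residue {r : MvPoly K (Fin n)} (hr : r ∈ maxIdeal K (Fin n))
    (y : MvPoly K (Fin n) ⧸ maxIdeal K (Fin n)) : r • y = 0 := by
  obtain ⟨y, rfl⟩ := Ideal.Quotient.mk_surjective y
  rw [← Ideal.Quotient.mk_eq_mk, ← Submodule.Quotient.mk_smul, Submodule.Quotient.mk_eq_zero]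
  exact Ideal.mul_mem_right _ _ hr

lemma mem_maxIdeal_iff (p : MvPoly K (Fin n)) :
    p ∈ maxIdeal K (Fin n) ↔ constantCoeff p = 0 := by
  rw [maxIdeal, ← Set.image_univ, mem_ideal_span_X_image, constantCoeff_eq]
  constructor
  · intro h
    by_contra h0
    obtain ⟨i, -, hi⟩ := h 0 (by simpa [mem_support_iff] using h0)
    simp at hi
  · intro h a ha
    by_contra! hc
    have : a = 0 := by ext i; exact hc i trivial
    subst this
    exact (mem_support_iff.1 ha) h

/-- The ideal generated by the first `k` variables. -/
noncomputable def firstVars (K : Type) [Field K] (n k : ℕ) : Ideal (MvPoly K (Fin n)) :=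
  Ideal.span (X '' {j : Fin n | j.1 < k})

/-- `x_k` is a nonzerodivisor modulo the preceding variables. -/
lemma firstVars_regular (k : Fin n) (p : MvPoly K (Fin n))
    (h : X k * p ∈ firstVars K n k) : p ∈ firstVars K n k := by
  rw [firstVars, mem_ideal_span_X_image] at h ⊢
  intro a ha
  obtain ⟨i, hi, hne⟩ := h (a + Finsupp.single k 1) (by
    rw [mem_support_iff, mul_comm, coeff_mul_X]; exact mem_support_iff.1 ha)
  refine ⟨i, hi, ?_⟩
  have : k ≠ i := fun e => by simp [← e] at hi
  simpa [Finsupp.single_apply, this] using hne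

/-- `R/(x_0, …, x_{k-1})` has depth `n - k`. -/
lemma van_firstVars (hd : ∀ i, Function.Exact (d (i + 1)) (d i)) (hε : Function.Exact (d 0) ε)
    (hs : Function.Surjective ε) (l : ℕ) : ∀ k, k + l = n →
      (∀ i < l, Van d i (MvPoly K (Fin n) ⧸ firstVars K n k)) ∧
        ¬ Van d l (MvPoly K (Fin n) ⧸ firstVars K n k) := by
  have hdd : ∀ i x, d i (d (i + 1) x) = 0 := fun i x => (hd i).apply_apply_eq_zero x
  induction l with
  | zero =>
    intro k hk
    refine ⟨by simp, fun hv => ?_⟩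
    have hI : firstVars K n k = maxIdeal K (Fin n) := by
      rw [firstVars, maxIdeal, ← Set.image_univ]
      congr 2; ext j; simp; omega
    rw [hI] at hv
    have h0 : ε = 0 := hv ε (by ext x; exact hε.apply_apply_eq_zero x)
    obtain ⟨x, hx⟩ := hs 1
    have h1 : (1 : MvPoly K (Fin n)) ∈ maxIdeal K (Fin n) := by
      rw [← Ideal.Quotient.eq_zero_iff_mem, map_one, ← hx, h0]; rfl
    simp [mem_maxIdeal_iff] at h1
  | succ l ih =>
    intro k hk
    obtain ⟨ih1, ih2⟩ := ih (k + 1) (by omega)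
    have hkn : k < n := by omega
    let x : MvPoly K (Fin n) := X ⟨k, hkn⟩
    have hle : firstVars K n k ≤ firstVars K n (k + 1) :=
      Ideal.span_mono (Set.image_mono fun j (hj : j.1 < k) => Nat.lt_succ_of_lt hj)
    let f : (MvPoly K (Fin n) ⧸ firstVars K n k) →ₗ[MvPoly K (Fin n)] _ :=
      x • LinearMap.id
    let g : (MvPoly K (Fin n) ⧸ firstVars K n k) →ₗ[MvPoly K (Fin n)]
      (MvPoly K (Fin n) ⧸ firstVars K n (k + 1)) := Submodule.factor hle
    have hfm : ∀ p, f (Submodule.Quotient.mk p) = Submodule.Quotient.mk (x * p) := fun _ => rfl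
    have hg : Function.Surjective g := Submodule.factor_surjective hle
    have hf : Function.Injective f := by
      rw [injective_iff_map_eq_zero]
      intro y hy
      obtain ⟨p, rfl⟩ := Submodule.Quotient.mk_surjective _ y
      rw [Submodule.Quotient.mk_eq_zero]
      refine firstVars_regular ⟨k, hkn⟩ p ?_
      rwa [hfm, Submodule.Quotient.mk_eq_zero] at hy
    have hfg : Function.Exact f g := by
      intro y
      obtain ⟨p, rfl⟩ := Submodule.Quotient.mk_surjective _ y
      have hsup : firstVars K n (k + 1) = firstVars K n k ⊔ Ideal.span {x} := by
        rw [firstVars, firstVars, ← Ideal.span_union]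
        congr 1
        have : {j : Fin n | j.1 < k + 1} = {j | j.1 < k} ∪ {⟨k, hkn⟩} := by
          ext j; simp [Fin.ext_iff]; omega
        rw [this, Set.image_union, Set.image_singleton]
      have hgp : g (Submodule.Quotient.mk p) = Submodule.Quotient.mk p := rfl
      rw [hgp, Submodule.Quotient.mk_eq_zero]
      constructor
      · intro hp
        rw [hsup, Submodule.mem_sup] at hp
        obtain ⟨a, ha, b, hb, rfl⟩ := hp
        obtain ⟨c, rfl⟩ := Ideal.mem_span_singleton'.1 hb
        refine ⟨Submodule.Quotient.mk c, ?_⟩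
        rw [hfm, Submodule.Quotient.eq, show x * c - (a + c * x) = -a by ring]
        exact neg_mem ha
      · rintro ⟨y, hy⟩
        obtain ⟨c, rfl⟩ := Submodule.Quotient.mk_surjective _ y
        have h2 : x * c - p ∈ firstVars K n k := by
          rw [← Submodule.Quotient.eq, ← hy, hfm]
        have h3 : x * c ∈ firstVars K n (k + 1) :=
          Ideal.mul_mem_right _ _ (Ideal.subset_span ⟨⟨k, hkn⟩, by simp, rfl⟩)
        simpa using sub_mem h3 (hle h2)
    have hx : x ∈ maxIdeal K (Fin n) := Ideal.subset_span ⟨_, rfl⟩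
    have hnull : ∀ i (φ : P i →ₗ[MvPoly K (Fin n)] (MvPoly K (Fin n) ⧸ firstVars K n k)),
        φ ∘ₗ d i = 0 → Cobdry d i (f ∘ₗ φ) := by
      intro i φ hφ
      have := cobdry_smul hd hε (smul_residue hx) hφ
      exact this
    have hv : ∀ i < l + 1, Van d i (MvPoly K (Fin n) ⧸ firstVars K n k) := by
      intro i hi
      cases i with
      | zero => exact Van.zero_of_null hf (hnull 0)
      | succ i => exact Van.left hdd hf hfg hg (ih1 i (by omega)) (hnull _)
    exact ⟨hv, fun h => ih2 (Van.right hdd hf hfg hg (hv l (by omega)) h)⟩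

/-- The polynomial ring in `n` variables has depth `n`. -/
lemma van_ring (hd : ∀ i, Function.Exact (d (i + 1)) (d i)) (hε : Function.Exact (d 0) ε)
    (hs : Function.Surjective ε) :
    (∀ i < n, Van d i (MvPoly K (Fin n))) ∧ ¬ Van d n (MvPoly K (Fin n)) := by
  have h := van_firstVars hd hε hs n 0 (by omega)
  have h0 : firstVars K n 0 = ⊥ := by simp [firstVars]
  let e := Submodule.quotEquivOfEqBot _ h0
  exact ⟨fun i hi => (h.1 i hi).of_retract e.symm.toLinearMap e.toLinearMap (by simp),
    fun hv => h.2 (hv.of_retract e.toLinearMap e.symm.toLinearMap (by simp))⟩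

/-- A graded free resolution is minimal if all entries of its differentials lie in the graded
maximal ideal. -/
def IsMinimalRes {I : Ideal (MvPoly K (Fin n))} (F : GradedFreeRes K (Fin n) I) : Prop :=
  ∀ i v s, constantCoeff (F.dmap i v s) = 0

lemma exact_rangeRestrict {M N : Type} [AddCommGroup M] [AddCommGroup N]
    [Module (MvPoly K (Fin n)) M] [Module (MvPoly K (Fin n)) N]
    {L : Type} [AddCommGroup L] [Module (MvPoly K (Fin n)) L]
    {f : L →ₗ[MvPoly K (Fin n)] M} {g : M →ₗ[MvPoly K (Fin n)] N} (h : Function.Exact f g) :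
    Function.Exact (LinearMap.range f).subtype g := by
  intro y
  rw [h y]
  simp

lemma exact_rangeRestrict' {M N : Type} [AddCommGroup M] [AddCommGroup N]
    [Module (MvPoly K (Fin n)) M] [Module (MvPoly K (Fin n)) N]
    {L : Type} [AddCommGroup L] [Module (MvPoly K (Fin n)) L]
    {f : L →ₗ[MvPoly K (Fin n)] M} {g : M →ₗ[MvPoly K (Fin n)] N} (h : Function.Exact f g) :
    Function.Exact f g.rangeRestrict := by
  intro y
  rw [← h y]
  simp [← Subtype.val_inj]

variable {I : Ideal (MvPoly K (Fin n))} {F : GradedFreeRes K (Fin n) I}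

/-- Each step to a syzygy module raises the depth by one, up to the depth `n` of the ring. -/
lemma van_syzygy (hd : ∀ i, Function.Exact (d (i + 1)) (d i)) (hε : Function.Exact (d 0) ε)
    (hs : Function.Surjective ε) {i : ℕ} (hI : ∀ j ≤ i, Van d j (MvPoly K (Fin n) ⧸ I))
    (k : ℕ) : ∀ m ≤ i + k + 1, m < n → Van d m (LinearMap.range (F.dmap k)) := by
  have hdd : ∀ i x, d i (d (i + 1) x) = 0 := fun i x => (hd i).apply_apply_eq_zero x
  have hfree : ∀ m < n, ∀ q, Van d m (Fin q → MvPoly K (Fin n)) := fun m hm q =>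
    ((van_ring hd hε hs).1 m hm).pi q
  have hnull : ∀ k, ∀ m < n, ∀ φ : P m →ₗ[MvPoly K (Fin n)] LinearMap.range (F.dmap k),
      φ ∘ₗ d m = 0 → Cobdry d m ((LinearMap.range (F.dmap k)).subtype ∘ₗ φ) := by
    intro k m hm φ hφ
    exact hfree m hm _ _ (by rw [LinearMap.comp_assoc, hφ, LinearMap.comp_zero])
  induction k with
  | zero =>
    intro m hm hmn
    cases m with
    | zero => exact Van.zero_of_null (Submodule.injective_subtype _) (hnull 0 0 hmn)
    | succ m =>
      exact Van.left hdd (Submodule.injective_subtype _) (exact_rangeRestrict F.exact0)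
        F.aug_surj (hI m (by omega)) (hnull 0 _ hmn)
  | succ k ih =>
    intro m hm hmn
    cases m with
    | zero => exact Van.zero_of_null (Submodule.injective_subtype _) (hnull _ 0 hmn)
    | succ m =>
      exact Van.left hdd (Submodule.injective_subtype _)
        (exact_rangeRestrict (exact_rangeRestrict' (F.exactS k)))
        (F.dmap k).surjective_rangeRestrict (ih m (by omega) (by omega)) (hnull _ _ hmn)

/-- Maps between free modules with entries in the maximal ideal are zero on cohomology. -/
lemma cobdry_of_minimal (hd : ∀ i, Function.Exact (d (i + 1)) (d i))
    (hε : Function.Exact (d 0) ε) {p q : ℕ}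
    (f : (Fin p → MvPoly K (Fin n)) →ₗ[MvPoly K (Fin n)] (Fin q → MvPoly K (Fin n)))
    (hf : ∀ v s, constantCoeff (f v s) = 0) {m : ℕ}
    {φ : P m →ₗ[MvPoly K (Fin n)] (Fin p → MvPoly K (Fin n))} (hφ : φ ∘ₗ d m = 0) :
    Cobdry d m (f ∘ₗ φ) := by
  have : f ∘ₗ φ = ∑ t, ∑ s, (LinearMap.single (MvPoly K (Fin n)) (fun _ => MvPoly K (Fin n)) s) ∘ₗ
      (f (Pi.single t 1) s • (LinearMap.proj t ∘ₗ φ)) := by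
    refine LinearMap.ext fun x => funext fun s => ?_
    rw [LinearMap.comp_apply, LinearMap.pi_apply_eq_sum_univ f (φ x)]
    have hsingle : ∀ t : Fin p, (fun j => if t = j then (1 : MvPoly K (Fin n)) else 0) =
        Pi.single t 1 := fun t => by ext1 j; simp [Pi.single_apply, eq_comm]
    simp [hsingle, Finset.sum_apply, Pi.single_apply, mul_comm]
  rw [this]
  refine Cobdry.sum _ fun t _ => Cobdry.sum _ fun s _ => Cobdry.comp ?_ _
  refine cobdry_smul hd hε (smul_residue ((mem_maxIdeal_iff _).2 (hf _ _))) ?_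
  rw [LinearMap.comp_assoc, hφ, LinearMap.comp_zero]

/-- If `Ext^j(K, R/I) = 0` for `j ≤ i`, then a finite minimal free resolution of `R/I` vanishes
from homological degree `n - i` on: its last nonzero module `F_j` has `Ext^n(K, F_j) ≠ 0`, and by
minimality this class survives to `Ext^(n-j)(K, R/I)`. -/
lemma rk_eq_zero (hd : ∀ i, Function.Exact (d (i + 1)) (d i)) (hε : Function.Exact (d 0) ε)
    (hs : Function.Surjective ε) {i : ℕ} (hI : ∀ j ≤ i, Van d j (MvPoly K (Fin n) ⧸ I))
    (hmin : IsMinimalRes F) {L : ℕ} (hL : ∀ j, L ≤ j → F.rk j = 0) (l : ℕ) :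
    ∀ j, L ≤ j + l → n ≤ j + i → F.rk j = 0 := by
  have hdd : ∀ i x, d i (d (i + 1) x) = 0 := fun i x => (hd i).apply_apply_eq_zero x
  induction l with
  | zero => intro j hj _; exact hL j (by omega)
  | succ l ih =>
    intro j hj hn
    have hz : F.rk (j + 1) = 0 := ih (j + 1) (by omega) (by omega)
    have hsub : Subsingleton (Fin (F.rk (j + 1)) → MvPoly K (Fin n)) := by
      have : IsEmpty (Fin (F.rk (j + 1))) := by rw [hz]; infer_instance
      infer_instance
    by_contra hne
    have hvan : Van d n (Fin (F.rk j) → MvPoly K (Fin n)) := by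
      cases j with
      | zero =>
        have hinj : Function.Injective F.aug := by
          rw [injective_iff_map_eq_zero]
          intro x hx
          obtain ⟨y, rfl⟩ := (F.exact0 x).1 hx
          rw [Subsingleton.elim y 0, map_zero]
        let e := LinearEquiv.ofBijective F.aug ⟨hinj, F.aug_surj⟩
        exact (hI n (by omega)).of_retract e.toLinearMap e.symm.toLinearMap (by simp)
      | succ j =>
        have hinj : Function.Injective (F.dmap j) := by
          rw [injective_iff_map_eq_zero]
          intro x hx
          obtain ⟨y, rfl⟩ := (F.exactS j x).1 hx
          rw [Subsingleton.elim y 0, map_zero]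
        have hnull : ∀ m (φ : P m →ₗ[MvPoly K (Fin n)] (Fin (F.rk (j + 1)) → MvPoly K (Fin n))),
            φ ∘ₗ d m = 0 → Cobdry d m (F.dmap j ∘ₗ φ) := fun m φ hφ =>
          cobdry_of_minimal hd hε _ (hmin j) hφ
        obtain hn0 | ⟨m, hm⟩ : n = 0 ∨ ∃ m, n = m + 1 := by
          cases n with
          | zero => exact Or.inl rfl
          | succ m => exact Or.inr ⟨m, rfl⟩
        · have := Van.zero_of_null hinj (hnull 0)
          rwa [← hn0] at this
        · suffices h : Van d (m + 1) (Fin (F.rk (j + 1)) → MvPoly K (Fin n)) by rwa [← hm] at h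
          cases j with
          | zero => exact Van.left hdd hinj F.exact0 F.aug_surj (hI m (by omega)) (hnull _)
          | succ j =>
            exact Van.left hdd hinj (exact_rangeRestrict' (F.exactS j))
              (F.dmap j).surjective_rangeRestrict
              (van_syzygy hd hε hs hI j m (by omega) (by omega)) (hnull _)
    let s : Fin (F.rk j) := ⟨0, Nat.pos_of_ne_zero hne⟩
    exact (van_ring hd hε hs).2 (hvan.of_retract
      (LinearMap.single _ (fun _ => MvPoly K (Fin n)) s) (LinearMap.proj s) (by simp))

/-- A free resolution vanishing from homological degree `n - i` on forces
`Ext^i(K, R/I) = 0`, by dimension shifting. -/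
lemma van_of_rk_eq_zero (hd : ∀ i, Function.Exact (d (i + 1)) (d i))
    (hε : Function.Exact (d 0) ε) (hs : Function.Surjective ε) {i : ℕ}
    (hrk : ∀ j, n ≤ j + i → F.rk j = 0) : Van d i (MvPoly K (Fin n) ⧸ I) := by
  have hdd : ∀ i x, d i (d (i + 1) x) = 0 := fun i x => (hd i).apply_apply_eq_zero x
  have hfree : ∀ k, Van d (i + k) (Fin (F.rk k) → MvPoly K (Fin n)) := by
    intro k
    by_cases h : i + k < n
    · exact ((van_ring hd hε hs).1 _ h).pi _
    · have : IsEmpty (Fin (F.rk k)) := by rw [hrk k (by omega)]; infer_instance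
      exact Van.of_subsingleton _
  have key : ∀ l k, n ≤ k + l → Van d (i + k + 1) (LinearMap.range (F.dmap k)) := by
    intro l
    induction l with
    | zero =>
      intro k hk
      have : IsEmpty (Fin (F.rk (k + 1))) := by rw [hrk (k + 1) (by omega)]; infer_instance
      have : Subsingleton (LinearMap.range (F.dmap k)) :=
        (F.dmap k).surjective_rangeRestrict.subsingleton
      exact Van.of_subsingleton _
    | succ l ih =>
      intro k hk
      exact Van.right hdd (Submodule.injective_subtype _)
        (exact_rangeRestrict (exact_rangeRestrict' (F.exactS k)))
        (F.dmap k).surjective_rangeRestrict (hfree (k + 1)) (ih (k + 1) (by omega))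
  exact Van.right hdd (Submodule.injective_subtype _) (exact_rangeRestrict F.exact0)
    F.aug_surj (hfree 0) (key n 0 (by omega))

end DepthPoly

/-! ### Comparison with the functor `Ext` -/

section ExtBridge

variable {R : Type} [CommRing R]

lemma exact_of_shortComplex {S : ShortComplex (ModuleCat.{0} R)} (h : S.Exact) :
    Function.Exact S.f.hom S.g.hom := by
  intro y
  constructor
  · exact (ShortComplex.moduleCat_exact_iff S).1 h y
  · rintro ⟨x, rfl⟩
    exact LinearMap.congr_fun (congrArg ModuleCat.Hom.hom S.zero) x

/-- The derived-functor `Ext` is computed by any projective resolution. -/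
lemma nontrivial_ext_iff {N : ModuleCat.{0} R} (P : ProjectiveResolution N) (i : ℕ)
    (M : Type) [AddCommGroup M] [Module R M] :
    Nontrivial (((Ext R (ModuleCat.{0} R) i).obj (op N)).obj (ModuleCat.of R M)) ↔
      ¬ Van (P := fun j => P.complex.X j) (fun j => (P.complex.d (j + 1) j).hom) i M := by
  rw [← not_subsingleton_iff_nontrivial, not_iff_not, ← ModuleCat.isZero_iff_subsingleton,
    (P.isoExt i (ModuleCat.of R M)).isZero_iff, ← HomologicalComplex.exactAt_iff_isZero_homology]
  cases i with
  | zero =>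
    rw [HomologicalComplex.exactAt_iff' _ 0 0 1 (by simp) (by simp),
      ShortComplex.moduleCat_exact_iff]
    constructor
    · intro h φ hφ
      obtain ⟨ψ, hψ⟩ := h (ModuleCat.ofHom φ) (ModuleCat.hom_ext hφ)
      have h0 := HomologicalComplex.shape (P.complex.linearYonedaObj R (ModuleCat.of R M)) 0 0
        (by simp)
      have h1 := LinearMap.congr_fun (congrArg ModuleCat.Hom.hom h0) ψ
      exact (congrArg ModuleCat.Hom.hom (hψ.symm.trans h1) : φ = 0)
    · intro h x hx
      have h0 : ModuleCat.Hom.hom x = 0 := h (ModuleCat.Hom.hom x) (congrArg ModuleCat.Hom.hom hx)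
      exact ⟨0, (map_zero _).trans (ModuleCat.hom_ext h0.symm)⟩
  | succ i =>
    rw [HomologicalComplex.exactAt_iff' _ i (i+1) (i+2) (by simp) (by simp),
      ShortComplex.moduleCat_exact_iff]
    constructor
    · intro h φ hφ
      obtain ⟨ψ, hψ⟩ := h (ModuleCat.ofHom φ) (ModuleCat.hom_ext hφ)
      exact ⟨ModuleCat.Hom.hom ψ, (congrArg ModuleCat.Hom.hom hψ).symm⟩
    · intro h x hx
      obtain ⟨ψ, hψ⟩ := h (ModuleCat.Hom.hom x) (congrArg ModuleCat.Hom.hom hx)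
      exact ⟨ModuleCat.ofHom ψ, ModuleCat.hom_ext hψ.symm⟩

end ExtBridge

/-- Depth does not drop when passing to an ideal having a free resolution with the same ranks as
a finite minimal free resolution of the given one. -/
theorem depthQ_le {K : Type} [Field K] {n : ℕ} {I J : Ideal (MvPoly K (Fin n))}
    (F : GradedFreeRes K (Fin n) I) (F' : GradedFreeRes K (Fin n) J) (hmin : IsMinimalRes F)
    (hfin : ∃ L, ∀ j, L ≤ j → F.rk j = 0) (hrk : ∀ j, F'.rk j = F.rk j) :
    depthQ K (Fin n) I ≤ depthQ K (Fin n) J := by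
  let N := ModuleCat.of (MvPoly K (Fin n)) (MvPoly K (Fin n) ⧸ maxIdeal K (Fin n))
  obtain ⟨⟨P⟩⟩ := (inferInstance : HasProjectiveResolution N)
  obtain ⟨L, hL⟩ := hfin
  let d : ∀ i, P.complex.X (i + 1) →ₗ[MvPoly K (Fin n)] P.complex.X i :=
    fun i => (P.complex.d (i + 1) i).hom
  have hproj : ∀ i, Module.Projective (MvPoly K (Fin n)) (P.complex.X i) := fun i =>
    (IsProjective.iff_projective _).2 (P.projective i)
  let ε : P.complex.X 0 →ₗ[MvPoly K (Fin n)] (MvPoly K (Fin n) ⧸ maxIdeal K (Fin n)) :=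
    (P.π.f 0).hom
  have hd : ∀ i, Function.Exact (d (i + 1)) (d i) := fun i =>
    exact_of_shortComplex (P.exact_succ i)
  have hε : Function.Exact (d 0) ε := exact_of_shortComplex P.exact₀
  have hs : Function.Surjective ε := (ModuleCat.epi_iff_surjective _).1
    (inferInstance : Epi (P.π.f 0))
  refine le_sInf ?_
  rintro _ ⟨i, rfl, hi⟩
  rw [nontrivial_ext_iff P] at hi
  by_contra! hlt
  refine hi ?_
  have hI : ∀ j ≤ i, Van (P := fun j => P.complex.X j) d j (MvPoly K (Fin n) ⧸ I) := by
    intro j hj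
    by_contra hc
    have : depthQ K (Fin n) I ≤ j := sInf_le ⟨j, rfl, (nontrivial_ext_iff P j _).2 hc⟩
    exact absurd (lt_of_lt_of_le hlt this) (by simpa using hj)
  exact van_of_rk_eq_zero (P := fun j => P.complex.X j) (d := d) (ε := ε) (F := F') hd hε hs fun j hj => by
    rw [hrk]
    exact rk_eq_zero (P := fun j => P.complex.X j) (d := d) (ε := ε) (F := F) hd hε hs hI hmin hL L j (by omega) hj

/-! ### Multigraded resolutions of monomial ideals by scalar matrices -/

section Scalar

variable {n : ℕ}

/-- A multigraded free resolution of `R/I`, where `I` is the monomial ideal with exponent set `A`,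
described by scalar data: the multidegrees `b i` of the basis elements of the `i`-th module and the
scalar parts `D i` of the differentials, the true entries being
`D i t s • x ^ (b (i + 1) t - b i s)`.
Exactness is expressed separately in each multidegree `a`. -/
structure LRes (K : Type) [Field K] {n : ℕ} (A : Set (Fin n →₀ ℕ)) where
  q : ℕ → ℕ
  b : ∀ i, Fin (q i) → (Fin n →₀ ℕ)
  D : ∀ i, Fin (q (i + 1)) → Fin (q i) → K
  s0 : Fin (q 0)
  uniq : ∀ s, s = s0
  b0 : b 0 s0 = 0
  lower : ∀ i t s, D i t s ≠ 0 → b i s ≤ b (i + 1) t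
  mem0 : ∀ a c, c ∈ Submodule.span K (D 0 '' {t | b 1 t ≤ a}) ↔ (c s0 ≠ 0 → a ∈ A)
  memS : ∀ i a c, c ∈ Submodule.span K (D (i + 1) '' {t | b (i + 2) t ≤ a}) ↔
    (∀ t, c t ≠ 0 → b (i + 1) t ≤ a) ∧ ∑ t, c t • D i t = 0

/-- Lowering all multidegrees by `c` (truncated at zero) turns a resolution for `A` into one for
`{a | a + c ∈ A}`, because `b - c ≤ a ↔ b ≤ a + c`. -/
noncomputable def LRes.shift {K : Type} [Field K] {A : Set (Fin n →₀ ℕ)} (L : LRes K A)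
    (c : Fin n →₀ ℕ) :
    LRes K {a | a + c ∈ A} where
  q := L.q
  b i t := L.b i t - c
  D := L.D
  s0 := L.s0
  uniq := L.uniq
  b0 := by rw [L.b0, zero_tsub]
  lower i t s h := tsub_le_tsub_right (L.lower i t s h) c
  mem0 a v := by simpa only [tsub_le_iff_right, Set.mem_ofPred_eq] using L.mem0 (a + c) v
  memS i a v := by simpa only [tsub_le_iff_right] using L.memS i (a + c) v

variable {K : Type} [Field K]

/-- A filtration of `K^q` indexed by multidegrees and stabilizing beyond `m` has a minimal system
of homogeneous generators. -/
lemma exists_minGens {q : ℕ} (V : (Fin n →₀ ℕ) → Submodule K (Fin q → K)) (m : Fin n →₀ ℕ)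
    (hm : ∀ a, V a = V (a ⊓ m)) :
    ∃ (q' : ℕ) (b : Fin q' → (Fin n →₀ ℕ)) (D : Fin q' → Fin q → K),
      (∀ t, b t ≤ m) ∧ (∀ t, D t ∈ V (b t)) ∧
      (∀ a, V a ≤ Submodule.span K (D '' {t | b t ≤ a})) ∧
      ∀ t, D t ∉ Submodule.span K (D '' {t' | b t' ≤ b t ∧ t' ≠ t}) := by
  classical
  let T : ℕ → Prop := fun q' => ∃ (b : Fin q' → (Fin n →₀ ℕ)) (D : Fin q' → Fin q → K),
      (∀ t, b t ≤ m) ∧ (∀ t, D t ∈ V (b t)) ∧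
      (∀ a, V a ≤ Submodule.span K (D '' {t | b t ≤ a}))
  have hre : ∀ (ι : Type) [Fintype ι] (b : ι → (Fin n →₀ ℕ)) (D : ι → Fin q → K),
      (∀ t, b t ≤ m) → (∀ t, D t ∈ V (b t)) →
      (∀ a, V a ≤ Submodule.span K (D '' {t | b t ≤ a})) → T (Fintype.card ι) := by
    intro ι _ b D h1 h2 h3
    let e := Fintype.equivFin ι
    refine ⟨b ∘ e.symm, D ∘ e.symm, fun t => h1 _, fun t => h2 _, fun a => (h3 a).trans ?_⟩
    refine Submodule.span_mono ?_
    rintro _ ⟨t, ht, rfl⟩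
    exact ⟨e t, by simpa using ht, by simp⟩
  have hT : ∃ q', T q' := by
    have : Fintype (Set.Iic m) := (Set.finite_Iic m).fintype
    refine ⟨_, hre (Σ a : Set.Iic m, Fin (Module.finrank K (V a.1))) (fun x => x.1.1)
      (fun x => (Module.finBasis K (V x.1.1) x.2 : Fin q → K)) (fun x => x.1.2)
      (fun x => Subtype.property _) fun a => ?_⟩
    rw [hm a]
    intro v hv
    have hr := (Module.finBasis K (V (a ⊓ m))).sum_repr ⟨v, hv⟩
    have hr' := congrArg Subtype.val hr
    simp only [AddSubmonoidClass.coe_finsetSum, Submodule.coe_smul] at hr'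
    rw [← hr']
    refine Submodule.sum_mem _ fun j _ => Submodule.smul_mem _ _ (Submodule.subset_span ?_)
    exact ⟨⟨⟨a ⊓ m, Set.mem_Iic.2 inf_le_right⟩, j⟩, (inf_le_left : a ⊓ m ≤ a), rfl⟩
  obtain ⟨b, D, h1, h2, h3⟩ := Nat.find_spec hT
  refine ⟨Nat.find hT, b, D, h1, h2, h3, fun t ht => ?_⟩
  obtain ⟨p, hp⟩ : ∃ p, Nat.find hT = p + 1 := ⟨_, (Nat.succ_pred_eq_of_pos t.pos).symm⟩
  -- A redundant generator could be dropped, against the choice of the number of generators.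
  refine Nat.find_min hT (m := p) (by omega) ?_
  generalize Nat.find hT = q' at *
  subst hp
  refine ⟨b ∘ t.succAbove, D ∘ t.succAbove, fun u => h1 _, fun u => h2 _, fun a => (h3 a).trans ?_⟩
  have hne : ∀ a', a' ≤ a → ∀ t', t' ≠ t → b t' ≤ a' →
      D t' ∈ Submodule.span K (D ∘ t.succAbove '' {u | (b ∘ t.succAbove) u ≤ a}) := by
    intro a' ha' t' ht' hb
    obtain ⟨u, rfl⟩ := Fin.exists_succAbove_eq ht'
    exact Submodule.subset_span ⟨u, hb.trans ha', rfl⟩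
  rw [Submodule.span_le]
  rintro _ ⟨t', hb, rfl⟩
  by_cases h : t' = t
  · subst h
    refine (Submodule.span_le.2 ?_) ht
    rintro _ ⟨u, ⟨hu, hu'⟩, rfl⟩
    exact hne _ hb u hu' hu
  · exact hne a le_rfl t' h hb

/-- The multidegrees of the current basis together with the multigraded pieces `V a` of the
submodule still to be resolved. -/
structure ResState (K : Type) [Field K] {n : ℕ} (m : Fin n →₀ ℕ) where
  q : ℕ
  b : Fin q → (Fin n →₀ ℕ)
  V : (Fin n →₀ ℕ) → Submodule K (Fin q → K)
  b_le : ∀ s, b s ≤ m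
  mono : ∀ a a', a ≤ a' → V a ≤ V a'
  stable : ∀ a, V a = V (a ⊓ m)
  supp : ∀ a c, c ∈ V a → ∀ s, c s ≠ 0 → b s ≤ a

variable {m : Fin n →₀ ℕ}

namespace ResState

lemma exists_gens (S : ResState K m) :
    ∃ (q' : ℕ) (b : Fin q' → (Fin n →₀ ℕ)) (D : Fin q' → Fin S.q → K),
      (∀ t, b t ≤ m) ∧ (∀ t, D t ∈ S.V (b t)) ∧
      (∀ a, S.V a ≤ Submodule.span K (D '' {t | b t ≤ a})) ∧
      ∀ t, D t ∉ Submodule.span K (D '' {t' | b t' ≤ b t ∧ t' ≠ t}) :=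
  exists_minGens S.V m S.stable

/-- The scalar matrix of a minimal system of generators. -/
noncomputable def mat (S : ResState K m) :
    Fin S.exists_gens.choose → Fin S.q → K :=
  S.exists_gens.choose_spec.choose_spec.choose

/-- The next step: new basis elements for a minimal system of generators, and the relations among
the generators as the submodule to be resolved next. -/
noncomputable def next (S : ResState K m) : ResState K m where
  q := S.exists_gens.choose
  b := S.exists_gens.choose_spec.choose
  V a :=
    { carrier := {c | (∀ t, c t ≠ 0 → S.exists_gens.choose_spec.choose t ≤ a) ∧
        ∑ t, c t • S.mat t = 0}
      add_mem' := by
        rintro c c' ⟨h1, h2⟩ ⟨h1', h2'⟩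
        refine ⟨fun t ht => ?_, ?_⟩
        · by_cases h : c t = 0
          · exact h1' t fun h' => ht (by simp [h, h'])
          · exact h1 t h
        · simp [add_smul, Finset.sum_add_distrib, h2, h2']
      zero_mem' := by simp
      smul_mem' := by
        rintro r c ⟨h1, h2⟩
        refine ⟨fun t ht => h1 t fun h => ht (by simp [h]), ?_⟩
        simp [mul_smul, ← Finset.smul_sum, h2] }
  b_le := S.exists_gens.choose_spec.choose_spec.choose_spec.1
  mono a a' h c hc := ⟨fun t ht => (hc.1 t ht).trans h, hc.2⟩
  stable a := by
    ext c
    have := S.exists_gens.choose_spec.choose_spec.choose_spec.1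
    simp [this]
  supp a c hc := hc.1

lemma mem_next (S : ResState K m) (a : Fin n →₀ ℕ) (c : Fin S.next.q → K) :
    c ∈ S.next.V a ↔ (∀ t, c t ≠ 0 → S.next.b t ≤ a) ∧
      ∑ t, c t • (S.mat : Fin S.next.q → Fin S.q → K) t = 0 := Iff.rfl

lemma mat_mem (S : ResState K m) (t : Fin S.next.q) : S.mat t ∈ S.V (S.next.b t) :=
  S.exists_gens.choose_spec.choose_spec.choose_spec.2.1 t

lemma mem_span (S : ResState K m) (a : Fin n →₀ ℕ) (c : Fin S.q → K) :
    c ∈ Submodule.span K ((S.mat : Fin S.next.q → Fin S.q → K) '' {t | S.next.b t ≤ a}) ↔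
      c ∈ S.V a := by
  refine ⟨fun h => Submodule.span_le.2 ?_ h,
    fun h => S.exists_gens.choose_spec.choose_spec.choose_spec.2.2.1 a h⟩
  rintro _ ⟨t, ht, rfl⟩
  exact S.mono _ _ ht (S.mat_mem t)

lemma mat_notMem (S : ResState K m) (t : Fin S.next.q) :
    S.mat t ∉ Submodule.span K ((S.mat : Fin S.next.q → Fin S.q → K) ''
      {t' | S.next.b t' ≤ S.next.b t ∧ t' ≠ t}) :=
  S.exists_gens.choose_spec.choose_spec.choose_spec.2.2.2 t

lemma mat_ne_zero (S : ResState K m) (t : Fin S.next.q) : S.mat t ≠ 0 := fun h =>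
  S.mat_notMem t (by rw [h]; exact zero_mem _)

/-- A unit entry of the next differential would make a generator redundant. -/
lemma next_ne (S : ResState K m) (u : Fin S.next.next.q) (t : Fin S.next.q)
    (h : S.next.mat u t ≠ 0) : S.next.b t ≠ S.next.next.b u := by
  classical
  intro hb
  obtain ⟨h1, h2⟩ := (S.mem_next _ _).1 (S.next.mat_mem u)
  refine S.mat_notMem t ?_
  rw [← Finset.add_sum_erase _ _ (Finset.mem_univ t), add_eq_zero_iff_eq_neg] at h2
  have h3 : (S.mat : Fin S.next.q → Fin S.q → K) t = (S.next.mat u t)⁻¹ • (-∑ x ∈ Finset.univ.erase t,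
      S.next.mat u x • (S.mat : Fin S.next.q → Fin S.q → K) x) := by
    rw [← h2, smul_smul, inv_mul_cancel₀ h, one_smul]
  rw [h3]
  refine Submodule.smul_mem _ _ (neg_mem (Submodule.sum_mem _ fun x hx => ?_))
  by_cases hx0 : S.next.mat u x = 0
  · rw [hx0, zero_smul]; exact zero_mem _
  · exact Submodule.smul_mem _ _ (Submodule.subset_span
      ⟨x, ⟨hb ▸ h1 x hx0, (Finset.mem_erase.1 hx).1⟩, rfl⟩)

open Classical in
/-- The initial state: one basis element in multidegree zero, and the monomial ideal itself. -/
noncomputable def start (K : Type) [Field K] {A : Set (Fin n →₀ ℕ)} (hA : IsUpperSet A)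
    (hm : ∀ a, a ∈ A ↔ a ⊓ m ∈ A) : ResState K m where
  q := 1
  b _ := 0
  V a := if a ∈ A then ⊤ else ⊥
  b_le _ := zero_le
  mono a a' h := by
    by_cases ha : a ∈ A
    · simp [hA h ha]
    · simp [ha]
  stable a := by simp only [hm a]
  supp _ _ _ _ _ := zero_le

/-- The sequence of states of the construction. -/
noncomputable def seq (S : ResState K m) : ℕ → ResState K m
  | 0 => S
  | i + 1 => (S.seq i).next

end ResState

/-- Minimal multigraded free resolutions of monomial ideals exist and are finite. -/
theorem exists_LRes (K : Type) [Field K] {A : Set (Fin n →₀ ℕ)} (hA : IsUpperSet A)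
    (hm : ∀ a, a ∈ A ↔ a ⊓ m ∈ A) (h0 : (0 : Fin n →₀ ℕ) ∉ A) :
    ∃ L : LRes K A, (∀ i t s, L.D i t s ≠ 0 → L.b i s ≠ L.b (i + 1) t) ∧
      ∃ N, ∀ j, N ≤ j → L.q j = 0 := by
  classical
  let S := ResState.start K hA hm
  have hV1 : ∀ a, a ∈ A → (S.seq 0).V a = ⊤ := fun a ha => if_pos ha
  have hV0 : ∀ a, a ∉ A → (S.seq 0).V a = ⊥ := fun a ha => if_neg ha
  have hsub : Subsingleton (Fin (S.seq 0).q) := inferInstanceAs (Subsingleton (Fin 1))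
  let L : LRes K A :=
    { q := fun i => (S.seq i).q
      b := fun i => (S.seq i).b
      D := fun i => (S.seq i).mat
      s0 := (0 : Fin 1)
      uniq := fun s => hsub.elim _ _
      b0 := rfl
      lower := fun i t s h => (S.seq i).supp _ _ ((S.seq i).mat_mem t) s h
      mem0 := fun a c => by
        refine ((S.seq 0).mem_span a c).trans ?_
        by_cases ha : a ∈ A
        · simp [hV1 a ha, ha]
        · simp only [hV0 a ha, ha, Submodule.mem_bot, imp_false, not_not]
          refine ⟨fun h => by rw [h]; rfl, fun h => funext fun s => ?_⟩
          rw [Subsingleton.elim s (0 : Fin 1)]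
          exact h
      memS := fun i a c => ((S.seq (i + 1)).mem_span a c).trans ((S.seq i).mem_next a c) }
  have hne : ∀ i t s, L.D i t s ≠ 0 → L.b i s ≠ L.b (i + 1) t := by
    intro i t s h
    cases i with
    | zero =>
      intro hb
      have h1 := (S.seq 0).mat_mem t
      have hb' : (S.seq 0).next.b t = 0 := hb.symm
      rw [hb', hV0 0 h0] at h1
      have h1 := (Submodule.mem_bot _).1 h1
      exact h (congrFun h1 s)
    | succ i => exact (S.seq i).next_ne t s h
  have hdeg : ∀ i s, i ≤ (L.b i s).degree := by
    intro i
    induction i with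
    | zero => simp
    | succ i ih =>
      intro t
      obtain ⟨s, hs⟩ : ∃ s, L.D i t s ≠ 0 := by
        by_contra! h
        exact (S.seq i).mat_ne_zero t (funext h)
      have hlt : L.b i s < L.b (i + 1) t := lt_of_le_of_ne (L.lower i t s hs) (hne i t s hs)
      have h1 := ih s
      obtain ⟨c, hc⟩ := exists_add_of_le hlt.le
      have h2 : c ≠ 0 := fun h => hlt.ne (by rw [hc, h, add_zero])
      rw [hc, map_add]
      have : c.degree ≠ 0 := by rwa [Ne, Finsupp.degree_eq_zero_iff]
      omega
  refine ⟨L, hne, m.degree + 1, fun j hj => ?_⟩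
  by_contra h
  have h1 := hdeg j ⟨0, Nat.pos_of_ne_zero h⟩
  have h2 : L.b j ⟨0, Nat.pos_of_ne_zero h⟩ ≤ m := (S.seq j).b_le _
  obtain ⟨c, hc⟩ := exists_add_of_le h2
  have : m.degree = (L.b j ⟨0, Nat.pos_of_ne_zero h⟩).degree + c.degree := by
    rw [← map_add, ← hc]
  omega

end Scalar

/-! ### From scalar data to graded free resolutions -/

section Convert

variable {K : Type} [Field K] {n : ℕ}

lemma homogComp_iff (e : ℤ) (p : MvPoly K (Fin n)) :
    HomogComp K (Fin n) e p ↔ ∀ a, coeff a p ≠ 0 → (a.degree : ℤ) = e := by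
  unfold HomogComp
  split_ifs with h
  · rw [mem_homogeneousSubmodule, IsHomogeneous, IsWeightedHomogeneous]
    refine forall_congr' fun a => imp_congr_right fun _ => ?_
    rw [show Finsupp.weight 1 a = a.degree by rw [Finsupp.degree_eq_weight_one]; rfl]
    omega
  · constructor
    · rintro rfl; simp
    · intro hp
      ext a
      by_contra hc
      have := hp a hc
      omega

/-- The multidegree `a` part of a vector in the free module with basis in multidegrees `b`, as a
vector of scalars. -/
noncomputable def comp {p : ℕ} (b : Fin p → (Fin n →₀ ℕ)) (a : Fin n →₀ ℕ) :
    (Fin p → MvPoly K (Fin n)) →ₗ[K] (Fin p → K) := by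
  classical
  exact LinearMap.pi fun s =>
    if b s ≤ a then (lcoeff K (a - b s)) ∘ₗ LinearMap.proj s else 0

/-- The homogeneous vector of multidegree `a` with scalar part `c`. -/
noncomputable def homVec {p : ℕ} (b : Fin p → (Fin n →₀ ℕ)) (a : Fin n →₀ ℕ) (c : Fin p → K) :
    Fin p → MvPoly K (Fin n) :=
  fun s => monomial (a - b s) (c s)

/-- The multigraded map with scalar matrix `D`. -/
noncomputable def dm {p p' : ℕ} (b : Fin p → (Fin n →₀ ℕ)) (b' : Fin p' → (Fin n →₀ ℕ))
    (D : Fin p' → Fin p → K) :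
    (Fin p' → MvPoly K (Fin n)) →ₗ[MvPoly K (Fin n)] (Fin p → MvPoly K (Fin n)) :=
  LinearMap.pi fun s => ∑ t, (monomial (b' t - b s) (D t s) : MvPoly K (Fin n)) • LinearMap.proj t

variable {p p' : ℕ} {b : Fin p → (Fin n →₀ ℕ)} {b' : Fin p' → (Fin n →₀ ℕ)}
  {D : Fin p' → Fin p → K}

lemma dm_apply (v : Fin p' → MvPoly K (Fin n)) (s : Fin p) :
    dm b b' D v s = ∑ t, monomial (b' t - b s) (D t s) * v t := by
  simp [dm]

lemma comp_of_le {a : Fin n →₀ ℕ} {s : Fin p} (h : b s ≤ a) (v : Fin p → MvPoly K (Fin n)) :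
    comp b a v s = coeff (a - b s) (v s) := by
  simp [comp, h]

lemma comp_of_not_le {a : Fin n →₀ ℕ} {s : Fin p} (h : ¬ b s ≤ a)
    (v : Fin p → MvPoly K (Fin n)) : comp b a v s = 0 := by
  simp [comp, h]

lemma le_of_comp_ne {a : Fin n →₀ ℕ} {s : Fin p} {v : Fin p → MvPoly K (Fin n)}
    (h : comp b a v s ≠ 0) : b s ≤ a := by
  by_contra hc
  exact h (comp_of_not_le hc v)

lemma comp_ext {v w : Fin p → MvPoly K (Fin n)} (h : ∀ a, comp b a v = comp b a w) : v = w := by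
  funext s
  ext e
  have := congrFun (h (e + b s)) s
  rwa [comp_of_le le_add_self, comp_of_le le_add_self, add_tsub_cancel_right] at this

open Classical in
lemma comp_homVec (a a' : Fin n →₀ ℕ) (c : Fin p → K) (hc : ∀ s, c s ≠ 0 → b s ≤ a') :
    comp b a (homVec b a' c) = if a = a' then c else 0 := by
  funext s
  by_cases hcs : c s = 0
  · by_cases h : b s ≤ a
    · rw [comp_of_le h]; split_ifs <;> simp [homVec, hcs]
    · rw [comp_of_not_le h]; split_ifs <;> simp [hcs]
  · have hb := hc s hcs
    by_cases h : b s ≤ a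
    · rw [comp_of_le h, homVec, coeff_monomial]
      have : a' - b s = a - b s ↔ a = a' := by
        rw [tsub_left_inj hb h, eq_comm]
      split_ifs with h1 h2 h2
      · rfl
      · exact absurd (this.1 h1) h2
      · exact absurd (this.2 h2) h1
      · rfl
    · rw [comp_of_not_le h, if_neg]
      · rfl
      · rintro rfl
        exact h hb

lemma comp_dm (hD : ∀ t s, D t s ≠ 0 → b s ≤ b' t) (a : Fin n →₀ ℕ)
    (v : Fin p' → MvPoly K (Fin n)) :
    comp b a (dm b b' D v) = ∑ t, comp b' a v t • D t := by
  funext s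
  rw [Finset.sum_apply]
  by_cases h : b s ≤ a
  · rw [comp_of_le h, dm_apply, coeff_sum]
    refine Finset.sum_congr rfl fun t _ => ?_
    rw [Pi.smul_apply, smul_eq_mul, coeff_monomial_mul']
    by_cases hd : D t s = 0
    · simp [hd]
    · have hb := hD t s hd
      have h1 : b' t - b s ≤ a - b s ↔ b' t ≤ a := tsub_le_tsub_iff_right h
      by_cases h2 : b' t ≤ a
      · rw [if_pos (h1.2 h2), comp_of_le h2, tsub_tsub_tsub_cancel_right hb, mul_comm]
      · rw [if_neg (fun h' => h2 (h1.1 h')), comp_of_not_le h2, zero_mul]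
  · rw [comp_of_not_le h]
    refine (Finset.sum_eq_zero fun t _ => ?_).symm
    by_contra hne
    rw [Pi.smul_apply, smul_eq_mul, mul_eq_zero, not_or] at hne
    exact h ((hD t s hne.2).trans (le_of_comp_ne hne.1))

lemma mem_range_dm (hD : ∀ t s, D t s ≠ 0 → b s ≤ b' t) (v : Fin p → MvPoly K (Fin n)) :
    v ∈ Set.range (dm b b' D) ↔
      ∀ a, comp b a v ∈ Submodule.span K (D '' {t | b' t ≤ a}) := by
  classical
  constructor
  · rintro ⟨w, rfl⟩ a
    rw [comp_dm hD]
    refine Submodule.sum_mem _ fun t _ => ?_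
    by_cases h : comp b' a w t = 0
    · rw [h, zero_smul]; exact zero_mem _
    · exact Submodule.smul_mem _ _ (Submodule.subset_span ⟨t, le_of_comp_ne h, rfl⟩)
  · intro h
    have hc : ∀ a, ∃ c : Fin p' → K, (∀ t, c t ≠ 0 → b' t ≤ a) ∧ ∑ t, c t • D t = comp b a v := by
      intro a
      obtain ⟨l, hl, hl'⟩ := (Finsupp.mem_span_image_iff_linearCombination K).1 (h a)
      refine ⟨l, fun t ht => hl (Finsupp.mem_support_iff.2 ht), ?_⟩
      rw [← hl', Finsupp.linearCombination_apply, Finsupp.sum_fintype _ _ (by simp)]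
    choose c hc1 hc2 using hc
    -- All nonzero multigraded components of `v` lie in the degrees of `S`.
    let S : Finset (Fin n →₀ ℕ) := Finset.univ.biUnion fun s => (v s).support.image (· + b s)
    have hS : ∀ a, a ∉ S → comp b a v = 0 := by
      intro a ha
      funext s
      by_contra hne
      have hb := le_of_comp_ne hne
      rw [comp_of_le hb] at hne
      refine ha (Finset.mem_biUnion.2 ⟨s, Finset.mem_univ _, Finset.mem_image.2
        ⟨a - b s, mem_support_iff.2 hne, tsub_add_cancel_of_le hb⟩⟩)
    refine ⟨∑ a ∈ S, homVec b' a (c a), comp_ext (b := b) fun a => ?_⟩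
    rw [comp_dm hD, map_sum]
    have : ∑ x ∈ S, comp b' a (homVec b' x (c x)) = if a ∈ S then c a else 0 := by
      rw [Finset.sum_congr rfl fun x _ => comp_homVec a x (c x) (hc1 x)]
      exact Finset.sum_ite_eq S a c
    rw [this]
    split_ifs with ha
    · exact hc2 a
    · simp [hS a ha]

lemma homog_dm (hD : ∀ t s, D t s ≠ 0 → b s ≤ b' t) {e : ℤ} {v : Fin p' → MvPoly K (Fin n)}
    (hv : IsHomogVec K (Fin n) (fun t => ((b' t).degree : ℤ)) e v) :
    IsHomogVec K (Fin n) (fun s => ((b s).degree : ℤ)) e (dm b b' D v) := by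
  intro s
  rw [homogComp_iff]
  change ∀ a, _ → _ = e - ((b s).degree : ℤ)
  intro a ha
  rw [dm_apply, coeff_sum] at ha
  obtain ⟨t, -, ht⟩ := Finset.exists_ne_zero_of_sum_ne_zero ha
  rw [coeff_monomial_mul'] at ht
  split_ifs at ht with hle
  · obtain ⟨h1, h2⟩ := not_or.1 (mt mul_eq_zero.2 ht)
    have h3 : _ = e - ((b' t).degree : ℤ) := (homogComp_iff _ _).1 (hv t) _ h2
    have h4 := hD t s h1
    obtain ⟨x, hx⟩ := exists_add_of_le h4
    obtain ⟨y, rfl⟩ := exists_add_of_le hle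
    rw [add_tsub_cancel_left, hx, map_add] at h3
    rw [hx, add_tsub_cancel_left, map_add]
    push_cast at h3 ⊢
    omega
  · exact absurd rfl ht

/-- The graded free resolution given by scalar data. -/
noncomputable def LRes.toRes {A : Set (Fin n →₀ ℕ)} (L : LRes K A) (I : Ideal (MvPoly K (Fin n)))
    (hI : ∀ p, p ∈ I ↔ ∀ a, coeff a p ≠ 0 → a ∈ A) : GradedFreeRes K (Fin n) I where
  rk := L.q
  dg i j := (L.b i j).degree
  dmap i := dm (L.b i) (L.b (i + 1)) (L.D i)
  aug := I.mkQ ∘ₗ LinearMap.proj L.s0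
  aug_surj y := by
    obtain ⟨r, rfl⟩ := I.mkQ_surjective y
    exact ⟨fun _ => r, rfl⟩
  exact0 v := by
    rw [mem_range_dm (L.lower 0)]
    change Submodule.Quotient.mk (v L.s0) = 0 ↔ _
    rw [Submodule.Quotient.mk_eq_zero, hI]
    refine forall_congr' fun a => ?_
    rw [L.mem0, comp_of_le (by rw [L.b0]; exact zero_le), L.b0, tsub_zero]
  exactS i v := by
    rw [mem_range_dm (L.lower (i + 1))]
    have : dm (L.b i) (L.b (i + 1)) (L.D i) v = 0 ↔
        ∀ a, comp (L.b i) a (dm (L.b i) (L.b (i + 1)) (L.D i) v) = 0 :=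
      ⟨fun h a => by rw [h, map_zero],
        fun h => comp_ext (b := L.b i) fun a => by rw [h a, map_zero]⟩
    rw [this]
    refine forall_congr' fun a => ?_
    rw [L.memS, comp_dm (L.lower i)]
    exact ⟨fun h => ⟨fun t ht => le_of_comp_ne ht, h⟩, fun h => h.2⟩
  graded i e v hv := homog_dm (L.lower i) hv
  aug_graded e v hv := by
    have h : HomogComp K (Fin n) (e - ((L.b 0 L.s0).degree : ℤ)) (v L.s0) := hv L.s0
    rw [L.b0, map_zero, Nat.cast_zero, sub_zero] at h
    unfold HomogComp at h
    unfold QuotComp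
    split_ifs at h ⊢ with he
    · exact ⟨v L.s0, h, rfl⟩
    · change Submodule.Quotient.mk (v L.s0) = 0
      rw [h]; rfl

lemma LRes.toRes_minimal {A : Set (Fin n →₀ ℕ)} (L : LRes K A) (I : Ideal (MvPoly K (Fin n)))
    (hI : ∀ p, p ∈ I ↔ ∀ a, coeff a p ≠ 0 → a ∈ A)
    (hL : ∀ i t s, L.D i t s ≠ 0 → L.b i s ≠ L.b (i + 1) t) : IsMinimalRes (L.toRes I hI) := by
  intro i (v : Fin (L.q (i + 1)) → MvPoly K (Fin n)) (s : Fin (L.q i))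
  change constantCoeff (dm (L.b i) (L.b (i + 1)) (L.D i) v s) = 0
  rw [dm_apply, map_sum]
  refine Finset.sum_eq_zero fun t _ => ?_
  rw [map_mul, constantCoeff_monomial]
  by_cases hd : L.D i t s = 0
  · simp [hd]
  · rw [if_neg, zero_mul]
    intro h
    exact hL i t s hd (le_antisymm (L.lower i t s hd) (tsub_eq_zero_iff_le.1 h))

end Convert

/-! ### Minimal resolutions have minimal twists -/

section Twists

variable {K : Type} [Field K] {n : ℕ}

/-- The component of integer degree `e` of a polynomial. -/
noncomputable def hcomp (e : ℤ) : MvPoly K (Fin n) →ₗ[K] MvPoly K (Fin n) :=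
  if 0 ≤ e then homogeneousComponent e.toNat else 0

lemma coeff_hcomp (e : ℤ) (p : MvPoly K (Fin n)) (a : Fin n →₀ ℕ) :
    coeff a (hcomp e p) = if (a.degree : ℤ) = e then coeff a p else 0 := by
  unfold hcomp
  split_ifs with h h' h'
  · rw [coeff_homogeneousComponent, if_pos (by omega)]
  · rw [coeff_homogeneousComponent, if_neg (by omega)]
  · omega
  · simp

lemma hcomp_of_homog {d : ℤ} {p : MvPoly K (Fin n)} (hp : HomogComp K (Fin n) d p) (e : ℤ) :
    hcomp e p = if e = d then p else 0 := by
  rw [homogComp_iff] at hp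
  ext a
  rw [coeff_hcomp]
  by_cases ha : coeff a p = 0
  · split_ifs <;> simp [ha]
  · rw [hp a ha]
    split_ifs with h1 h2 h2
    · rfl
    · exact absurd h1.symm h2
    · exact absurd h2.symm h1
    · simp

lemma homogComp_hcomp (e : ℤ) (p : MvPoly K (Fin n)) : HomogComp K (Fin n) e (hcomp e p) := by
  rw [homogComp_iff]
  intro a ha
  rw [coeff_hcomp] at ha
  by_contra hc
  exact ha (if_neg hc)

lemma homogComp_zero (e : ℤ) : HomogComp K (Fin n) e 0 := by
  rw [homogComp_iff]; simp

lemma homogComp_mul {d e : ℤ} {p q : MvPoly K (Fin n)} (hp : HomogComp K (Fin n) d p)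
    (hq : HomogComp K (Fin n) e q) : HomogComp K (Fin n) (d + e) (p * q) := by
  classical
  rw [homogComp_iff] at *
  intro a ha
  rw [coeff_mul] at ha
  obtain ⟨⟨x, y⟩, hxy, h⟩ := Finset.exists_ne_zero_of_sum_ne_zero ha
  obtain ⟨h1, h2⟩ := not_or.1 (mt mul_eq_zero.2 h)
  rw [← Finset.HasAntidiagonal.mem_antidiagonal.1 hxy, map_add, Nat.cast_add, hp _ h1, hq _ h2]

lemma homogComp_sum {ι : Type} (s : Finset ι) {e : ℤ} {p : ι → MvPoly K (Fin n)}
    (hp : ∀ i ∈ s, HomogComp K (Fin n) e (p i)) : HomogComp K (Fin n) e (∑ i ∈ s, p i) := by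
  simp only [homogComp_iff] at *
  intro a ha
  rw [coeff_sum] at ha
  obtain ⟨i, hi, h⟩ := Finset.exists_ne_zero_of_sum_ne_zero ha
  exact hp i hi a h

variable {p q : ℕ}

/-- The component of degree `e` of a vector in the graded free module with twists `dg`. -/
noncomputable def hvec (dg : Fin p → ℤ) (e : ℤ) :
    (Fin p → MvPoly K (Fin n)) →ₗ[K] (Fin p → MvPoly K (Fin n)) :=
  LinearMap.pi fun j => hcomp (e - dg j) ∘ₗ LinearMap.proj j

lemma hvec_apply (dg : Fin p → ℤ) (e : ℤ) (u : Fin p → MvPoly K (Fin n)) (j : Fin p) :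
    hvec dg e u j = hcomp (e - dg j) (u j) := rfl

lemma hvec_of_homog {dg : Fin p → ℤ} {d : ℤ} {u : Fin p → MvPoly K (Fin n)}
    (hu : IsHomogVec K (Fin n) dg d u) (e : ℤ) : hvec dg e u = if e = d then u else 0 := by
  funext j
  rw [hvec_apply, hcomp_of_homog (hu j)]
  by_cases h : e = d
  · simp [h]
  · simp [h]

lemma homog_hvec (dg : Fin p → ℤ) (e : ℤ) (u : Fin p → MvPoly K (Fin n)) :
    IsHomogVec K (Fin n) dg e (hvec dg e u) := fun _ => homogComp_hcomp _ _

lemma homog_single (dg : Fin p → ℤ) (j : Fin p) (a : Fin n →₀ ℕ) (c : K) :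
    IsHomogVec K (Fin n) dg (a.degree + dg j)
      (Pi.single j (monomial a c) : Fin p → MvPoly K (Fin n)) := by
  classical
  intro s
  by_cases h : s = j
  · subst h
    rw [Pi.single_eq_same, homogComp_iff]
    intro x hx
    rw [coeff_monomial] at hx
    have : a = x := by by_contra hc; exact hx (if_neg hc)
    subst this
    ring
  · rw [Pi.single_eq_of_ne h]; exact homogComp_zero _

lemma homog_basis (dg : Fin p → ℤ) (j : Fin p) :
    IsHomogVec K (Fin n) dg (dg j) (Pi.single j 1 : Fin p → MvPoly K (Fin n)) := by
  have := homog_single (K := K) dg j (0 : Fin n →₀ ℕ) 1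
  rwa [map_zero, Nat.cast_zero, zero_add] at this

/-- Induction over vectors of polynomials: sums of vectors with one monomial entry. -/
lemma vec_induction {Q : (Fin p → MvPoly K (Fin n)) → Prop} (h0 : Q 0)
    (hadd : ∀ u v, Q u → Q v → Q (u + v)) (hs : ∀ j a c, Q (Pi.single j (monomial a c))) (u) :
    Q u := by
  classical
  have h1 : ∀ j (r : MvPoly K (Fin n)), Q (Pi.single j r) := by
    intro j r
    refine MvPolynomial.induction_on' r (fun a c => hs j a c) fun f g hf hg => ?_
    rw [Pi.single_add]
    exact hadd _ _ hf hg
  rw [← Finset.univ_sum_single u]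
  exact Finset.sum_induction _ Q hadd h0 fun j _ => h1 j _

lemma hvec_comm {dg : Fin p → ℤ} {dg' : Fin q → ℤ}
    (L : (Fin p → MvPoly K (Fin n)) →ₗ[MvPoly K (Fin n)] (Fin q → MvPoly K (Fin n)))
    (hL : ∀ e v, IsHomogVec K (Fin n) dg e v → IsHomogVec K (Fin n) dg' e (L v))
    (e : ℤ) (u : Fin p → MvPoly K (Fin n)) : L (hvec dg e u) = hvec dg' e (L u) := by
  induction u using vec_induction with
  | h0 => simp
  | hadd u v hu hv => simp [hu, hv]
  | hs j a c =>
    have h := homog_single (K := K) dg j a c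
    rw [hvec_of_homog h, hvec_of_homog (hL _ _ h)]
    split_ifs
    · rfl
    · exact map_zero L

lemma apply_eq_sum (L : (Fin p → MvPoly K (Fin n)) →ₗ[MvPoly K (Fin n)]
    (Fin q → MvPoly K (Fin n))) (v : Fin p → MvPoly K (Fin n)) (s : Fin q) :
    L v s = ∑ t, v t * L (Pi.single t 1) s := by
  classical
  rw [LinearMap.pi_apply_eq_sum_univ L v]
  have hsingle : ∀ t : Fin p, (fun j => if t = j then (1 : MvPoly K (Fin n)) else 0) =
      Pi.single t 1 := fun t => by ext1 j; simp [Pi.single_apply, eq_comm]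
  simp [hsingle, Finset.sum_apply]

lemma homog_of_basis {dg : Fin p → ℤ} {dg' : Fin q → ℤ}
    (L : (Fin p → MvPoly K (Fin n)) →ₗ[MvPoly K (Fin n)] (Fin q → MvPoly K (Fin n)))
    (hL : ∀ t, IsHomogVec K (Fin n) dg' (dg t) (L (Pi.single t 1))) (e : ℤ)
    (v : Fin p → MvPoly K (Fin n)) (hv : IsHomogVec K (Fin n) dg e v) :
    IsHomogVec K (Fin n) dg' e (L v) := by
  intro s
  rw [apply_eq_sum]
  refine homogComp_sum _ fun t _ => ?_
  have := homogComp_mul (hv t) (hL t s)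
  rwa [show e - dg t + (dg t - dg' s) = e - dg' s by ring] at this

lemma exists_basis_map {M : Type} [AddCommGroup M] [Module (MvPoly K (Fin n)) M]
    (y : Fin p → M) : ∃ φ : (Fin p → MvPoly K (Fin n)) →ₗ[MvPoly K (Fin n)] M,
      ∀ t, φ (Pi.single t 1) = y t := by
  classical
  exact ⟨(Pi.basisFun (MvPoly K (Fin n)) (Fin p)).constr (MvPoly K (Fin n)) y, fun t => by
    rw [← Pi.basisFun_apply, Module.Basis.constr_basis]⟩

lemma basis_ext {M : Type} [AddCommGroup M] [Module (MvPoly K (Fin n)) M]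
    {f g : (Fin p → MvPoly K (Fin n)) →ₗ[MvPoly K (Fin n)] M}
    (h : ∀ t, f (Pi.single t 1) = g (Pi.single t 1)) (x) : f x = g x := by
  classical
  have : f = g := (Pi.basisFun (MvPoly K (Fin n)) (Fin p)).ext fun t => by
    rw [Pi.basisFun_apply]; exact h t
  rw [this]

variable {I : Ideal (MvPoly K (Fin n))}

/-- Elements of degree `d` in `R/I` have homogeneous preimages under a graded augmentation. -/
lemma aug_hvec (hI : ∀ r ∈ I, ∀ e, hcomp e r ∈ I) (G : GradedFreeRes K (Fin n) I) {d : ℤ}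
    {u : Fin (G.rk 0) → MvPoly K (Fin n)} (hu : G.aug u ∈ QuotComp K (Fin n) I d) :
    G.aug (hvec (G.dg 0) d u) = G.aug u := by
  have hq : ∀ (y : MvPoly K (Fin n) ⧸ I) d, y ∈ QuotComp K (Fin n) I d →
      ∃ r, HomogComp K (Fin n) d r ∧ y = Submodule.Quotient.mk r := by
    intro y d hy
    unfold QuotComp at hy
    unfold HomogComp
    split_ifs at hy ⊢ with h
    · obtain ⟨r, hr, rfl⟩ := hy
      exact ⟨r, hr, rfl⟩
    · exact ⟨0, rfl, hy⟩
  have key : ∀ u, ∃ r, G.aug u = Submodule.Quotient.mk r ∧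
      ∀ e, G.aug (hvec (G.dg 0) e u) = Submodule.Quotient.mk (hcomp e r) := by
    intro u
    induction u using vec_induction with
    | h0 => exact ⟨0, by simp, by simp⟩
    | hadd u v hu hv =>
      obtain ⟨r, h1, h2⟩ := hu
      obtain ⟨r', h1', h2'⟩ := hv
      exact ⟨r + r', by simp [h1, h1'], fun e => by simp [h2, h2']⟩
    | hs j a c =>
      have h := homog_single (K := K) (G.dg 0) j a c
      obtain ⟨r, h1, h2⟩ := hq _ _ (G.aug_graded _ _ h)
      refine ⟨r, h2, fun e => ?_⟩
      rw [hvec_of_homog h, hcomp_of_homog h1]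
      split_ifs
      · exact h2
      · simp
  obtain ⟨r, h1, h2⟩ := key u
  obtain ⟨r', h3, h4⟩ := hq _ _ hu
  rw [h2, h4, Submodule.Quotient.eq]
  have h5 : r - r' ∈ I := by rw [← Submodule.Quotient.eq, ← h1, ← h4]
  have h6 := hI _ h5 d
  rwa [map_sub, hcomp_of_homog h3, if_pos rfl] at h6

/-- Every twist of a minimal resolution `F` occurs, in the same homological degree, in any other
graded free resolution `G`: the composite `F → G → F` is homotopic to the identity, so it is the
identity modulo the maximal ideal. -/
theorem exists_dg_eq (hI : ∀ r ∈ I, ∀ e, hcomp e r ∈ I) (F G : GradedFreeRes K (Fin n) I)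
    (hmin : IsMinimalRes F) (i : ℕ) (j : Fin (F.rk i)) : ∃ s, F.dg i j = G.dg i s := by
  classical
  have hF : ∀ i x, F.dmap i (F.dmap (i + 1) x) = 0 := fun i x =>
    (F.exactS i).apply_apply_eq_zero x
  have hG : ∀ i x, G.dmap i (G.dmap (i + 1) x) = 0 := fun i x =>
    (G.exactS i).apply_apply_eq_zero x
  -- The graded comparison map in degree zero.
  have h0 : ∀ t, ∃ y, IsHomogVec K (Fin n) (G.dg 0) (F.dg 0 t) y ∧
      G.aug y = F.aug (Pi.single t 1) := by
    intro t
    obtain ⟨u, hu⟩ := G.aug_surj (F.aug (Pi.single t 1))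
    refine ⟨hvec (G.dg 0) (F.dg 0 t) u, homog_hvec _ _ _, ?_⟩
    rw [aug_hvec hI G, hu]
    rw [hu]
    exact F.aug_graded _ _ (homog_basis _ _)
  choose y0 hy0 hy0' using h0
  obtain ⟨φ0, hφ0⟩ := exists_basis_map (K := K) (n := n) y0
  have hφaug : ∀ x, G.aug (φ0 x) = F.aug x := fun x =>
    basis_ext (f := G.aug ∘ₗ φ0) (g := F.aug) (fun t => by simp [hφ0, hy0']) x
  obtain ⟨φ, hφz, hφQ, hφ⟩ := exists_chainMap (X := fun i => Fin (F.rk i) → MvPoly K (Fin n))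
    (Y := fun i => Fin (G.rk i) → MvPoly K (Fin n)) F.dmap G.dmap hF G.exactS
    (fun i φ => ∀ t, IsHomogVec K (Fin n) (G.dg i) (F.dg i t) (φ (Pi.single t 1)))
    (by
      intro i φ hQ hex
      have h1 : ∀ t, ∃ y, IsHomogVec K (Fin n) (G.dg (i + 1)) (F.dg (i + 1) t) y ∧
          G.dmap i y = φ (F.dmap i (Pi.single t 1)) := by
        intro t
        obtain ⟨y, hy⟩ := hex (Pi.single t 1)
        refine ⟨hvec (G.dg (i + 1)) (F.dg (i + 1) t) y, homog_hvec _ _ _, ?_⟩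
        rw [hvec_comm (G.dmap i) (G.graded i), hy, hvec_of_homog (d := F.dg (i + 1) t), if_pos rfl]
        exact homog_of_basis φ hQ _ _ (F.graded i _ _ (homog_basis _ _))
      choose y hy hy' using h1
      obtain ⟨φ', hφ'⟩ := exists_basis_map (K := K) (n := n) y
      refine ⟨φ', fun t => by rw [hφ']; exact hy t, fun x => ?_⟩
      exact basis_ext (f := G.dmap i ∘ₗ φ') (g := φ ∘ₗ F.dmap i)
        (fun t => by simp [hφ', hy']) x)
    φ0 (fun t => by rw [hφ0]; exact hy0 t)
    (fun x => (G.exact0 _).1 (by rw [hφaug]; exact F.exact0.apply_apply_eq_zero x))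
  -- An ungraded comparison map back.
  obtain ⟨ψ0, hψ0⟩ := exists_lift G.aug F.aug fun x => F.aug_surj _
  obtain ⟨ψ, hψz, -, hψ⟩ := exists_chainMap (X := fun i => Fin (G.rk i) → MvPoly K (Fin n))
    (Y := fun i => Fin (F.rk i) → MvPoly K (Fin n)) G.dmap F.dmap hG F.exactS
    (fun _ _ => True)
    (fun i φ _ hex => by
      obtain ⟨φ', h⟩ := exists_lift (φ ∘ₗ G.dmap i) (F.dmap i) hex
      exact ⟨φ', trivial, h⟩)
    ψ0 trivial
    (fun x => (F.exact0 _).1 (by rw [hψ0]; exact G.exact0.apply_apply_eq_zero x))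
  obtain ⟨h, hh0, hhs⟩ := exists_homotopy (X := fun i => Fin (F.rk i) → MvPoly K (Fin n))
    (Y := fun i => Fin (F.rk i) → MvPoly K (Fin n)) F.dmap F.dmap hF F.exactS
    (fun i => ψ i ∘ₗ φ i - LinearMap.id)
    (fun i x => by simp [hψ, hφ])
    (fun x => (F.exact0 _).1 (by simp [hψz, hφz, hψ0, hφaug]))
  have hone : constantCoeff (ψ i (φ i (Pi.single j 1)) j) = 1 := by
    have hz : constantCoeff (ψ i (φ i (Pi.single j 1)) j -
        (Pi.single j 1 : Fin (F.rk i) → MvPoly K (Fin n)) j) = 0 := by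
      cases i with
      | zero =>
        have := congrFun (hh0 (Pi.single j 1)) j
        simp only [LinearMap.sub_apply, LinearMap.comp_apply, LinearMap.id_apply,
          Pi.sub_apply] at this
        rw [this]
        exact hmin _ _ _
      | succ i =>
        have := congrFun (hhs i (Pi.single j 1)) j
        simp only [LinearMap.sub_apply, LinearMap.comp_apply, LinearMap.id_apply,
          Pi.sub_apply] at this
        rw [this, Pi.add_apply, map_add, hmin, zero_add, apply_eq_sum, map_sum]
        exact Finset.sum_eq_zero fun s _ => by rw [map_mul, hmin, zero_mul]
    rw [Pi.single_eq_same, map_sub, map_one, sub_eq_zero] at hz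
    exact hz
  rw [apply_eq_sum, map_sum] at hone
  obtain ⟨s, -, hs⟩ := Finset.exists_ne_zero_of_sum_ne_zero (hone.trans_ne one_ne_zero)
  rw [map_mul] at hs
  have hs1 := left_ne_zero_of_mul hs
  rw [constantCoeff_eq] at hs1
  have := (homogComp_iff _ _).1 (hφQ i j s) 0 hs1
  refine ⟨s, ?_⟩
  rw [map_zero, Nat.cast_zero] at this
  omega

/-- Regularity does not increase when passing to an ideal having a graded free resolution with the
same ranks and smaller twists than a finite minimal resolution of the given one. -/
theorem CMreg_le {J : Ideal (MvPoly K (Fin n))} (hI : ∀ r ∈ I, ∀ e, hcomp e r ∈ I)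
    (F : GradedFreeRes K (Fin n) I) (F' : GradedFreeRes K (Fin n) J) (hmin : IsMinimalRes F)
    (hfin : ∃ L, ∀ j, L ≤ j → F.rk j = 0) (hne : F.rk 0 ≠ 0)
    (hdg : ∀ i j, ∃ s, F'.dg i j ≤ F.dg i s) :
    CMreg K (Fin n) J ≤ CMreg K (Fin n) I := by
  classical
  have h1 : ∀ r, ResBound K (Fin n) I r → ResBound K (Fin n) J r := by
    rintro r ⟨G, hG⟩
    refine ⟨F', fun i j => ?_⟩
    obtain ⟨s, hs⟩ := hdg i j
    obtain ⟨t, ht⟩ := exists_dg_eq hI F G hmin i s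
    have := hG i t
    omega
  have hex : ∃ r, ResBound K (Fin n) I r := by
    obtain ⟨L, hL⟩ := hfin
    refine ⟨∑ i ∈ Finset.range L, ∑ j, |F.dg i j|, F, fun i j => ?_⟩
    have hi : i < L := by
      by_contra hc
      have := j.pos
      rw [hL i (by omega)] at this
      omega
    have h2 : |F.dg i j| ≤ ∑ j, |F.dg i j| :=
      Finset.single_le_sum (f := fun j => |F.dg i j|) (fun _ _ => abs_nonneg _) (Finset.mem_univ j)
    have h3 : ∑ j, |F.dg i j| ≤ ∑ i ∈ Finset.range L, ∑ j, |F.dg i j| :=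
      Finset.single_le_sum (f := fun i => ∑ j, |F.dg i j|)
        (fun _ _ => Finset.sum_nonneg fun _ _ => abs_nonneg _) (Finset.mem_range.2 hi)
    have h4 := le_abs_self (F.dg i j)
    omega
  have hleast : ∃ r, ResBound K (Fin n) I r ∧ ∀ s, ResBound K (Fin n) I s → r ≤ s := by
    refine Int.exists_least_of_bdd ⟨F.dg 0 ⟨0, Nat.pos_of_ne_zero hne⟩, ?_⟩ hex
    rintro r ⟨G, hG⟩
    obtain ⟨t, ht⟩ := exists_dg_eq hI F G hmin 0 ⟨0, Nat.pos_of_ne_zero hne⟩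
    have := hG 0 t
    rw [ht]
    simpa using this
  unfold CMreg
  rw [dif_pos hleast]
  split_ifs with h
  · exact WithBot.coe_le_coe.2 (h.choose_spec.2 _ (h1 _ hleast.choose_spec.1))
  · exact bot_le

end Twists

/-! ### Colon ideals by monomials -/

/-- Comparison of a monomial ideal with exponent set `A` and its colon ideal by the monomial `x^c`:
the latter has depth at least as large and regularity at most as large. -/
theorem depth_reg_colon {K : Type} [Field K] {n : ℕ} {A : Set (Fin n →₀ ℕ)} (hA : IsUpperSet A)
    {m : Fin n →₀ ℕ} (hm : ∀ a, a ∈ A ↔ a ⊓ m ∈ A) (c : Fin n →₀ ℕ)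
    {I J : Ideal (MvPoly K (Fin n))} (hI : ∀ p, p ∈ I ↔ ∀ a, coeff a p ≠ 0 → a ∈ A)
    (hJ : ∀ p, p ∈ J ↔ ∀ a, coeff a p ≠ 0 → a ∈ {a | a + c ∈ A}) :
    depthQ K (Fin n) I ≤ depthQ K (Fin n) J ∧ CMreg K (Fin n) J ≤ CMreg K (Fin n) I := by
  by_cases h0 : (0 : Fin n →₀ ℕ) ∈ A
  · have hall : ∀ a, a ∈ A := fun a => hA zero_le h0
    have : I = J := by
      ext p
      rw [hI, hJ]
      exact ⟨fun _ _ _ => hall _, fun _ _ _ => hall _⟩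
    rw [this]
    exact ⟨le_rfl, le_rfl⟩
  · obtain ⟨L, hL, hfin⟩ := exists_LRes K hA hm h0
    refine ⟨depthQ_le (L.toRes I hI) ((L.shift c).toRes J hJ) (L.toRes_minimal I hI hL) hfin
      fun _ => rfl, CMreg_le ?_ (L.toRes I hI) ((L.shift c).toRes J hJ)
      (L.toRes_minimal I hI hL) hfin (Fin.pos L.s0).ne' fun i j => ⟨j, ?_⟩⟩
    · intro r hr e
      rw [hI] at hr ⊢
      intro a ha
      rw [coeff_hcomp] at ha
      refine hr a fun h => ha ?_
      simp [h]
    · change (((L.b i j - c).degree : ℕ) : ℤ) ≤ ((L.b i j).degree : ℕ)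
      obtain ⟨x, hx⟩ := exists_add_of_le (tsub_le_self : L.b i j - c ≤ L.b i j)
      have : (L.b i j).degree = (L.b i j - c).degree + x.degree := by
        rw [← map_add, ← hx]
      omega

/-! ### Symbolic powers of the ideal of covers -/

section Symbolic

variable {K : Type} [Field K] {n : ℕ}

/-- The prime ideal generated by the variables in `e`. -/
noncomputable def edgePrime (K : Type) [Field K] {n : ℕ} (e : Finset (Fin n)) :
    Ideal (MvPoly K (Fin n)) :=
  Ideal.span (MvPolynomial.X '' (e : Set (Fin n)))

lemma mem_edgePrime {e : Finset (Fin n)} {p : MvPoly K (Fin n)} :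
    p ∈ edgePrime K e ↔ ∀ a, coeff a p ≠ 0 → ∃ i ∈ e, a i ≠ 0 := by
  rw [edgePrime, mem_ideal_span_X_image]
  simp [mem_support_iff]

lemma X_mem_edgePrime {e : Finset (Fin n)} {i : Fin n} (hi : i ∈ e) :
    (X i : MvPoly K (Fin n)) ∈ edgePrime K e :=
  Ideal.subset_span ⟨i, hi, rfl⟩

/-- The ideal is the kernel of the endomorphism of the domain `R` that kills the variables in `e`
and fixes all others. -/
lemma edgePrime_isPrime (e : Finset (Fin n)) : (edgePrime K e).IsPrime := by
  classical
  let φ : MvPoly K (Fin n) →ₐ[K] MvPoly K (Fin n) := aeval fun i => if i ∈ e then 0 else X i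
  have h1 : ∀ p, φ p - p ∈ edgePrime K e := by
    intro p
    induction p using MvPolynomial.induction_on with
    | C r => simp [φ]
    | add p q hp hq =>
      have : φ (p + q) - (p + q) = (φ p - p) + (φ q - q) := by rw [map_add]; ring
      rw [this]; exact add_mem hp hq
    | mul_X p i hp =>
      have : φ (p * X i) - p * X i = (φ p - p) * φ (X i) + p * (φ (X i) - X i) := by
        rw [map_mul]; ring
      rw [this]
      refine add_mem (Ideal.mul_mem_right _ _ hp) (Ideal.mul_mem_left _ _ ?_)
      by_cases hi : i ∈ e
      · simpa [φ, hi] using X_mem_edgePrime (K := K) hi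
      · simp [φ, hi]
  have h2 : edgePrime K e = RingHom.ker φ := by
    apply le_antisymm
    · refine Ideal.span_le.mpr ?_
      rintro _ ⟨i, hi, rfl⟩
      have hi' : i ∈ e := hi
      simp [φ, RingHom.mem_ker, hi']
    · intro p hp
      have := h1 p
      rw [RingHom.mem_ker] at hp
      rw [hp, zero_sub] at this
      exact (Submodule.neg_mem_iff _).mp this
  rw [h2]
  exact RingHom.ker_isPrime φ

lemma coeff_of_mem_edgePrime_pow {e : Finset (Fin n)} (k : ℕ) :
    ∀ p ∈ edgePrime K e ^ k, ∀ a, coeff a p ≠ 0 → k ≤ ∑ i ∈ e, a i := by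
  classical
  induction k with
  | zero => intros; exact Nat.zero_le _
  | succ k ih =>
    intro p hp
    rw [pow_succ] at hp
    refine Submodule.mul_induction_on hp ?_ ?_
    · intro f hf g hg a ha
      rw [coeff_mul] at ha
      obtain ⟨⟨b, c⟩, hbc, hne⟩ := Finset.exists_ne_zero_of_sum_ne_zero ha
      rw [Finset.HasAntidiagonal.mem_antidiagonal] at hbc
      obtain ⟨i, hi, hci⟩ := mem_edgePrime.mp hg c (right_ne_zero_of_mul hne)
      have h1 := ih f hf b (left_ne_zero_of_mul hne)
      have h2 : c i ≤ ∑ j ∈ e, c j := Finset.single_le_sum (fun _ _ => Nat.zero_le _) hi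
      simp only at hbc
      rw [← hbc]
      simp only [Finsupp.add_apply, Finset.sum_add_distrib]
      omega
    · intro f g hf hg a ha
      rw [coeff_add] at ha
      by_cases hfa : coeff a f = 0
      · exact hg a (by simpa [hfa] using ha)
      · exact hf a hfa

lemma mem_edgePrime_pow {e : Finset (Fin n)} {k : ℕ} {p : MvPoly K (Fin n)} :
    p ∈ edgePrime K e ^ k ↔ ∀ a, coeff a p ≠ 0 → k ≤ ∑ i ∈ e, a i := by
  classical
  refine ⟨coeff_of_mem_edgePrime_pow k p, fun h => ?_⟩
  rw [p.as_sum]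
  refine Ideal.sum_mem _ fun a ha => ?_
  have hk := h a (mem_support_iff.mp ha)
  rw [monomial_eq, Finsupp.prod_fintype _ _ (by simp), ← Finset.prod_mul_prod_compl e]
  refine Ideal.mul_mem_left _ _ (Ideal.mul_mem_right _ _ (Ideal.pow_le_pow_right hk ?_))
  rw [← Finset.prod_pow_eq_pow_sum]
  exact Ideal.prod_mem_prod fun i hi => Ideal.pow_mem_pow (X_mem_edgePrime hi) _

lemma exists_minCover_subset (C : Clutter n) (c : Finset (Fin n)) (hc : C.IsCover c) :
    ∃ d ⊆ c, C.IsMinCover d := by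
  induction c using Finset.strongInduction with
  | H c ih =>
    by_cases h : C.IsMinCover c
    · exact ⟨c, subset_rfl, h⟩
    · have : ∃ d ⊆ c, C.IsCover d ∧ d ≠ c := by
        by_contra hcon
        push Not at hcon
        exact h ⟨hc, hcon⟩
      obtain ⟨d, hdc, hd, hne⟩ := this
      obtain ⟨d', h1, h2⟩ := ih d (hdc.ssubset_of_ne hne) hd
      exact ⟨d', h1.trans hdc, h2⟩

lemma mem_coverIdeal (C : Clutter n) {p : MvPoly K (Fin n)} :
    p ∈ C.coverIdeal K ↔ ∀ e ∈ C.edges, p ∈ edgePrime K e := by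
  classical
  have h1 : (fun e : Finset (Fin n) => ∏ i ∈ e, (X i : MvPoly K (Fin n))) =
      (fun s => monomial s (1 : K)) ∘ fun e : Finset (Fin n) => ∑ i ∈ e, Finsupp.single i 1 := by
    funext e
    simp only [Function.comp, monomial_sum_one]
    rfl
  have happ : ∀ (e : Finset (Fin n)) j, (∑ i ∈ e, Finsupp.single i 1 : Fin n →₀ ℕ) j =
      if j ∈ e then 1 else 0 := by
    intro e j
    simp [Finsupp.finsetSum_apply, Finsupp.single_apply]
  rw [Clutter.coverIdeal, Clutter.edgeIdeal, h1, Set.image_comp, mem_ideal_span_monomial_image]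
  simp only [mem_edgePrime, mem_support_iff]
  constructor
  · intro h e he a ha
    obtain ⟨_, ⟨d, hd, rfl⟩, hda⟩ := h a ha
    have hd' : C.IsMinCover d := by simpa [Clutter.dual] using hd
    obtain ⟨i, hie, hid⟩ := hd'.1 e he
    refine ⟨i, hie, ?_⟩
    have := hda i
    simp only [happ, hid, if_true] at this
    omega
  · intro h a ha
    obtain ⟨d, hda, hd⟩ := exists_minCover_subset C a.support fun e he => by
      obtain ⟨i, hi, hai⟩ := h e he a ha
      exact ⟨i, hi, Finsupp.mem_support_iff.mpr hai⟩
    refine ⟨_, ⟨d, by simpa [Clutter.dual] using hd, rfl⟩, fun i => ?_⟩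
    simp only [happ]
    split_ifs with hi
    · exact Nat.one_le_iff_ne_zero.mpr (Finsupp.mem_support_iff.mp (hda hi))
    · exact Nat.zero_le _

lemma associatedPrimes_coverIdeal (C : Clutter n) (P : Ideal (MvPoly K (Fin n))) :
    P ∈ associatedPrimes (MvPoly K (Fin n)) (MvPoly K (Fin n) ⧸ C.coverIdeal K) ↔
      ∃ e ∈ C.edges, P = edgePrime K e := by
  classical
  -- The annihilator of the class of `f` consists of the `g` with `g f` in the ideal.
  have hcol : ∀ f g : MvPoly K (Fin n),
      g ∈ Submodule.colon (⊥ : Submodule (MvPoly K (Fin n)) (MvPoly K (Fin n) ⧸ C.coverIdeal K))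
        {Ideal.Quotient.mk (C.coverIdeal K) f} ↔
      ∀ e ∈ C.edges, f ∉ edgePrime K e → g ∈ edgePrime K e := by
    intro f g
    rw [Submodule.mem_colon_singleton, Submodule.mem_bot]
    have : g • Ideal.Quotient.mk (C.coverIdeal K) f = Ideal.Quotient.mk (C.coverIdeal K) (g * f) :=
      rfl
    rw [this, Ideal.Quotient.eq_zero_iff_mem, mem_coverIdeal]
    refine forall₂_congr fun e he => ?_
    rw [(edgePrime_isPrime e).mul_mem_iff_mem_or_mem]
    tauto
  rw [AssociatedPrimes.mem_iff, isAssociatedPrime_iff]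
  constructor
  · rintro ⟨hP, x, hx⟩
    obtain ⟨f, rfl⟩ := Ideal.Quotient.mk_surjective x
    have hP' : (C.edges.filter fun e => f ∉ edgePrime K e).inf (edgePrime K) ≤ P := by
      intro g hg
      rw [hx, hcol]
      intro e he hf
      exact (Finset.inf_le (f := edgePrime K) (Finset.mem_filter.mpr ⟨he, hf⟩)) hg
    obtain ⟨e, he, hle⟩ := hP.inf_le'.mp hP'
    rw [Finset.mem_filter] at he
    refine ⟨e, he.1, le_antisymm (fun g hg => ?_) hle⟩
    rw [hx, hcol] at hg
    exact hg e he.1 he.2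
  · rintro ⟨e, he, rfl⟩
    refine ⟨edgePrime_isPrime e, Ideal.Quotient.mk _ (∏ i ∈ eᶜ, X i), ?_⟩
    ext g
    rw [hcol]
    have hmem : ∀ e' : Finset (Fin n),
        (∏ i ∈ eᶜ, (X i : MvPoly K (Fin n))) ∈ edgePrime K e' ↔ ∃ i, i ∉ e ∧ i ∈ e' := by
      intro e'
      constructor
      · intro h
        obtain ⟨i, hi, hX⟩ := (Ideal.IsPrime.prod_mem_iff (hp := edgePrime_isPrime e')).mp h
        obtain ⟨j, hj, hji⟩ := mem_edgePrime.mp hX (Finsupp.single i 1) (by simp [coeff_X])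
        rw [Finsupp.single_apply_ne_zero] at hji
        exact ⟨i, by simpa using hi, hji.1 ▸ hj⟩
      · rintro ⟨i, hi, hi'⟩
        exact Ideal.mem_of_dvd _ (Finset.dvd_prod_of_mem _ (by simpa using hi))
          (X_mem_edgePrime hi')
    constructor
    · intro hg e' he' hn
      rw [hmem] at hn
      push Not at hn
      have : e' ⊆ e := fun i hi => by
        by_contra hie
        exact hn i hie hi
      rwa [C.antichain e' he' e he this]
    · intro h
      refine h e he ?_
      rw [hmem]
      rintro ⟨i, h1, h2⟩
      exact h1 h2

/-- The exponents of the monomials in the `k`-th symbolic power of the ideal of covers. -/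
def symbExp (C : Clutter n) (k : ℕ) : Set (Fin n →₀ ℕ) :=
  {a | ∀ e ∈ C.edges, k ≤ ∑ i ∈ e, a i}

lemma mem_symbPow (C : Clutter n) (k : ℕ) (p : MvPoly K (Fin n)) :
    p ∈ symbPow K (C.coverIdeal K) k ↔ ∀ a, coeff a p ≠ 0 → a ∈ symbExp C k := by
  simp only [symbPow, Submodule.mem_iInf, associatedPrimes_coverIdeal, symbExp,
    Set.mem_ofPred_eq]
  constructor
  · intro h a ha e he
    exact mem_edgePrime_pow.mp (h _ ⟨e, he, rfl⟩) a ha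
  · rintro h _ ⟨e, he, rfl⟩
    exact mem_edgePrime_pow.mpr fun a ha => h a ha e he

lemma symbExp_isUpperSet (C : Clutter n) (k : ℕ) : IsUpperSet (symbExp C k) :=
  fun _ _ hab ha e he => (ha e he).trans (Finset.sum_le_sum fun i _ => hab i)

/-- Truncating the exponents at `k` does not affect membership. -/
lemma symbExp_inf (C : Clutter n) (k : ℕ) (a : Fin n →₀ ℕ) :
    a ∈ symbExp C k ↔ a ⊓ Finsupp.equivFunOnFinite.symm (fun _ => k) ∈ symbExp C k := by
  refine ⟨fun h e he => ?_, fun h => symbExp_isUpperSet C k inf_le_left h⟩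
  by_cases hbig : ∃ i ∈ e, k ≤ a i
  · obtain ⟨i, hi, hki⟩ := hbig
    refine le_trans ?_ (Finset.single_le_sum (fun _ _ => Nat.zero_le _) hi)
    simp [hki]
  · push Not at hbig
    refine (h e he).trans (Finset.sum_le_sum fun i hi => ?_)
    simp [(hbig i hi).le]

end Symbolic

/-! ### A cover meeting every edge exactly once -/

/-- For a uniform clutter with nonempty edges and integral covering polyhedron, there is a set of
vertices meeting every edge exactly once: a vertex of the compact face of the polyhedron cut out by
`x(e) = 1` for all edges `e` and `x_i = 0` for the vertices `i` in no edge. The face contains the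
vector with value `1/d` on the vertices in some edge, where `d` is the common size of the edges. -/
lemma exists_exact_cover {n : ℕ} (C : Clutter n) (hunif : C.Uniform) (hint : C.IntegralPolyhedron)
    (hne : ∅ ∉ C.edges) :
    ∃ c : Fin n →₀ ℕ, ∀ e ∈ C.edges, ∑ i ∈ e, c i = 1 := by
  classical
  let F : Set (Fin n → ℝ) := {x | (∀ i, 0 ≤ x i) ∧ (∀ e ∈ C.edges, ∑ i ∈ e, x i = 1) ∧
    ∀ i, (∀ e ∈ C.edges, i ∉ e) → x i = 0}
  have hFsub : F ⊆ C.coverPolyhedron := fun x hx => ⟨hx.1, fun e he => (hx.2.1 e he).ge⟩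
  have hFne : F.Nonempty := by
    refine ⟨fun i => if h : ∃ e ∈ C.edges, i ∈ e then ((h.choose.card : ℝ))⁻¹ else 0,
      fun i => ?_, fun e he => ?_, fun i hi => ?_⟩
    · dsimp only
      split_ifs <;> positivity
    · have hcard : (e.card : ℝ) ≠ 0 := by
        rw [Nat.cast_ne_zero, Finset.card_ne_zero]
        exact Finset.nonempty_iff_ne_empty.mpr fun h => hne (h ▸ he)
      rw [Finset.sum_congr rfl (g := fun _ => ((e.card : ℝ))⁻¹)]
      · simp [hcard]
      · intro i hi
        have h : ∃ e ∈ C.edges, i ∈ e := ⟨e, he, hi⟩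
        dsimp only
        rw [dif_pos h, hunif _ h.choose_spec.1 e he]
    · dsimp only
      rw [dif_neg]
      rintro ⟨e, he, h⟩
      exact hi e he h
  have hF1 : ∀ x ∈ F, ∀ i, x i ≤ 1 := by
    intro x hx i
    by_cases h : ∃ e ∈ C.edges, i ∈ e
    · obtain ⟨e, he, hi⟩ := h
      rw [← hx.2.1 e he]
      exact Finset.single_le_sum (fun j _ => hx.1 j) hi
    · push Not at h
      rw [hx.2.2 i h]
      exact zero_le_one
  have hFcl : IsClosed F := by
    have : F = (⋂ i, {x | 0 ≤ x i}) ∩ ((⋂ e ∈ C.edges, {x | ∑ i ∈ e, x i = 1}) ∩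
        ⋂ i, ⋂ (_ : ∀ e ∈ C.edges, i ∉ e), {x : Fin n → ℝ | x i = 0}) := by
      ext x
      simp [F]
    rw [this]
    refine IsClosed.inter (isClosed_iInter fun i => ?_) (IsClosed.inter
      (isClosed_iInter fun e => isClosed_iInter fun _ => ?_)
      (isClosed_iInter fun i => isClosed_iInter fun _ => ?_))
    · exact isClosed_le continuous_const (continuous_apply i)
    · exact isClosed_eq (by fun_prop) continuous_const
    · exact isClosed_eq (by fun_prop) continuous_const
  have hFc : IsCompact F := by
    refine (isCompact_Icc (a := (0 : Fin n → ℝ)) (b := 1)).of_isClosed_subset hFcl ?_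
    exact fun x hx => ⟨fun i => hx.1 i, fun i => hF1 x hx i⟩
  have hext : IsExtreme ℝ C.coverPolyhedron F := by
    refine ⟨hFsub, ?_⟩
    rintro x hx y hy z hz ⟨s, t, hs, ht, hst, rfl⟩
    refine ⟨hx.1, fun e he => ?_, fun i hi => ?_⟩
    · have h1 := hz.2.1 e he
      simp only [Pi.add_apply, Pi.smul_apply, smul_eq_mul, Finset.sum_add_distrib,
        ← Finset.mul_sum] at h1
      have h2 := hx.2 e he
      have h3 := hy.2 e he
      nlinarith
    · have h1 := hz.2.2 i hi
      simp only [Pi.add_apply, Pi.smul_apply, smul_eq_mul] at h1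
      have h2 := hx.1 i
      have h3 := hy.1 i
      nlinarith [mul_nonneg ht.le h3, mul_nonneg hs.le h2]
  obtain ⟨x, hx⟩ := hFc.extremePoints_nonempty hFne
  have hxF : x ∈ F := hx.1
  choose z hz using hint x (hext.extremePoints_subset_extremePoints hx)
  refine ⟨Finsupp.equivFunOnFinite.symm fun i => (z i).toNat, fun e he => ?_⟩
  have hz0 : ∀ i, 0 ≤ z i := fun i => by
    have := hxF.1 i
    rw [hz] at this
    exact_mod_cast this
  have h := hxF.2.1 e he
  simp only [hz] at h
  have h' : ∑ i ∈ e, z i = 1 := by exact_mod_cast h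
  zify
  rw [← h']
  exact Finset.sum_congr rfl fun i _ => by simp [hz0 i]

end CoverDepthReg

/-- the symbolic powers of the ideal of covers of a uniform clutter
with integral set covering polyhedron have non-increasing depth and non-decreasing
regularity. -/
theorem stmt14 (K : Type) [Field K] (n : ℕ) (C : Clutter n)
    (hunif : C.Uniform) (hint : C.IntegralPolyhedron) :
    ∀ k : ℕ, 1 ≤ k →
      depthQ K (Fin n) (symbPow K (Clutter.coverIdeal K C) k) ≥
        depthQ K (Fin n) (symbPow K (Clutter.coverIdeal K C) (k + 1)) ∧
      CMreg K (Fin n) (symbPow K (Clutter.coverIdeal K C) k) ≤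
        CMreg K (Fin n) (symbPow K (Clutter.coverIdeal K C) (k + 1)) := by
  intro k hk
  obtain ⟨c, hc⟩ : ∃ c : Fin n →₀ ℕ,
      ∀ a, a ∈ CoverDepthReg.symbExp C k ↔ a + c ∈ CoverDepthReg.symbExp C (k + 1) := by
    by_cases hne : ∅ ∈ C.edges
    · -- An empty edge has no cover, and both exponent sets are empty.
      refine ⟨0, fun a => ⟨fun h => ?_, fun h => ?_⟩⟩
      · have := h ∅ hne
        simp at this
        omega
      · have := h ∅ hne
        simp at this
    · obtain ⟨c, hc⟩ := CoverDepthReg.exists_exact_cover C hunif hint hne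
      refine ⟨c, fun a => forall₂_congr fun e he => ?_⟩
      simp only [Finsupp.add_apply, Finset.sum_add_distrib, hc e he]
      omega
  refine CoverDepthReg.depth_reg_colon (CoverDepthReg.symbExp_isUpperSet C (k + 1))
    (CoverDepthReg.symbExp_inf C (k + 1)) c (CoverDepthReg.mem_symbPow C (k + 1)) fun p => ?_
  rw [CoverDepthReg.mem_symbPow]
  exact forall₂_congr fun a _ => hc a
end

section
/- Let G be a graph with vertices x_1,…,x_n and edge ideal I(G) ⊆ R. Then for all k ≥ 1 and all i: (a) depth(R/(I(G)^k : x_i^k)) ≤ depth(R/(I(G \ N_G(x_i))^k + (N_G(x_i)))); and (c) dim(R) − ℓ(I(G)) = |isol(G)| + c_0(G), where ℓ(I(G)) is the analytic spread of I(G). -/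
/-!
Depth inequality. Let `J = I(G)^k : x_i^k`, `J' = I(G \ N(x_i))^k + (N(x_i))`, and let `φ` be the
`K`-algebra endomorphism of `R` setting the neighbours of `x_i` to zero. It is idempotent, and
`φ(r) - r ∈ (N(x_i))`. If `x_j` is a neighbour of `x_i` then `x_j^k ∈ J`, so `(N(x_i))` lies in the
radical of `J`. Since `x_i` is isolated in `G \ N(x_i)`, multiplication by `x_i^k` is injective
modulo `I(G \ N(x_i))^k`, and hence `φ(J') ⊆ J ⊆ J'`. Thus `φ` makes `R/J'` a retract of `R/J`,
though not an `R`-linear one. If `x₀ ∈ m` is regular on `R/J`, then so is `x = φ(x₀)`, which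
differs from it by a nilpotent; and because `φ(x) = x`, it is regular on `R/J'` too. Everything
is preserved on passing from `J, J'` to `J + (x), J' + (x)`, so induction transfers the vanishing
of `Ext^i(R/m, -)` below a given degree from `R/J` to `R/J'` (`cocycleVanish_retract`). The
dimension shifts are carried out on cocycles of a fixed projective resolution of `R/m`.

Analytic spread. The generators `x_a x_b t` of the Rees algebra generate a `K`-algebra `A` in `R[t]`
that maps isomorphically onto the fiber ring: in `A` the coefficient of `t^j` is homogeneous of
degree `2j`, whereas in `m R[It]` it lies in `m^(2j+1)`. Setting `t = 1` identifies `A` with the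
algebra generated by the monomials `x_a x_b`, whose dimension is its transcendence degree, that is,
the rank of the exponent vectors `e_a + e_b` (`ringKrullDim_adjoin_monomials`). The orthogonal
complement of these vectors consists of the functions that change sign along every edge. Such
functions vanish on non-bipartite components, and on a bipartite component they are determined by
one value, so `n - ℓ(I(G))` is the number of bipartite components, an isolated vertex being one.
-/


open MvPolynomial CategoryTheory Opposite

noncomputable section

variable (K : Type) [Field K] (σ : Type)

variable {n : ℕ}

/-- The edge ideal of a graph, generated by the monomials `x_i x_j` for edges `{x_i, x_j}`. -/
def edgeIdealG (K : Type) [Field K] {n : ℕ} (G : SimpleGraph (Fin n)) :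
    Ideal (MvPoly K (Fin n)) :=
  Ideal.span { p | ∃ a b, G.Adj a b ∧ p = MvPolynomial.X a * MvPolynomial.X b }

/-- The edge ideal of the induced subgraph of `G` obtained by deleting the vertices in `s`. -/
def edgeIdealDel (K : Type) [Field K] {n : ℕ} (G : SimpleGraph (Fin n)) (s : Set (Fin n)) :
    Ideal (MvPoly K (Fin n)) :=
  Ideal.span { p | ∃ a b, G.Adj a b ∧ a ∉ s ∧ b ∉ s ∧
    p = MvPolynomial.X a * MvPolynomial.X b }

/-- The ideal generated by the variables corresponding to the neighbours of `x_i`. -/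
def nbIdeal (K : Type) [Field K] {n : ℕ} (G : SimpleGraph (Fin n)) (i : Fin n) :
    Ideal (MvPoly K (Fin n)) :=
  Ideal.span (MvPolynomial.X '' (G.neighborSet i))

/-- The analytic spread of an ideal: `ℓ(I) = dim (R[It] / m R[It])`, where `R[It]` is the
Rees algebra of `I` and `m` is the graded maximal ideal. -/
def analyticSpread (K : Type) [Field K] {n : ℕ} (I : Ideal (MvPoly K (Fin n))) :
    WithBot ℕ∞ :=
  ringKrullDim ((reesAlgebra I) ⧸ (Ideal.span
    ((algebraMap (MvPoly K (Fin n)) (reesAlgebra I)) '' (maxIdeal K (Fin n) : Set _))))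

end

/-! ### Vanishing of Ext through a projective resolution -/

section ExtVanishing

variable {R : Type} [CommRing R] {X : ModuleCat.{0} R} (P : ProjectiveResolution X)

/-- Vanishing of the `i`-th cohomology of `Hom(P, M)`, spelled out on cocycles. -/
def CocycleVanish (M : ModuleCat.{0} R) : ℕ → Prop
  | 0 => ∀ f : P.complex.X 0 ⟶ M, P.complex.d 1 0 ≫ f = 0 → f = 0
  | i + 1 => ∀ f : P.complex.X (i + 1) ⟶ M, P.complex.d (i + 2) (i + 1) ≫ f = 0 →
      ∃ g : P.complex.X i ⟶ M, P.complex.d (i + 1) i ≫ g = f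

theorem subsingleton_ext_iff (M : ModuleCat.{0} R) (i : ℕ) :
    Subsingleton (((Ext R (ModuleCat.{0} R) i).obj (op X)).obj M) ↔ CocycleVanish P M i := by
  have h1 : Subsingleton (((Ext R (ModuleCat.{0} R) i).obj (op X)).obj M) ↔
      (P.complex.linearYonedaObj R M).ExactAt i := by
    rw [HomologicalComplex.exactAt_iff_isZero_homology, ← (P.isoExt i M).isZero_iff,
      ModuleCat.isZero_iff_subsingleton]
  rw [h1]
  cases i with
  | zero =>
    rw [HomologicalComplex.exactAt_iff' _ 0 0 1 (by simp) (by simp),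
      ShortComplex.moduleCat_exact_iff]
    constructor
    · intro h f hf
      obtain ⟨x, hx⟩ := h f hf
      have hx' : P.complex.d 0 0 ≫ (show P.complex.X 0 ⟶ M from x) = f := hx
      rw [← hx', P.complex.shape 0 0 (by simp), Limits.zero_comp]
    · intro h f hf
      exact ⟨0, (map_zero _).trans (h f hf).symm⟩
  | succ i =>
    rw [HomologicalComplex.exactAt_iff' _ i (i+1) (i+2) (by simp) (by simp),
      ShortComplex.moduleCat_exact_iff]
    rfl

/-- An element `x` annihilating `X` acts on the resolution by a map homotopic to zero. -/
theorem exists_homotopy (x : R) (hx : ∀ y : X, x • y = 0) :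
    ∃ h : ∀ i, P.complex.X i ⟶ P.complex.X (i + 1),
      h 0 ≫ P.complex.d 1 0 = x • 𝟙 _ ∧
      ∀ i, P.complex.d (i + 1) i ≫ h i + h (i + 1) ≫ P.complex.d (i + 2) (i + 1) = x • 𝟙 _ := by
  have comm : (x • 𝟙 P.complex) ≫ P.π = 0 := by
    ext1
    rw [Linear.smul_comp, Category.id_comp, HomologicalComplex.smul_f_apply]
    ext y
    exact hx (P.π.f 0 y)
  let H := ProjectiveResolution.liftHomotopyZero _ comm
  refine ⟨fun i => H.hom i (i + 1), ?_, fun i => ?_⟩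
  · have := H.comm 0
    rw [Homotopy.dNext_zero_chainComplex, Homotopy.prevD_chainComplex] at this
    simpa using this.symm
  · have := H.comm (i + 1)
    rw [Homotopy.dNext_succ_chainComplex, Homotopy.prevD_chainComplex] at this
    simpa using this.symm

variable {M M' M'' : ModuleCat.{0} R}

theorem CocycleVanish.of_regular_zero (x : R) (hx : ∀ y : X, x • y = 0)
    (hreg : ∀ m : M, x • m = 0 → m = 0) : CocycleVanish P M 0 := by
  obtain ⟨h, h0, -⟩ := exists_homotopy P x hx
  intro f hf
  have h1 : x • f = 0 := by
    have : x • f = (x • 𝟙 _) ≫ f := by simp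
    rw [this, ← h0, Category.assoc, hf, Limits.comp_zero]
  ext y
  apply hreg
  exact congrArg (fun (k : P.complex.X 0 ⟶ M) => k y) h1

/-- A map killed by `π` factors through multiplication by `x`, if `ker π = xM` and `x` is regular. -/
theorem exists_smul_factor {A : ModuleCat.{0} R} (x : R) (π : M ⟶ M'')
    (hreg : ∀ m : M, x • m = 0 → m = 0) (hker : ∀ m : M, π m = 0 → ∃ m', x • m' = m)
    (f : A ⟶ M) (hf : f ≫ π = 0) : ∃ g : A ⟶ M, x • g = f := by
  have hi : Function.Injective (LinearMap.lsmul R M x) := by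
    rw [injective_iff_map_eq_zero]
    exact hreg
  have hr : ∀ a, f.hom a ∈ LinearMap.range (LinearMap.lsmul R M x) := fun a =>
    hker _ (congrArg (fun k : A ⟶ M'' => k a) hf)
  refine ⟨ModuleCat.ofHom ((LinearEquiv.ofInjective _ hi).symm.toLinearMap ∘ₗ
    LinearMap.codRestrict _ f.hom hr), ?_⟩
  ext a
  have := LinearEquiv.apply_symm_apply (LinearEquiv.ofInjective _ hi)
    (LinearMap.codRestrict _ f.hom hr a)
  exact congrArg Subtype.val this

theorem smul_hom_cancel {A : ModuleCat.{0} R} (x : R)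
    (hreg : ∀ m : M, x • m = 0 → m = 0) {f g : A ⟶ M} (h : x • f = x • g) : f = g := by
  ext a
  rw [← sub_eq_zero]
  apply hreg
  rw [smul_sub, sub_eq_zero]
  exact congrArg (fun k : A ⟶ M => k a) h

/-- Vanishing descends along a regular element, from `M` to `M'' = M/xM`. -/
theorem CocycleVanish.quotient (x : R) (π : M ⟶ M'') [Epi π]
    (hreg : ∀ m : M, x • m = 0 → m = 0) (hker : ∀ m : M, π m = 0 → ∃ m', x • m' = m)
    (hπ : ∀ m : M, π (x • m) = 0) (i : ℕ)
    (h0 : CocycleVanish P M i) (h1 : CocycleVanish P M (i + 1)) : CocycleVanish P M'' i := by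
  have key : ∀ f : P.complex.X i ⟶ M'', P.complex.d (i + 1) i ≫ f = 0 →
      ∃ F : P.complex.X i ⟶ M, P.complex.d (i + 1) i ≫ F = 0 ∧ F ≫ π = f := by
    intro f hf
    let F := Projective.factorThru f π
    have hF : F ≫ π = f := Projective.factorThru_comp f π
    obtain ⟨G, hG⟩ := exists_smul_factor x π hreg hker (P.complex.d (i + 1) i ≫ F)
      (by rw [Category.assoc, hF, hf])
    obtain ⟨g, hg⟩ := h1 G (smul_hom_cancel x hreg (by
      rw [← Linear.comp_smul, hG, ← Category.assoc, P.complex.d_comp_d]; simp))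
    refine ⟨F - x • g, ?_, ?_⟩
    · rw [Preadditive.comp_sub, Linear.comp_smul, hg, hG, sub_self]
    · rw [Preadditive.sub_comp, hF, sub_eq_self]
      ext a
      exact hπ (g a)
  cases i with
  | zero =>
    intro f hf
    obtain ⟨F, hF, rfl⟩ := key f hf
    rw [h0 F hF, Limits.zero_comp]
  | succ i =>
    intro f hf
    obtain ⟨F, hF, rfl⟩ := key f hf
    obtain ⟨g, rfl⟩ := h0 F hF
    exact ⟨g ≫ π, by simp⟩

/-- Vanishing lifts, with a shift, along a regular element annihilating `X`. -/
theorem CocycleVanish.of_quotient (x : R) (hx : ∀ y : X, x • y = 0) (π : M ⟶ M'') [Epi π]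
    (hreg : ∀ m : M, x • m = 0 → m = 0) (hker : ∀ m : M, π m = 0 → ∃ m', x • m' = m)
    (hπ : ∀ m : M, π (x • m) = 0) (i : ℕ)
    (h0 : CocycleVanish P M'' i) : CocycleVanish P M (i + 1) := by
  obtain ⟨h, -, hh⟩ := exists_homotopy P x hx
  intro f hf
  have h1 : x • f = P.complex.d (i + 1) i ≫ (h i ≫ f) := by
    have : x • f = (x • 𝟙 _) ≫ f := by simp
    rw [this, ← hh, Preadditive.add_comp, Category.assoc, Category.assoc, hf, Limits.comp_zero,
      add_zero]
  have key : ∃ g : P.complex.X i ⟶ M, P.complex.d (i + 1) i ≫ g = x • f ∧ g ≫ π = 0 := by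
    have hc : P.complex.d (i + 1) i ≫ ((h i ≫ f) ≫ π) = 0 := by
      rw [← Category.assoc, ← h1]
      ext a
      exact hπ (f a)
    cases i with
    | zero => exact ⟨h 0 ≫ f, h1.symm, h0 _ hc⟩
    | succ i =>
      obtain ⟨k, hk⟩ := h0 _ hc
      refine ⟨h (i + 1) ≫ f - P.complex.d (i + 1) i ≫ Projective.factorThru k π, ?_, ?_⟩
      · rw [Preadditive.comp_sub, h1, ← Category.assoc (P.complex.d _ _) (P.complex.d _ _),
          P.complex.d_comp_d]; simp
      · rw [Preadditive.sub_comp, Category.assoc (P.complex.d _ _), Projective.factorThru_comp, hk,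
          sub_self]
  obtain ⟨g, hg, hgπ⟩ := key
  obtain ⟨G, rfl⟩ := exists_smul_factor x π hreg hker g hgπ
  exact ⟨G, smul_hom_cancel x hreg (by rw [← hg, Linear.comp_smul])⟩

theorem CocycleVanish.subsingleton_hom (h : CocycleVanish P M 0) : Subsingleton (X →ₗ[R] M) := by
  refine subsingleton_of_forall_eq 0 fun f => ?_
  let p : P.complex.X 0 ⟶ X := P.π.f 0
  have hp : P.complex.d 1 0 ≫ p = 0 := ProjectiveResolution.complex_d_comp_π_f_zero P
  have : Epi p := inferInstanceAs (Epi (P.π.f 0))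
  have h1 := h (p ≫ ModuleCat.ofHom f) (by rw [← Category.assoc, hp, Limits.zero_comp])
  have h2 : (ModuleCat.ofHom f : X ⟶ M) = 0 := by
    rwa [← cancel_epi p, Limits.comp_zero]
  exact congrArg ModuleCat.Hom.hom h2

end ExtVanishing

/-! ### Depth and idempotent endomorphisms -/

/-- Let `φ` be an idempotent endomorphism preserving `m`, which is the identity modulo `J'` and
modulo the radical of `J`, and suppose `φ(J') ⊆ J ⊆ J'`. Then `R/J'` is a direct summand of `R/J`
over `φ(R)`, a regular element of `R/J` in `m` may be replaced by its image under `φ`, and such an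
element is regular on `R/J'` too. Induction along a regular sequence transfers the vanishing of
`Ext` from `R/J` to `R/J'`. -/
theorem cocycleVanish_retract {R : Type} [CommRing R] [IsNoetherianRing R] (m : Ideal R)
    (P : ProjectiveResolution (ModuleCat.of R (R ⧸ m))) (φ : R →+* R)
    (hφ : ∀ r, φ (φ r) = φ r) (hm : ∀ r ∈ m, φ r ∈ m) (t : ℕ) :
    ∀ J J' : Ideal R, (∀ r, φ r - r ∈ J.radical) → (∀ r, φ r - r ∈ J') →
      (∀ r ∈ J', φ r ∈ J) → J ≤ J' →
      (∀ i < t, CocycleVanish P (ModuleCat.of R (R ⧸ J)) i) →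
      ∀ i < t, CocycleVanish P (ModuleCat.of R (R ⧸ J')) i := by
  induction t with
  | zero => intros; omega
  | succ t ih =>
    intro J J' hrad hJ' hφJ hle hV
    have hsub := (hV 0 (by omega)).subsingleton_hom
    have hsub' : Subsingleton ((R ⧸ m) →ₗ[R] (R ⧸ J)) := hsub
    obtain ⟨x₀, hx₀, hreg₀⟩ := IsSMulRegular.subsingleton_linearMap_iff.mp hsub'
    rw [Ideal.annihilator_quotient] at hx₀
    set x := φ x₀ with hxdef
    have hxm : x ∈ m := hm _ hx₀
    have hregJ₀ : ∀ (e : ℕ) (a : R), x₀ ^ e * a ∈ J → a ∈ J := by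
      intro e
      induction e with
      | zero => intro a h; simpa using h
      | succ e ihe =>
        intro a h
        apply ihe
        have h1 : x₀ • (Ideal.Quotient.mk J (x₀ ^ e * a)) =
            x₀ • (0 : R ⧸ J) := by
          rw [smul_zero, Algebra.smul_def, Ideal.Quotient.algebraMap_eq, ← map_mul,
            Ideal.Quotient.eq_zero_iff_mem]
          convert h using 1
          ring
        exact Ideal.Quotient.eq_zero_iff_mem.mp (hreg₀ h1)
    -- modulo `J`, `x` differs from the regular element `x₀` by a nilpotent
    have hregJ : ∀ a : R, x * a ∈ J → a ∈ J := by
      intro a ha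
      obtain ⟨e, he⟩ := hrad x₀
      apply hregJ₀ e
      have hdvd : x ∣ x₀ ^ e - (x₀ - x) ^ e := by
        have := sub_dvd_pow_sub_pow x₀ (x₀ - x) e
        simpa using this
      obtain ⟨c, hc⟩ := hdvd
      have : x₀ ^ e * a = c * (x * a) + (-1) ^ e * a * (φ x₀ - x₀) ^ e := by
        have h2 : (x₀ - x) ^ e = (-1) ^ e * (φ x₀ - x₀) ^ e := by
          rw [← mul_pow]; congr 1; rw [hxdef]; ring
        have h3 : x₀ ^ e = x * c + (x₀ - x) ^ e := by rw [← hc]; ring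
        rw [h3, h2]; ring
      rw [this]
      exact J.add_mem (J.mul_mem_left _ ha) (J.mul_mem_left _ he)
    have hregJ' : ∀ a : R, x * a ∈ J' → a ∈ J' := by
      intro a ha
      have h1 := hφJ _ ha
      rw [map_mul, hxdef, hφ] at h1
      have h2 := hle (hregJ _ h1)
      have h3 := J'.sub_mem h2 (hJ' a)
      simpa using h3
    -- the exact sequences `0 → R/I → R/I → R/(I + (x)) → 0`
    let π (I : Ideal R) : ModuleCat.of R (R ⧸ I) ⟶ ModuleCat.of R (R ⧸ (I ⊔ Ideal.span {x})) :=
      ModuleCat.ofHom (Submodule.factor le_sup_left)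
    have hπepi (I : Ideal R) : Epi (π I) := by
      rw [ModuleCat.epi_iff_surjective]
      exact Submodule.factor_surjective le_sup_left
    have hπreg (I : Ideal R) (hI : ∀ a, x * a ∈ I → a ∈ I) :
        ∀ a : (ModuleCat.of R (R ⧸ I)), x • a = 0 → a = 0 := by
      intro a ha
      obtain ⟨a, rfl⟩ := Ideal.Quotient.mk_surjective a
      exact Ideal.Quotient.eq_zero_iff_mem.mpr (hI a (Ideal.Quotient.eq_zero_iff_mem.mp ha))
    have hπker (I : Ideal R) :
        ∀ a : (ModuleCat.of R (R ⧸ I)), π I a = 0 → ∃ a', x • a' = a := by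
      intro a ha
      obtain ⟨a, rfl⟩ := Ideal.Quotient.mk_surjective a
      have h1 : a ∈ I ⊔ Ideal.span {x} := Ideal.Quotient.eq_zero_iff_mem.mp ha
      obtain ⟨b, hb, c, hc, rfl⟩ := Submodule.mem_sup.mp h1
      obtain ⟨d, rfl⟩ := Ideal.mem_span_singleton'.mp hc
      refine ⟨Ideal.Quotient.mk I d, ?_⟩
      have : Ideal.Quotient.mk I (x * d) = Ideal.Quotient.mk I (b + d * x) := by
        rw [Ideal.Quotient.eq]
        have : x * d - (b + d * x) = -b := by ring
        rw [this]; exact I.neg_mem hb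
      exact this
    have hππ (I : Ideal R) : ∀ a : (ModuleCat.of R (R ⧸ I)), π I (x • a) = 0 := by
      intro a
      obtain ⟨a, rfl⟩ := Ideal.Quotient.mk_surjective a
      have : x * a ∈ I ⊔ Ideal.span {x} :=
        Ideal.mul_mem_right _ _ (Ideal.mem_sup_right (Ideal.mem_span_singleton_self x))
      exact Ideal.Quotient.eq_zero_iff_mem.mpr this
    have hann : ∀ y : (ModuleCat.of R (R ⧸ m)), x • y = 0 := by
      intro y
      obtain ⟨y, rfl⟩ := Ideal.Quotient.mk_surjective y
      exact Ideal.Quotient.eq_zero_iff_mem.mpr (m.mul_mem_right y hxm)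
    have hVx : ∀ i < t, CocycleVanish P (ModuleCat.of R (R ⧸ (J ⊔ Ideal.span {x}))) i :=
      fun i hi => CocycleVanish.quotient P x (π J) (hπreg J hregJ) (hπker J) (hππ J) i
        (hV i (by omega)) (hV (i + 1) (by omega))
    have hVx' := ih (J ⊔ Ideal.span {x}) (J' ⊔ Ideal.span {x})
      (fun r => Ideal.radical_mono le_sup_left (hrad r)) (fun r => Ideal.mem_sup_left (hJ' r))
      (by
        intro r hr
        obtain ⟨b, hb, c, hc, rfl⟩ := Submodule.mem_sup.mp hr
        obtain ⟨d, rfl⟩ := Ideal.mem_span_singleton'.mp hc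
        rw [map_add, map_mul, hxdef, hφ]
        exact Ideal.add_mem _ (Ideal.mem_sup_left (hφJ b hb))
          (Ideal.mul_mem_left _ _ (Ideal.mem_sup_right (Ideal.mem_span_singleton_self _))))
      (sup_le_sup_right hle _) hVx
    intro i hi
    cases i with
    | zero => exact CocycleVanish.of_regular_zero P x hann (hπreg J' hregJ')
    | succ i =>
      exact CocycleVanish.of_quotient P x hann (π J') (hπreg J' hregJ') (hπker J') (hππ J') i
        (hVx' i (by omega))

theorem depthQ_le_of_retract (K : Type) [Field K] {n : ℕ} (φ : MvPoly K (Fin n) →+* MvPoly K (Fin n))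
    (hφ : ∀ r, φ (φ r) = φ r) (hm : ∀ r ∈ maxIdeal K (Fin n), φ r ∈ maxIdeal K (Fin n))
    (J J' : Ideal (MvPoly K (Fin n))) (hrad : ∀ r, φ r - r ∈ J.radical) (hJ' : ∀ r, φ r - r ∈ J')
    (hφJ : ∀ r ∈ J', φ r ∈ J) (hle : J ≤ J') : depthQ K (Fin n) J ≤ depthQ K (Fin n) J' := by
  let P := ProjectiveResolution.of
    (ModuleCat.of (MvPoly K (Fin n)) (MvPoly K (Fin n) ⧸ maxIdeal K (Fin n)))
  refine le_sInf ?_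
  rintro _ ⟨i, rfl, hi⟩
  by_contra hlt
  rw [not_le] at hlt
  have hV : ∀ j < i + 1, CocycleVanish P (ModuleCat.of _ (MvPoly K (Fin n) ⧸ J)) j := by
    intro j hj
    rw [← subsingleton_ext_iff, ← not_nontrivial_iff_subsingleton]
    intro hnt
    have h1 : depthQ K (Fin n) J ≤ j := sInf_le ⟨j, rfl, hnt⟩
    have h2 : (i : ℕ∞) < j := hlt.trans_le h1
    have h3 : i < j := by exact_mod_cast h2
    omega
  have := cocycleVanish_retract _ P φ hφ hm (i + 1) J J' hrad hJ' hφJ hle hV i (by omega)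
  rw [← subsingleton_ext_iff, ← not_nontrivial_iff_subsingleton] at this
  exact this hi

/-! ### Colon ideals of powers of edge ideals -/

section Colon

variable (K : Type) [Field K] {n : ℕ} (G : SimpleGraph (Fin n))

/-- An ideal generated by monomials not involving `x_i` has powers of the same kind. -/
theorem pow_span_mono (i : Fin n) (S : Set (Fin n →₀ ℕ)) (hS : ∀ s ∈ S, s i = 0) (k : ℕ) :
    ∃ T : Set (Fin n →₀ ℕ), (∀ s ∈ T, s i = 0) ∧
      Ideal.span ((fun s => monomial s (1 : K)) '' S) ^ k =
        Ideal.span ((fun s => monomial s (1 : K)) '' T) := by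
  induction k with
  | zero => exact ⟨{0}, by simp, by simp⟩
  | succ k ih =>
    obtain ⟨T, hT, h⟩ := ih
    refine ⟨Set.image2 (· + ·) T S, ?_, ?_⟩
    · rintro _ ⟨a, ha, b, hb, rfl⟩
      simp [hT a ha, hS b hb]
    · rw [pow_succ, h, Ideal.span_mul_span', ← Set.image2_mul]
      congr 1
      rw [Set.image2_image_left, Set.image2_image_right, Set.image_image2]
      simp [monomial_mul]

theorem mem_of_X_pow_mul_mem (i : Fin n) (T : Set (Fin n →₀ ℕ)) (hT : ∀ s ∈ T, s i = 0) (k : ℕ)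
    (g : MvPoly K (Fin n)) (h : X i ^ k * g ∈ Ideal.span ((fun s => monomial s (1 : K)) '' T)) :
    g ∈ Ideal.span ((fun s => monomial s (1 : K)) '' T) := by
  rw [mem_ideal_span_monomial_image] at h ⊢
  intro u hu
  obtain ⟨s, hs, hle⟩ := h (Finsupp.single i k + u) (by
    rw [mem_support_iff, X_pow_eq_monomial, coeff_monomial_mul, one_mul]
    exact mem_support_iff.mp hu)
  refine ⟨s, hs, fun j => ?_⟩
  by_cases hj : j = i
  · subst hj; simp [hT s hs]
  · have := hle j
    rwa [Finsupp.add_apply, Finsupp.single_eq_of_ne hj, zero_add] at this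

theorem edgeIdealDel_eq_span_mono (s : Set (Fin n)) : edgeIdealDel K G s =
    Ideal.span ((fun s => monomial s (1 : K)) ''
      {u | ∃ a b, G.Adj a b ∧ a ∉ s ∧ b ∉ s ∧ u = Finsupp.single a 1 + Finsupp.single b 1}) := by
  unfold edgeIdealDel
  congr 1
  ext p
  constructor
  · rintro ⟨a, b, h, ha, hb, rfl⟩
    exact ⟨_, ⟨a, b, h, ha, hb, rfl⟩, by simp [X, monomial_mul]⟩
  · rintro ⟨_, ⟨a, b, h, ha, hb, rfl⟩, rfl⟩
    exact ⟨a, b, h, ha, hb, by simp [X, monomial_mul]⟩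

open Classical in
/-- The substitution setting the neighbours of `x_i` to zero. -/
noncomputable def killNb (i : Fin n) : MvPoly K (Fin n) →ₐ[K] MvPoly K (Fin n) :=
  aeval fun j => if G.Adj i j then 0 else X j

theorem killNb_X_of_adj {i j : Fin n} (h : G.Adj i j) : killNb K G i (X j) = 0 := by
  simp [killNb, h]

theorem killNb_X_of_not_adj {i j : Fin n} (h : ¬ G.Adj i j) : killNb K G i (X j) = X j := by
  simp [killNb, h]

theorem killNb_sub_mem (i : Fin n) (r : MvPoly K (Fin n)) : killNb K G i r - r ∈ nbIdeal K G i := by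
  rw [← Ideal.Quotient.eq]
  have : ((Ideal.Quotient.mkₐ K (nbIdeal K G i)).comp (killNb K G i)) =
      Ideal.Quotient.mkₐ K (nbIdeal K G i) := by
    ext j
    by_cases h : G.Adj i j
    · have : (X j : MvPoly K (Fin n)) ∈ nbIdeal K G i := Ideal.subset_span ⟨j, h, rfl⟩
      simp [killNb_X_of_adj K G h, Ideal.Quotient.eq_zero_iff_mem.mpr this]
    · simp [killNb_X_of_not_adj K G h]
  exact congrArg (fun f => f r) this

theorem killNb_idem (i : Fin n) (r : MvPoly K (Fin n)) :
    killNb K G i (killNb K G i r) = killNb K G i r := by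
  have : (killNb K G i).comp (killNb K G i) = killNb K G i := by
    ext j
    by_cases h : G.Adj i j
    · simp [killNb_X_of_adj K G h]
    · simp [killNb_X_of_not_adj K G h]
  exact congrArg (fun f => f r) this

theorem depthQ_colon_le (k : ℕ) (i : Fin n) :
    depthQ K (Fin n) ((edgeIdealG K G ^ k).colon
      (Ideal.span {(X i : MvPoly K (Fin n)) ^ k})) ≤
      depthQ K (Fin n) (edgeIdealDel K G (G.neighborSet i) ^ k + nbIdeal K G i) := by
  set J := (edgeIdealG K G ^ k).colon (Ideal.span {(X i : MvPoly K (Fin n)) ^ k}) with hJ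
  have memJ : ∀ r, r ∈ J ↔ r * X i ^ k ∈ edgeIdealG K G ^ k := by
    intro r
    rw [hJ]
    simp
  set I' := edgeIdealDel K G (G.neighborSet i) with hI'
  have hI'I : I' ≤ edgeIdealG K G :=
    Ideal.span_mono (by rintro _ ⟨a, b, h, -, -, rfl⟩; exact ⟨a, b, h, rfl⟩)
  have hφI : Ideal.map (killNb K G i).toRingHom (edgeIdealG K G) ≤ I' := by
    rw [edgeIdealG, Ideal.map_span, Ideal.span_le]
    rintro _ ⟨_, ⟨a, b, h, rfl⟩, rfl⟩
    change killNb K G i (X a * X b) ∈ I'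
    rw [map_mul]
    by_cases ha : G.Adj i a
    · simp [killNb_X_of_adj K G ha]
    by_cases hb : G.Adj i b
    · simp [killNb_X_of_adj K G hb]
    rw [killNb_X_of_not_adj K G ha, killNb_X_of_not_adj K G hb]
    exact Ideal.subset_span ⟨a, b, h, ha, hb, rfl⟩
  have hφIk : ∀ r ∈ edgeIdealG K G ^ k, killNb K G i r ∈ I' ^ k := by
    intro r hr
    have h1 := Ideal.mem_map_of_mem (killNb K G i).toRingHom hr
    rw [Ideal.map_pow] at h1
    exact Ideal.pow_right_mono hφI k h1
  have hNrad : nbIdeal K G i ≤ J.radical := by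
    rw [nbIdeal, Ideal.span_le]
    rintro _ ⟨j, hj, rfl⟩
    refine ⟨k, (memJ _).mpr ?_⟩
    rw [← mul_pow]
    have : (X j * X i : MvPoly K (Fin n)) ∈ edgeIdealG K G :=
      Ideal.subset_span ⟨j, i, hj.symm, rfl⟩
    exact Ideal.pow_mem_pow this k
  apply depthQ_le_of_retract K (killNb K G i).toRingHom (killNb_idem K G i)
  · intro r hr
    have h1 : (killNb K G i r - r) ∈ maxIdeal K (Fin n) :=
      Ideal.span_mono (Set.image_subset_range _ _) (killNb_sub_mem K G i r)
    have := Ideal.add_mem _ h1 hr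
    simpa using this
  · exact fun r => hNrad (killNb_sub_mem K G i r)
  · exact fun r => Ideal.mem_sup_right (killNb_sub_mem K G i r)
  · intro r hr
    obtain ⟨a, ha, b, hb, rfl⟩ := Submodule.mem_sup.mp hr
    have hb0 : killNb K G i b = 0 := by
      have : nbIdeal K G i ≤ RingHom.ker (killNb K G i) := by
        rw [nbIdeal, Ideal.span_le]
        rintro _ ⟨j, hj, rfl⟩
        exact killNb_X_of_adj K G hj
      exact this hb
    change killNb K G i (a + b) ∈ J
    rw [map_add, hb0, add_zero, memJ]
    exact Ideal.mul_mem_right _ _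
      (Ideal.pow_right_mono hI'I k (hφIk a (Ideal.pow_right_mono hI'I k ha)))
  · intro r hr
    have h1 := hφIk _ ((memJ r).mp hr)
    rw [map_mul, map_pow, killNb_X_of_not_adj K G (G.loopless.irrefl i), mul_comm] at h1
    have h2 : killNb K G i r ∈ I' ^ k := by
      -- `x_i` is isolated in `G \ N(x_i)`, so the generators of `I'` do not involve it
      rw [hI', edgeIdealDel_eq_span_mono] at h1 ⊢
      obtain ⟨T, hT, hTe⟩ := pow_span_mono K i
        {u | ∃ a b, G.Adj a b ∧ a ∉ G.neighborSet i ∧ b ∉ G.neighborSet i ∧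
          u = Finsupp.single a 1 + Finsupp.single b 1} (by
          rintro _ ⟨a, b, hab, ha, hb, rfl⟩
          have hai : a ≠ i := by rintro rfl; exact hb hab
          have hbi : b ≠ i := by rintro rfl; exact ha hab.symm
          simp [hai, hbi]) k
      rw [hTe] at h1 ⊢
      exact mem_of_X_pow_mul_mem K i T hT k _ h1
    have h3 := Submodule.sub_mem _ (Ideal.mem_sup_left h2 : _ ∈ I' ^ k ⊔ nbIdeal K G i)
      (Ideal.mem_sup_right (killNb_sub_mem K G i r))
    simpa using h3

end Colon

/-! ### Krull dimension of affine domains and of monomial algebras -/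

/-- An injective integral extension preserves dimension: incomparability gives `≤`, and lying over
together with going up gives `≥`. -/
theorem ringKrullDim_eq_of_isIntegral_of_injective {A B : Type*} [CommRing A] [CommRing B]
    [Algebra A B] [Algebra.IsIntegral A B] (h : Function.Injective (algebraMap A B)) :
    ringKrullDim B = ringKrullDim A := by
  apply le_antisymm
  · refine Order.krullDim_le_of_strictMono (PrimeSpectrum.comap (algebraMap A B)) ?_
    intro I J hIJ
    exact Ideal.IsIntegral.comap_lt_comap (R := A) (I := I.asIdeal) (J := J.asIdeal) hIJ
  · refine iSup_le fun l => ?_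
    obtain ⟨Q, -, hQ, hQl⟩ := Ideal.exists_ideal_over_prime_of_isIntegral (S := B)
      l.head.asIdeal ⊥ (by
        rw [← RingHom.ker_eq_comap_bot, (RingHom.injective_iff_ker_eq_bot _).mp h]
        exact bot_le)
    have : Q.LiesOver (RelSeries.head l).asIdeal := ⟨hQl.symm⟩
    obtain ⟨L, hL, -⟩ := Ideal.exists_ltSeries_of_hasGoingUp l Q
    rw [← hL]
    exact le_iSup (fun p : LTSeries (PrimeSpectrum B) => ((p.length : ℕ∞) : WithBot ℕ∞)) L

/-- Noether normalization: the dimension of an affine domain is its transcendence degree. -/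
theorem ringKrullDim_eq_card_of_isTranscendenceBasis {K A ι : Type} [Field K] [CommRing A]
    [IsDomain A] [Algebra K A] [Algebra.FiniteType K A] {x : ι → A}
    (hx : IsTranscendenceBasis K x) : Finite ι ∧ ringKrullDim A = Nat.card ι := by
  obtain ⟨s, g, hg, hg_int⟩ := exists_integral_inj_algHom_of_fg K A
  let _ : Algebra (MvPolynomial (Fin s) K) A := g.toRingHom.toAlgebra
  have : IsScalarTower K (MvPolynomial (Fin s) K) A :=
    IsScalarTower.of_algebraMap_eq fun r => (g.commutes r).symm
  have : Algebra.IsIntegral (MvPolynomial (Fin s) K) A := ⟨hg_int⟩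
  have : FaithfulSMul (MvPolynomial (Fin s) K) A :=
    (faithfulSMul_iff_algebraMap_injective _ _).mpr hg
  have h1 := (IsTranscendenceBasis.mvPolynomial (Fin s) K).algebraMap_comp (A := A)
  have h2 := hx.cardinalMk_eq h1
  have hfin : Finite ι := by
    rw [← Cardinal.lt_aleph0_iff_finite, h2]; exact Cardinal.mk_lt_aleph0
  refine ⟨hfin, ?_⟩
  rw [ringKrullDim_eq_of_isIntegral_of_injective (A := MvPolynomial (Fin s) K) hg,
    MvPolynomial.ringKrullDim_of_isNoetherianRing, ringKrullDim_eq_zero_of_field, zero_add]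
  have : Nat.card ι = Nat.card (Fin s) := by rw [Nat.card, h2, Nat.card]
  rw [this]

/-- The exponent vector of a monomial, with rational entries. -/
def ratExp {n : ℕ} (u : Fin n →₀ ℕ) : Fin n → ℚ := fun i => u i

/-- Substituting monomials for variables acts linearly on exponents. -/
theorem aeval_monomial_family (K : Type) [Field K] {n : ℕ} {ι : Type} (b : ι → Fin n →₀ ℕ)
    (u : ι →₀ ℕ) (c : K) :
    aeval (fun j => (monomial (b j) 1 : MvPoly K (Fin n))) (monomial u c) =
      monomial (Finsupp.linearCombination ℕ b u) c := by
  rw [aeval_monomial, Finsupp.linearCombination_apply]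
  simp only [monomial_pow, one_pow]
  rw [Finsupp.prod, ← monomial_sum_one, algebraMap_eq, C_mul_monomial, mul_one]
  rfl

/-- Monomials are algebraically independent iff their exponent vectors are linearly independent. -/
theorem algebraicIndependent_monomial_iff (K : Type) [Field K] {n : ℕ} {ι : Type}
    (b : ι → Fin n →₀ ℕ) :
    AlgebraicIndependent K (fun j => (monomial (b j) 1 : MvPoly K (Fin n))) ↔
      LinearIndependent ℚ (fun j => ratExp (b j)) := by
  classical
  have cast_comb : ∀ u : ι →₀ ℕ, ratExp (Finsupp.linearCombination ℕ b u) =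
      Finsupp.linearCombination ℚ (fun j => ratExp (b j))
        (u.mapRange (fun k : ℕ => (k : ℚ)) (by simp)) := by
    intro u
    rw [Finsupp.linearCombination_apply, Finsupp.linearCombination_apply,
      Finsupp.sum_mapRange_index (by simp)]
    funext i
    simp [ratExp, Finsupp.sum, Finsupp.finsetSum_apply, Finset.sum_apply]
  constructor
  · intro h
    rw [← LinearIndependent.iff_fractionRing ℤ ℚ, linearIndependent_iff]
    intro z hz
    -- the positive and negative parts of an integral relation give two equal monomials
    let p : ι →₀ ℕ := z.mapRange (fun k : ℤ => k.toNat) (by simp)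
    let q : ι →₀ ℕ := z.mapRange (fun k : ℤ => (-k).toNat) (by simp)
    have hpq : Finsupp.linearCombination ℕ b p = Finsupp.linearCombination ℕ b q := by
      have : ratExp (Finsupp.linearCombination ℕ b p) =
          ratExp (Finsupp.linearCombination ℕ b q) := by
        rw [cast_comb, cast_comb, ← sub_eq_zero, ← map_sub, ← hz]
        rw [Finsupp.linearCombination_apply, Finsupp.linearCombination_apply]
        rw [Finsupp.sum_of_support_subset (s := z.support), Finsupp.sum]
        · refine Finset.sum_congr rfl fun j _ => ?_
          have h1 : (((z j).toNat : ℚ) - ((-z j).toNat : ℚ)) = (z j : ℚ) := by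
            exact_mod_cast Int.toNat_sub_toNat_neg (z j)
          funext i
          simp [p, q, h1]
        · intro j hj
          rw [Finsupp.mem_support_iff] at hj ⊢
          rintro h0
          exact hj (by simp [p, q, h0])
        · simp
      ext i
      have := congrFun this i
      simpa [ratExp] using this
    have h1 : aeval (fun j => (monomial (b j) 1 : MvPoly K (Fin n))) (monomial p (1 : K)) =
        aeval (fun j => (monomial (b j) 1 : MvPoly K (Fin n))) (monomial q (1 : K)) := by
      rw [aeval_monomial_family, aeval_monomial_family, hpq]
    have h2 := h h1
    rw [monomial_left_inj one_ne_zero] at h2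
    ext j
    have h3 := DFunLike.congr_fun h2 j
    simp [p, q] at h3
    simp
    omega
  · intro h
    have hinj : Function.Injective (Finsupp.linearCombination ℕ b) := by
      intro u w huw
      have h1 := congrArg ratExp huw
      rw [cast_comb, cast_comb] at h1
      exact Finsupp.mapRange_injective _ _ Nat.cast_injective (h h1)
    rw [algebraicIndependent_iff]
    intro p hp
    ext u
    have h1 : coeff (Finsupp.linearCombination ℕ b u)
        (aeval (fun j => (monomial (b j) 1 : MvPoly K (Fin n))) p) = coeff u p := by
      conv_lhs => rw [p.as_sum, map_sum, coeff_sum]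
      simp only [aeval_monomial_family, coeff_monomial, hinj.eq_iff]
      simpa using fun h => h.symm
    rw [← h1, hp, coeff_zero, coeff_zero]

/-- The dimension of a monomial algebra is the rank of its exponent vectors, since algebraic
independence of monomials is linear independence of exponents. -/
theorem ringKrullDim_adjoin_monomials (K : Type) [Field K] {n : ℕ} (V : Set (Fin n →₀ ℕ))
    (hV : V.Finite) :
    ringKrullDim (Algebra.adjoin K ((fun u => (monomial u 1 : MvPoly K (Fin n))) '' V)) =
      Module.finrank ℚ (Submodule.span ℚ (ratExp '' V)) := by
  set A := Algebra.adjoin K ((fun u => (monomial u 1 : MvPoly K (Fin n))) '' V) with hA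
  have hft : Algebra.FiniteType K A := by
    rw [← Subalgebra.fg_iff_finiteType]
    exact Subalgebra.fg_adjoin_finset (hV.image _).toFinset |> fun h => by simpa using h
  let s : Set A := {a | a.1 ∈ (fun u => (monomial u 1 : MvPoly K (Fin n))) '' V}
  have hs : Algebra.adjoin K s = ⊤ := by
    exact Algebra.adjoin_adjoin_coe_preimage
  have halg : Algebra.IsAlgebraic (Algebra.adjoin K s) A := by
    exact ⟨fun a => isAlgebraic_algebraMap (⟨a, hs ▸ Algebra.mem_top⟩ : Algebra.adjoin K s)⟩
  obtain ⟨t, hts, ht⟩ := exists_isTranscendenceBasis_subset (R := K) s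
  obtain ⟨hfin, hdim⟩ := ringKrullDim_eq_card_of_isTranscendenceBasis ht
  rw [hdim]
  -- a transcendence basis among the generators; its exponent vectors form a basis of the span
  choose β hβV hβ using fun a : t => hts a.2
  have hind : LinearIndependent ℚ (fun a : t => ratExp (β a)) := by
    rw [← algebraicIndependent_monomial_iff K]
    have := ht.1.map' (f := A.val) Subtype.val_injective
    convert this using 2 with a
    exact hβ a
  have hspan : Submodule.span ℚ (ratExp '' V) =
      Submodule.span ℚ (Set.range (fun a : t => ratExp (β a))) := by
    apply le_antisymm
    · rw [Submodule.span_le]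
      rintro _ ⟨e, he, rfl⟩
      by_contra hne
      have h1 := (linearIndependent_option'
        (v := fun a : t => ratExp (β a)) (x := ratExp e)).mpr ⟨hind, hne⟩
      let xe : A := ⟨monomial e 1, Algebra.subset_adjoin ⟨e, he, rfl⟩⟩
      let x' : Option t → A := fun o => o.elim xe (fun a => a.1)
      have h2 : AlgebraicIndependent K x' := by
        have h3 : AlgebraicIndependent K (fun o : Option t =>
            (monomial (o.elim e β) 1 : MvPoly K (Fin n))) := by
          rw [algebraicIndependent_monomial_iff]
          have h1' : (fun o : Option t => ratExp (o.elim e β)) =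
              fun o => o.casesOn' (ratExp e) fun a => ratExp (β a) := by
            funext o
            cases o <;> rfl
          rw [h1']
          exact h1
        have h3' : (fun o : Option t => (monomial (o.elim e β) 1 : MvPoly K (Fin n))) =
            A.val ∘ x' := by
          funext o
          cases o
          · rfl
          · exact hβ _
        rw [h3'] at h3
        exact h3.of_comp A.val
      have h4 := ht.2 (Set.range x') h2.to_subtype_range (by
        rintro _ ⟨a, rfl⟩
        exact ⟨some a, rfl⟩)
      have h5 : xe ∈ Set.range ((↑) : t → A) := by
        rw [h4]; exact ⟨none, rfl⟩
      obtain ⟨a, ha⟩ := h5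
      have := h2.injective (a₁ := none) (a₂ := some a) ha.symm
      cases this
    · apply Submodule.span_mono
      rintro _ ⟨a, rfl⟩
      exact ⟨β a, hβV a, rfl⟩
  have := Fintype.ofFinite t
  rw [hspan, finrank_span_eq_card hind, Nat.card_eq_fintype_card]

/-! ### The rank of the incidence matrix of a graph -/

section Rank

variable {n : ℕ} (G : SimpleGraph (Fin n))

/-- Exponent vectors of the generators `x_a x_b` of the edge ideal. -/
def edgeExps : Set (Fin n →₀ ℕ) :=
  {u | ∃ a b, G.Adj a b ∧ u = Finsupp.single a 1 + Finsupp.single b 1}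

/-- Rational-valued functions on the vertices that change sign along every edge: the orthogonal
complement of the exponent vectors of the edges. -/
def alternating : Submodule ℚ (Fin n → ℚ) where
  carrier := {f | ∀ a b, G.Adj a b → f a + f b = 0}
  add_mem' := by
    intro f g hf hg a b h
    have h1 := hf a b h
    have h2 := hg a b h
    simp only [Pi.add_apply]
    linarith
  zero_mem' := by intro a b _; simp
  smul_mem' := by
    intro c f hf a b h
    have h1 := hf a b h
    simp only [Pi.smul_apply, smul_eq_mul]
    rw [← mul_add, h1, mul_zero]

theorem finrank_span_add_finrank_alternating :
    Module.finrank ℚ (Submodule.span ℚ (ratExp '' edgeExps G)) +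
      Module.finrank ℚ (alternating G) = n := by
  have h := Subspace.finrank_add_finrank_dualAnnihilator_eq
    (Submodule.span ℚ (ratExp '' edgeExps G))
  rw [Module.finrank_fintype_fun_eq_card, Fintype.card_fin] at h
  have hmap : (alternating G).map (dotProductEquiv ℚ (Fin n)).toLinearMap =
      (Submodule.span ℚ (ratExp '' edgeExps G)).dualAnnihilator := by
    ext φ
    obtain ⟨f, rfl⟩ := (dotProductEquiv ℚ (Fin n)).surjective φ
    have hdot : ∀ a b, dotProductEquiv ℚ (Fin n) f
        (ratExp (Finsupp.single a 1 + Finsupp.single b 1)) = f a + f b := by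
      intro a b
      have : ratExp (Finsupp.single a 1 + Finsupp.single b 1) =
          Pi.single a 1 + Pi.single b 1 := by
        funext i
        simp [ratExp, Finsupp.single_apply, Pi.single_apply, eq_comm]
      rw [this, dotProductEquiv_apply_apply, dotProduct_add]
      simp
    rw [← SetLike.mem_coe (p := Submodule.dualAnnihilator _),
      Submodule.coe_dualAnnihilator_span]
    constructor
    · rintro ⟨g, hg, hgf⟩
      have hgf' : g = f := (dotProductEquiv ℚ (Fin n)).injective hgf
      subst hgf'
      rintro _ ⟨_, ⟨a, b, hab, rfl⟩, rfl⟩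
      exact (hdot a b).trans (hg a b hab)
    · intro h
      refine ⟨f, fun a b hab => ?_, rfl⟩
      rw [← hdot a b]
      exact h ⟨_, ⟨a, b, hab, rfl⟩, rfl⟩
  rw [← LinearEquiv.finrank_map_eq (dotProductEquiv ℚ (Fin n)) (alternating G)]
  rw [← hmap] at h
  exact h

/-- A choice of signs on the vertices that alternates on every bipartite component. -/
theorem exists_sign : ∃ sgn : Fin n → ℚ, (∀ v, sgn v * sgn v = 1) ∧
    ∀ v w, G.Adj v w → (G.induce (G.connectedComponentMk v).supp).Colorable 2 →
      sgn w = - sgn v := by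
  classical
  have key : ∀ c : G.ConnectedComponent, ∃ s : Fin n → ℚ, (∀ v, s v * s v = 1) ∧
      ((G.induce c.supp).Colorable 2 → ∀ v ∈ c.supp, ∀ w ∈ c.supp, G.Adj v w → s w = - s v) := by
    intro c
    by_cases h : (G.induce c.supp).Colorable 2
    · obtain ⟨col⟩ := h
      refine ⟨fun v => if hv : v ∈ c.supp then (if col ⟨v, hv⟩ = 0 then 1 else -1) else 1,
        fun v => ?_, fun _ v hv w hw hvw => ?_⟩
      · dsimp only
        split_ifs <;> norm_num
      · have hne : col ⟨v, hv⟩ ≠ col ⟨w, hw⟩ := col.valid hvw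
        simp only [hv, hw, dif_pos]
        split_ifs with h1 h2 h2
        · exact absurd (h2.trans h1.symm) hne
        · norm_num
        · norm_num
        · omega
    · exact ⟨fun _ => 1, fun _ => by norm_num, fun h' => absurd h' h⟩
  choose s hs1 hs2 using key
  refine ⟨fun v => s (G.connectedComponentMk v) v, fun v => hs1 _ _, fun v w hvw hc => ?_⟩
  have hmk : G.connectedComponentMk w = G.connectedComponentMk v :=
    (SimpleGraph.ConnectedComponent.connectedComponentMk_eq_of_adj hvw).symm
  dsimp only
  rw [hmk]
  exact hs2 _ hc v rfl w hmk hvw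

/-- An alternating function vanishes on every component that is not bipartite: where it does not
vanish its square is constant on the component, so its sign is a proper `2`-colouring. -/
theorem alternating_eq_zero {f : Fin n → ℚ} (hf : f ∈ alternating G) (v : Fin n)
    (hv : ¬ (G.induce (G.connectedComponentMk v).supp).Colorable 2) : f v = 0 := by
  classical
  by_contra hne
  apply hv
  have hsq : ∀ w, G.Reachable v w → f w ^ 2 = f v ^ 2 := by
    rintro w ⟨p⟩
    induction p with
    | nil => rfl
    | cons h p ih =>
      rename_i a b c
      have h1 : f b = - f a := by linarith [hf a b h]
      have h2 : G.connectedComponentMk b = G.connectedComponentMk a :=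
        (SimpleGraph.ConnectedComponent.connectedComponentMk_eq_of_adj h).symm
      rw [ih (by rwa [h2]) (by rw [h1]; simpa using hne), h1, neg_sq]
  refine ⟨SimpleGraph.Coloring.mk (fun w => if 0 < f w then (0 : Fin 2) else 1) ?_⟩
  rintro ⟨a, ha⟩ ⟨b, hb⟩ hab
  have hab' : G.Adj a b := hab
  have ha0 : f a ≠ 0 := by
    have h1 := hsq a (SimpleGraph.ConnectedComponent.exact ha).symm
    intro h0
    rw [h0] at h1
    exact hne (by simpa using h1.symm)
  have h1 : f b = - f a := by linarith [hf a b hab']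
  simp only [h1]
  rcases lt_or_gt_of_ne ha0 with h | h
  · simp [h, h.le]
  · simp [h, h.le]

theorem finrank_alternating :
    Module.finrank ℚ (alternating G) =
      Nat.card {c : G.ConnectedComponent // (G.induce c.supp).Colorable 2} := by
  classical
  obtain ⟨sgn, hs1, hs2⟩ := exists_sign G
  let B := {c : G.ConnectedComponent // (G.induce c.supp).Colorable 2}
  let Φ : (B → ℚ) →ₗ[ℚ] (Fin n → ℚ) :=
    { toFun := fun g v => if h : (G.induce (G.connectedComponentMk v).supp).Colorable 2 then
        sgn v * g ⟨G.connectedComponentMk v, h⟩ else 0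
      map_add' := by
        intro g g'
        funext v
        simp only [Pi.add_apply]
        split_ifs <;> ring
      map_smul' := by
        intro r g
        funext v
        simp only [Pi.smul_apply, smul_eq_mul, RingHom.id_apply]
        split_ifs <;> ring }
  have hΦ : ∀ g v (h : (G.induce (G.connectedComponentMk v).supp).Colorable 2),
      Φ g v = sgn v * g ⟨G.connectedComponentMk v, h⟩ := fun g v h => dif_pos h
  have hΦ0 : ∀ g v (_ : ¬ (G.induce (G.connectedComponentMk v).supp).Colorable 2),
      Φ g v = 0 := fun g v h => dif_neg h
  have hinj : Function.Injective Φ := by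
    intro g g' hgg
    funext ⟨c, hc⟩
    induction c using SimpleGraph.ConnectedComponent.ind with
    | h v =>
      have h1 := congrFun hgg v
      rw [hΦ g v hc, hΦ g' v hc] at h1
      have h2 : sgn v ≠ 0 := by
        intro h0
        have := hs1 v
        simp [h0] at this
      exact mul_left_cancel₀ h2 h1
  have hrange : LinearMap.range Φ = alternating G := by
    apply le_antisymm
    · rintro _ ⟨g, rfl⟩ a b hab
      have hmk : G.connectedComponentMk b = G.connectedComponentMk a :=
        (SimpleGraph.ConnectedComponent.connectedComponentMk_eq_of_adj hab).symm
      by_cases h : (G.induce (G.connectedComponentMk a).supp).Colorable 2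
      · have h' : (G.induce (G.connectedComponentMk b).supp).Colorable 2 := by rwa [hmk]
        have he : (⟨_, h'⟩ : B) = ⟨_, h⟩ := Subtype.ext hmk
        rw [hΦ g a h, hΦ g b h', hs2 a b hab h, he]
        ring
      · have h' : ¬ (G.induce (G.connectedComponentMk b).supp).Colorable 2 := by rwa [hmk]
        rw [hΦ0 g a h, hΦ0 g b h', add_zero]
    · intro f hf
      have hconst : ∀ c : B, ∃ q : ℚ, ∀ w, G.connectedComponentMk w = c.1 → sgn w * f w = q := by
        rintro ⟨c, hc⟩
        induction c using SimpleGraph.ConnectedComponent.ind with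
        | h v =>
          refine ⟨sgn v * f v, fun w hw => ?_⟩
          obtain ⟨p⟩ := (SimpleGraph.ConnectedComponent.exact hw).symm
          clear hw
          induction p with
          | nil => rfl
          | cons h p ih =>
            rename_i a b c
            have h2 : G.connectedComponentMk b = G.connectedComponentMk a :=
              (SimpleGraph.ConnectedComponent.connectedComponentMk_eq_of_adj h).symm
            have h1 : f b = - f a := by linarith [hf a b h]
            rw [ih (by rwa [h2]), h1, hs2 a b h hc]
            ring
      choose g hg using hconst
      refine ⟨g, ?_⟩
      funext v
      by_cases h : (G.induce (G.connectedComponentMk v).supp).Colorable 2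
      · rw [hΦ g v h, ← hg ⟨_, h⟩ v rfl, ← mul_assoc, hs1, one_mul]
      · rw [hΦ0 g v h, alternating_eq_zero G hf v h]
  have : Fintype B := Fintype.ofFinite B
  rw [← hrange, LinearMap.finrank_range_of_inj hinj, Module.finrank_fintype_fun_eq_card,
    Nat.card_eq_fintype_card]

/-- Bipartite components are the isolated vertices together with those with an edge. -/
theorem card_bipartite_components :
    Nat.card {c : G.ConnectedComponent // (G.induce c.supp).Colorable 2} =
      Nat.card {i : Fin n // ∀ j, ¬ G.Adj i j} +
        Nat.card {c : G.ConnectedComponent //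
          c.supp.Nontrivial ∧ (G.induce c.supp).Colorable 2} := by
  classical
  rw [← Nat.card_sum]
  symm
  have hiso : ∀ i, (∀ j, ¬ G.Adj i j) → (G.connectedComponentMk i).supp = {i} := by
    intro i hi
    ext j
    simp only [SimpleGraph.ConnectedComponent.mem_supp_iff, Set.mem_singleton_iff]
    constructor
    · intro h
      obtain ⟨p⟩ := (SimpleGraph.ConnectedComponent.exact h).symm
      cases p with
      | nil => rfl
      | cons h _ => exact absurd h (hi _)
    · rintro rfl; rfl
  have hisoc : ∀ i, (∀ j, ¬ G.Adj i j) →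
      (G.induce (G.connectedComponentMk i).supp).Colorable 2 := by
    intro i hi
    refine ⟨SimpleGraph.Coloring.mk (fun _ => 0) ?_⟩
    rintro ⟨a, ha⟩ ⟨b, hb⟩ hab
    rw [hiso i hi] at ha
    cases ha
    exact absurd hab (hi b)
  refine Nat.card_congr (Equiv.ofBijective (Sum.elim
    (fun i => ⟨G.connectedComponentMk i.1, hisoc i.1 i.2⟩) (fun c => ⟨c.1, c.2.2⟩)) ⟨?_, ?_⟩)
  · rintro (⟨i, hi⟩ | ⟨c, hc⟩) (⟨j, hj⟩ | ⟨d, hd⟩) h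
    · have h1 : G.connectedComponentMk i = G.connectedComponentMk j := congrArg Subtype.val h
      have h2 : i ∈ (G.connectedComponentMk j).supp := h1
      rw [hiso j hj] at h2
      cases h2
      rfl
    · have h1 : G.connectedComponentMk i = d := congrArg Subtype.val h
      have h2 := hd.1
      rw [← h1, hiso i hi] at h2
      exact absurd h2 (by simp)
    · have h1 : c = G.connectedComponentMk j := congrArg Subtype.val h
      have h2 := hc.1
      rw [h1, hiso j hj] at h2
      exact absurd h2 (by simp)
    · have h1 : c = d := congrArg Subtype.val h
      subst h1
      rfl
  · rintro ⟨c, hc⟩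
    by_cases hnt : c.supp.Nontrivial
    · exact ⟨Sum.inr ⟨c, hnt, hc⟩, rfl⟩
    · induction c using SimpleGraph.ConnectedComponent.ind with
      | h v =>
        refine ⟨Sum.inl ⟨v, fun j hj => hnt ⟨v, rfl, j, ?_, hj.ne⟩⟩, rfl⟩
        exact (SimpleGraph.ConnectedComponent.connectedComponentMk_eq_of_adj hj).symm

end Rank

/-! ### The fiber ring of an edge ideal -/

section Fiber

variable (K : Type) [Field K] {n : ℕ} (G : SimpleGraph (Fin n))

/-- The elements of `R[t]` in which the coefficient of `t^j` is homogeneous of degree `2j`. -/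
noncomputable def diagonalSubalgebra (K : Type) [Field K] (n : ℕ) :
    Subalgebra K (Polynomial (MvPoly K (Fin n))) where
  carrier := {f | ∀ j, (f.coeff j).IsHomogeneous (2 * j)}
  mul_mem' := by
    intro f g hf hg j
    rw [Polynomial.coeff_mul]
    refine IsHomogeneous.sum _ _ _ fun x hx => ?_
    rw [← Finset.HasAntidiagonal.mem_antidiagonal.mp hx, mul_add]
    exact (hf _).mul (hg _)
  add_mem' := by
    intro f g hf hg j
    rw [Polynomial.coeff_add]
    exact (hf j).add (hg j)
  algebraMap_mem' := by
    intro c j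
    rw [Polynomial.algebraMap_apply, Polynomial.coeff_C]
    split_ifs with h
    · subst h
      exact isHomogeneous_C _ _
    · exact isHomogeneous_zero _ _ _

/-- The `K`-subalgebra of `R[t]` generated by the elements `x_a x_b t`, for edges `{a, b}`. It is a
section of the projection of the Rees algebra onto the fiber ring. -/
noncomputable def edgeAlgebra : Subalgebra K (Polynomial (MvPoly K (Fin n))) :=
  Algebra.adjoin K ((fun u => Polynomial.monomial 1 (monomial u 1)) '' edgeExps G)

theorem degree_edgeExps {u : Fin n →₀ ℕ} (hu : u ∈ edgeExps G) : u.degree = 2 := by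
  obtain ⟨a, b, _, rfl⟩ := hu
  simp

theorem edgeAlgebra_le_diagonal : edgeAlgebra K G ≤ diagonalSubalgebra K n := by
  refine Algebra.adjoin_le ?_
  rintro _ ⟨u, hu, rfl⟩ j
  dsimp only
  rw [Polynomial.coeff_monomial]
  split_ifs with h
  · subst h
    exact isHomogeneous_monomial _ (degree_edgeExps G hu)
  · exact isHomogeneous_zero _ _ _

theorem edgeIdealG_eq_span_edgeExps : edgeIdealG K G =
    Ideal.span ((fun u => (monomial u 1 : MvPoly K (Fin n))) '' edgeExps G) := by
  unfold edgeIdealG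
  congr 1
  ext p
  constructor
  · rintro ⟨a, b, h, rfl⟩
    exact ⟨_, ⟨a, b, h, rfl⟩, by simp [X, monomial_mul]⟩
  · rintro ⟨_, ⟨a, b, h, rfl⟩, rfl⟩
    exact ⟨a, b, h, by simp [X, monomial_mul]⟩

theorem edgeAlgebra_le_rees :
    edgeAlgebra K G ≤ (reesAlgebra (edgeIdealG K G)).restrictScalars K := by
  refine Algebra.adjoin_le ?_
  rintro _ ⟨u, hu, rfl⟩
  refine reesAlgebra.monomial_mem.mpr ?_
  rw [pow_one, edgeIdealG_eq_span_edgeExps]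
  exact Ideal.subset_span ⟨u, hu, rfl⟩

theorem maxIdeal_eq_idealOfVars : maxIdeal K (Fin n) = idealOfVars (Fin n) K := rfl

theorem edgeIdealG_le_sq : edgeIdealG K G ≤ idealOfVars (Fin n) K ^ 2 := by
  rw [edgeIdealG_eq_span_edgeExps, Ideal.span_le]
  rintro _ ⟨u, hu, rfl⟩
  dsimp only
  rw [SetLike.mem_coe, mem_pow_idealOfVars_iff]
  intro x hx
  have := Finset.mem_singleton.mp (support_monomial_subset hx)
  rw [this, degree_edgeExps G hu]

theorem eq_zero_of_isHomogeneous_of_mem_pow {p : MvPoly K (Fin n)} {d : ℕ}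
    (hp : p.IsHomogeneous d) (hm : p ∈ idealOfVars (Fin n) K ^ (d + 1)) : p = 0 := by
  rw [mem_pow_idealOfVars_iff] at hm
  ext u
  rw [coeff_zero]
  by_contra h
  have h1 := hm u (mem_support_iff.mpr h)
  have h2 : u.degree = d := by
    rw [Finsupp.degree_eq_weight_one]
    exact hp h
  omega

/-- The extension of the maximal ideal to the Rees algebra. -/
noncomputable abbrev fiberIdeal : Ideal (reesAlgebra (edgeIdealG K G)) :=
  Ideal.span ((algebraMap (MvPoly K (Fin n)) (reesAlgebra (edgeIdealG K G))) ''
    (maxIdeal K (Fin n) : Set _))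

/-- Since `I ⊆ m²`, the coefficient of `t^j` in an element of `m R[It]` lies in `m^(2j+1)`. -/
theorem coeff_mem_of_mem_fiberIdeal {g : reesAlgebra (edgeIdealG K G)}
    (hg : g ∈ fiberIdeal K G) (j : ℕ) :
    g.1.coeff j ∈ idealOfVars (Fin n) K ^ (2 * j + 1) := by
  have hI : ∀ (f : reesAlgebra (edgeIdealG K G)) (i : ℕ),
      f.1.coeff i ∈ idealOfVars (Fin n) K ^ (2 * i) := by
    intro f i
    rw [pow_mul]
    exact Ideal.pow_right_mono (edgeIdealG_le_sq K G) i ((mem_reesAlgebra_iff _ _).mp f.2 i)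
  induction hg using Submodule.span_induction generalizing j with
  | mem x hx =>
    obtain ⟨r, hr, rfl⟩ := hx
    change (Polynomial.C r).coeff j ∈ _
    rw [Polynomial.coeff_C]
    split_ifs with h
    · subst h
      rw [mul_zero, zero_add, pow_one]
      exact hr
    · exact zero_mem _
  | zero => exact zero_mem _
  | add x y _ _ hx hy =>
    change (x.1 + y.1).coeff j ∈ _
    rw [Polynomial.coeff_add]
    exact add_mem (hx j) (hy j)
  | smul a x _ hx =>
    change (a.1 * x.1).coeff j ∈ _
    rw [Polynomial.coeff_mul]
    refine sum_mem fun y hy => ?_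
    rw [← Finset.HasAntidiagonal.mem_antidiagonal.mp hy, mul_add, add_assoc, pow_add]
    exact Ideal.mul_mem_mul (hI _ _) (hx _)

/-- The composite of the inclusion of the edge algebra in the Rees algebra with the projection
onto the fiber ring. -/
noncomputable def edgeToFiber : edgeAlgebra K G →+* reesAlgebra (edgeIdealG K G) ⧸ fiberIdeal K G :=
  (Ideal.Quotient.mk (fiberIdeal K G)).comp
    { toFun := fun f => ⟨f.1, edgeAlgebra_le_rees K G f.2⟩
      map_one' := rfl
      map_mul' := fun _ _ => rfl
      map_zero' := rfl
      map_add' := fun _ _ => rfl }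

theorem edgeToFiber_apply (f : edgeAlgebra K G) : edgeToFiber K G f =
    Ideal.Quotient.mk (fiberIdeal K G) ⟨f.1, edgeAlgebra_le_rees K G f.2⟩ := rfl

theorem edgeToFiber_injective : Function.Injective (edgeToFiber K G) := by
  rw [injective_iff_map_eq_zero]
  intro f hf
  rw [edgeToFiber_apply, Ideal.Quotient.eq_zero_iff_mem] at hf
  apply Subtype.ext
  ext1 j
  exact eq_zero_of_isHomogeneous_of_mem_pow K (edgeAlgebra_le_diagonal K G f.2 j)
    (coeff_mem_of_mem_fiberIdeal K G hf j)

/-- Modulo the maximal ideal, the coefficients of an element of the Rees algebra can be reduced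
to constants. -/
theorem edgeToFiber_surjective : Function.Surjective (edgeToFiber K G) := by
  have hC : ∀ r : MvPoly K (Fin n), Ideal.Quotient.mk (fiberIdeal K G)
      (algebraMap _ (reesAlgebra (edgeIdealG K G)) r) ∈ (edgeToFiber K G).rangeS := by
    intro r
    refine ⟨algebraMap K _ (constantCoeff r), ?_⟩
    rw [edgeToFiber_apply]
    symm
    have h1 : (⟨(algebraMap K (edgeAlgebra K G) (constantCoeff r)).1,
        edgeAlgebra_le_rees K G (algebraMap K (edgeAlgebra K G) (constantCoeff r)).2⟩ :
        reesAlgebra (edgeIdealG K G)) = algebraMap (MvPoly K (Fin n)) _ (C (constantCoeff r)) := rfl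
    rw [h1, Ideal.Quotient.eq, ← map_sub]
    refine Ideal.subset_span ⟨_, ?_, rfl⟩
    rw [SetLike.mem_coe, maxIdeal_eq_idealOfVars, ← pow_one (idealOfVars (Fin n) K),
      mem_pow_idealOfVars_iff]
    intro x hx
    rw [Nat.one_le_iff_ne_zero, Ne, Finsupp.degree_eq_zero_iff]
    rintro rfl
    rw [mem_support_iff] at hx
    exact hx (by simp [constantCoeff_eq])
  have hgen : ∀ x (hx : x ∈ edgeIdealG K G), ∀ h : Polynomial.monomial 1 x ∈
      reesAlgebra (edgeIdealG K G), Ideal.Quotient.mk (fiberIdeal K G) ⟨_, h⟩ ∈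
        (edgeToFiber K G).rangeS := by
    have hmem : ∀ x ∈ edgeIdealG K G,
        Polynomial.monomial 1 x ∈ reesAlgebra (edgeIdealG K G) := fun x hx =>
      reesAlgebra.monomial_mem.mpr (by rwa [pow_one])
    intro x hx
    rw [edgeIdealG_eq_span_edgeExps] at hx
    induction hx using Submodule.span_induction with
    | mem x hx =>
      obtain ⟨u, hu, rfl⟩ := hx
      intro h
      exact ⟨⟨_, Algebra.subset_adjoin ⟨u, hu, rfl⟩⟩, rfl⟩
    | zero =>
      intro h
      have : (⟨_, h⟩ : reesAlgebra (edgeIdealG K G)) = 0 :=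
        Subtype.ext (map_zero (Polynomial.monomial 1))
      rw [this, map_zero]
      exact zero_mem _
    | add x y hx1 hy1 hx2 hy2 =>
      intro h
      have hx3 : x ∈ edgeIdealG K G := by rw [edgeIdealG_eq_span_edgeExps]; exact hx1
      have hy3 : y ∈ edgeIdealG K G := by rw [edgeIdealG_eq_span_edgeExps]; exact hy1
      have : (⟨_, h⟩ : reesAlgebra (edgeIdealG K G)) =
          ⟨_, hmem x hx3⟩ + ⟨_, hmem y hy3⟩ :=
        Subtype.ext (map_add (Polynomial.monomial 1) x y)
      rw [this, map_add]
      exact add_mem (hx2 _) (hy2 _)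
    | smul a x hx1 hx2 =>
      intro h
      have hx3 : x ∈ edgeIdealG K G := by rw [edgeIdealG_eq_span_edgeExps]; exact hx1
      have : (⟨_, h⟩ : reesAlgebra (edgeIdealG K G)) =
          algebraMap _ _ a * ⟨_, hmem x hx3⟩ :=
        Subtype.ext (Polynomial.C_mul_monomial).symm
      rw [this, map_mul]
      exact mul_mem (hC a) (hx2 _)
  have hall : ∀ f (_ : f ∈ Algebra.adjoin (MvPoly K (Fin n))
      (Submodule.map (Polynomial.monomial 1) (edgeIdealG K G) : Set (Polynomial _))),
      ∀ h : f ∈ reesAlgebra (edgeIdealG K G),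
        Ideal.Quotient.mk (fiberIdeal K G) ⟨f, h⟩ ∈ (edgeToFiber K G).rangeS := by
    intro f hf
    induction hf using Algebra.adjoin_induction with
    | mem x hx =>
      obtain ⟨y, hy, rfl⟩ := hx
      exact hgen y hy
    | algebraMap r => exact fun _ => hC r
    | add x y hx hy ihx ihy =>
      intro h
      rw [adjoin_monomial_eq_reesAlgebra] at hx hy
      exact add_mem (ihx hx) (ihy hy)
    | mul x y hx hy ihx ihy =>
      intro h
      rw [adjoin_monomial_eq_reesAlgebra] at hx hy
      exact mul_mem (ihx hx) (ihy hy)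
  intro y
  obtain ⟨⟨f, hf⟩, rfl⟩ := Ideal.Quotient.mk_surjective y
  exact hall f (by rwa [adjoin_monomial_eq_reesAlgebra]) hf

/-- Setting `t = 1` identifies the edge algebra with a monomial subalgebra of `R`: no information
is lost because the coefficients of different powers of `t` have different degrees. -/
theorem ringKrullDim_edgeAlgebra : ringKrullDim (edgeAlgebra K G) = ringKrullDim
    (Algebra.adjoin K ((fun u => (monomial u 1 : MvPoly K (Fin n))) '' edgeExps G)) := by
  let φ : Polynomial (MvPoly K (Fin n)) →ₐ[K] MvPoly K (Fin n) :=
    (Polynomial.aeval (R := MvPoly K (Fin n)) (1 : MvPoly K (Fin n))).restrictScalars K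
  have hφ : ∀ f, φ f = Polynomial.eval 1 f := fun f => by
    change Polynomial.aeval (R := MvPoly K (Fin n)) (1 : MvPoly K (Fin n)) f = _
    rw [Polynomial.coe_aeval_eq_eval]
  let ψ := φ.comp (edgeAlgebra K G).val
  have hinj : Function.Injective ψ := by
    rw [injective_iff_map_eq_zero]
    intro f hf
    have hdiag := edgeAlgebra_le_diagonal K G f.2
    apply Subtype.ext
    ext1 j
    have h1 : ∑ i ∈ f.1.support, f.1.coeff i = 0 := by
      have h2 : Polynomial.eval 1 f.1 = 0 := (hφ f.1).symm.trans hf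
      rw [Polynomial.eval_eq_sum, Polynomial.sum] at h2
      simpa using h2
    have h3 := congrArg (homogeneousComponent (2 * j)) h1
    rw [map_sum, map_zero] at h3
    have h4 : ∀ i, homogeneousComponent (2 * j) (f.1.coeff i) =
        if i = j then f.1.coeff j else 0 := by
      intro i
      rw [homogeneousComponent_of_mem (hdiag i)]
      by_cases h : i = j
      · subst h; simp
      · rw [if_neg h, if_neg (by omega)]
    simp only [h4, Finset.sum_ite_eq'] at h3
    by_cases hj : j ∈ f.1.support
    · rw [if_pos hj] at h3
      exact h3
    · exact Polynomial.notMem_support_iff.mp hj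
  have hrange : ψ.range =
      Algebra.adjoin K ((fun u => (monomial u 1 : MvPoly K (Fin n))) '' edgeExps G) := by
    rw [AlgHom.range_comp, Subalgebra.range_val, edgeAlgebra, AlgHom.map_adjoin, Set.image_image]
    congr 2
    funext u
    rw [hφ]
    simp
  rw [← hrange]
  exact ringKrullDim_eq_of_ringEquiv (AlgEquiv.ofInjective ψ hinj).toRingEquiv

theorem finite_edgeExps : (edgeExps G).Finite := by
  refine (Set.finite_range (fun p : Fin n × Fin n =>
    (Finsupp.single p.1 1 + Finsupp.single p.2 1 : Fin n →₀ ℕ))).subset ?_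
  rintro _ ⟨a, b, _, rfl⟩
  exact ⟨(a, b), rfl⟩

theorem analyticSpread_edgeIdealG : analyticSpread K (edgeIdealG K G) =
    Module.finrank ℚ (Submodule.span ℚ (ratExp '' edgeExps G)) := by
  rw [← ringKrullDim_adjoin_monomials K _ (finite_edgeExps G), ← ringKrullDim_edgeAlgebra]
  let e : edgeAlgebra K G ≃+* reesAlgebra (edgeIdealG K G) ⧸ fiberIdeal K G :=
    { Equiv.ofBijective (edgeToFiber K G)
        ⟨edgeToFiber_injective K G, edgeToFiber_surjective K G⟩ with
      map_mul' := (edgeToFiber K G).map_mul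
      map_add' := (edgeToFiber K G).map_add }
  exact (ringKrullDim_eq_of_ringEquiv e).symm

theorem analyticSpread_add_card : analyticSpread K (edgeIdealG K G) +
    (((Nat.card {i : Fin n // ∀ j, ¬ G.Adj i j} +
      Nat.card {c : G.ConnectedComponent //
        c.supp.Nontrivial ∧ (G.induce c.supp).Colorable 2} : ℕ) : ℕ∞) : WithBot ℕ∞) =
      ringKrullDim (MvPoly K (Fin n)) := by
  rw [analyticSpread_edgeIdealG, ← card_bipartite_components, ← finrank_alternating,
    MvPolynomial.ringKrullDim_of_isNoetherianRing, ringKrullDim_eq_zero_of_field, zero_add,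
    Nat.card_eq_fintype_card, Fintype.card_fin]
  have h := finrank_span_add_finrank_alternating G
  conv_rhs => rw [← h]
  push_cast
  rfl

end Fiber

/-- (a) the depth inequality for colon ideals of powers of an edge
ideal of a graph; (c) `dim R - ℓ(I(G)) = |isol(G)| + c_0(G)`, written additively. -/
theorem stmt15 (K : Type) [Field K] (n : ℕ) (G : SimpleGraph (Fin n)) :
    (∀ k : ℕ, 1 ≤ k → ∀ i : Fin n,
      depthQ K (Fin n)
          ((edgeIdealG K G ^ k).colon (Ideal.span {(MvPolynomial.X i : MvPoly K (Fin n)) ^ k})) ≤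
        depthQ K (Fin n) (edgeIdealDel K G (G.neighborSet i) ^ k + nbIdeal K G i)) ∧
    (analyticSpread K (edgeIdealG K G) +
        (((Nat.card {i : Fin n // ∀ j, ¬ G.Adj i j} +
          Nat.card {c : G.ConnectedComponent //
            c.supp.Nontrivial ∧ (G.induce c.supp).Colorable 2} : ℕ) : ℕ∞) : WithBot ℕ∞) =
      ringKrullDim (MvPoly K (Fin n))) :=
  ⟨fun k _ i => depthQ_colon_le K G k i, analyticSpread_add_card K G⟩
end

section
/- Let G be a bipartite graph with vertices x_1,…,x_n and edge ideal I(G) ⊆ R, and let k ≥ 1 and 1 ≤ i ≤ n be integers. Then: (a) (I(G) : x_i)^k = (I(G) : x_i)^{(k)}; (b) (I(G)^k : x_i^k) = (I(G) : x_i)^k. -/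
/-!
Write `I = I(G)` and `J = (I : x_i)`. For a monomial ideal, membership can be tested monomial by
monomial, and powers of `I` are monomial ideals.

Part (b): if `x^m x_i^k ∈ I^k`, then setting `x_i = 1`, which maps `I` into `J`, shows that `x^m`
with its `x_i`-part removed lies in `J^k` (`monomial_mem_colon_pow`). The other inclusion follows
from `J x_i ⊆ I`.

Part (a): let `f ∈ J^{(k)}` and let `x^m` be a monomial of `f`. For a vertex cover `C` of `G` that
does not contain `x_i`, the prime `P_C = (x_v : v ∈ C)` contains `J`, hence contains a minimal prime
of `J`, which is associated to `R/J`; so `f ∈ P_C^k` and `x^m` has degree at least `k` in the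
variables of `C`. For the weight `w = m + k e_i` every vertex cover, whether or not it contains
`x_i`, therefore has weight at least `k`. König's theorem for the bipartite graph `G` with vertex
weights (`monomial_mem_edgeIdealG_pow`, deduced from Hall's theorem) yields `x^m x_i^k ∈ I^k`.
Thus `J^{(k)} ⊆ (I^k : x_i^k)`, which is `J^k` by part (b).
-/

open MvPolynomial CategoryTheory Opposite

/-! ### Monomial ideals -/

/-- The prime ideal generated by the variables indexed by `C`. -/
noncomputable def coverPrime (K : Type) [Field K] {n : ℕ} (C : Set (Fin n)) : Ideal (MvPoly K (Fin n)) :=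
  Ideal.span (MvPolynomial.X '' C)

lemma coverPrime_isPrime (K : Type) [Field K] {n : ℕ} (C : Set (Fin n)) :
    (coverPrime K C).IsPrime := by
  classical
  -- `coverPrime K C` is the kernel of the substitution `x_c ↦ 0` for `c ∈ C`.
  let φ : MvPoly K (Fin n) →ₐ[K] MvPoly K (Fin n) :=
    aeval fun j => if j ∈ C then 0 else X j
  have hφ : ∀ f : MvPoly K (Fin n), f - φ f ∈ coverPrime K C := by
    intro f
    induction f using MvPolynomial.induction_on with
    | C a => simp [φ]
    | add p q hp hq =>
      have := Ideal.add_mem _ hp hq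
      rw [map_add]
      convert this using 1
      ring
    | mul_X p j hp =>
      by_cases hj : j ∈ C
      · have : p * X j ∈ coverPrime K C :=
          Ideal.mul_mem_left _ _ (Ideal.subset_span ⟨j, hj, rfl⟩)
        simpa [φ, hj] using this
      · have := Ideal.mul_mem_right (X j) _ hp
        have h2 : φ (X j) = X j := by simp [φ, hj]
        rw [map_mul, h2, ← sub_mul]
        exact this
  have : coverPrime K C = RingHom.ker φ := by
    apply le_antisymm
    · rw [coverPrime, Ideal.span_le]
      rintro _ ⟨c, hc, rfl⟩
      simp [RingHom.mem_ker, φ, hc]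
    · intro f hf
      rw [RingHom.mem_ker] at hf
      simpa [hf] using hφ f
  rw [this]
  exact RingHom.ker_isPrime _

lemma X_notMem_coverPrime (K : Type) [Field K] {n : ℕ} {C : Set (Fin n)} {i : Fin n}
    (hi : i ∉ C) : (X i : MvPoly K (Fin n)) ∉ coverPrime K C := by
  rw [coverPrime, mem_ideal_span_X_image]
  intro h
  obtain ⟨c, hc, h0⟩ := h (Finsupp.single i 1) (by simp [MvPolynomial.support_X])
  have : i = c := by
    by_contra hne
    exact h0 (Finsupp.single_eq_of_ne' hne)
  exact hi (this ▸ hc)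

open Classical in
/-- Every monomial of an element of `coverPrime K C ^ k` has degree at least `k` in the variables
indexed by `C`. -/
lemma le_sum_of_mem_coverPrime_pow {K : Type} [Field K] {n : ℕ} {C : Set (Fin n)} {k : ℕ}
    {f : MvPoly K (Fin n)} (hf : f ∈ coverPrime K C ^ k) {m : Fin n →₀ ℕ} (hm : m ∈ f.support) :
    k ≤ ∑ v with v ∈ C, m v := by
  have key : ∀ k : ℕ, coverPrime K C ^ k ≤ Ideal.span
      ((fun m => monomial m (1 : K)) '' {m : Fin n →₀ ℕ | k ≤ ∑ v with v ∈ C, m v}) := by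
    intro k
    induction k with
    | zero =>
      intro f _
      rw [mem_ideal_span_monomial_image]
      exact fun m _ => ⟨m, by simp, le_rfl⟩
    | succ k ih =>
      rw [pow_succ]
      refine (Ideal.mul_mono_left ih).trans ?_
      rw [coverPrime, Ideal.span_mul_span', Ideal.span_le]
      rintro _ ⟨_, ⟨m, hm, rfl⟩, _, ⟨c, hc, rfl⟩, rfl⟩
      refine Ideal.subset_span ⟨m + Finsupp.single c 1, ?_, ?_⟩
      · have : ∑ v with v ∈ C, (Finsupp.single c 1 : Fin n →₀ ℕ) v = 1 := by
          rw [Finset.sum_eq_single c]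
          · simp
          · intro b _ hb
            exact Finsupp.single_eq_of_ne hb
          · simp [hc]
        simp only [Set.mem_ofPred_eq, Finsupp.add_apply, Finset.sum_add_distrib, this] at hm ⊢
        omega
      · simp [X, monomial_mul]
  obtain ⟨s, hs, hsm⟩ := mem_ideal_span_monomial_image.1 (key k hf) m hm
  exact hs.trans (Finset.sum_le_sum fun v _ => hsm v)

lemma edgeIdealG_pow_monomial {K : Type} [Field K] {n : ℕ} (G : SimpleGraph (Fin n)) (k : ℕ) :
    ∃ S : Set (Fin n →₀ ℕ),
      edgeIdealG K G ^ k = Ideal.span ((fun m => monomial m (1 : K)) '' S) := by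
  induction k with
  | zero => exact ⟨{0}, by simp⟩
  | succ k ih =>
    obtain ⟨S, hS⟩ := ih
    refine ⟨{m | ∃ s ∈ S, ∃ a b, G.Adj a b ∧
      m = s + (Finsupp.single a 1 + Finsupp.single b 1)}, ?_⟩
    rw [pow_succ, hS, edgeIdealG, Ideal.span_mul_span']
    congr 1
    ext p
    constructor
    · rintro ⟨_, ⟨s, hs, rfl⟩, _, ⟨a, b, hab, rfl⟩, rfl⟩
      exact ⟨_, ⟨s, hs, a, b, hab, rfl⟩, by simp [X, monomial_mul]⟩
    · rintro ⟨_, ⟨s, hs, a, b, hab, rfl⟩, rfl⟩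
      exact ⟨_, ⟨s, hs, rfl⟩, _, ⟨a, b, hab, rfl⟩, by simp [X, monomial_mul]⟩

/-- A polynomial lies in a power of the edge ideal as soon as all its monomials do, and
conversely. -/
lemma mem_edgeIdealG_pow_iff {K : Type} [Field K] {n : ℕ} {G : SimpleGraph (Fin n)} {k : ℕ}
    {f : MvPoly K (Fin n)} :
    f ∈ edgeIdealG K G ^ k ↔ ∀ m ∈ f.support, monomial m (1 : K) ∈ edgeIdealG K G ^ k := by
  obtain ⟨S, hS⟩ := edgeIdealG_pow_monomial (K := K) G k
  rw [hS, mem_ideal_span_monomial_image]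
  refine forall₂_congr fun m _ => ?_
  classical
  rw [mem_ideal_span_monomial_image]
  simp [support_monomial]

/-! ### König's theorem with vertex weights -/

open Classical in
/-- Weighted König theorem, in algebraic form: if every vertex cover of the bipartite graph `G`
has `w`-weight at least `k`, then `x^w` is divisible by a product of `k` edges. It is Hall's
theorem for the graph in which each vertex `v` is replaced by `w v` copies and enough extra
vertices, adjacent to the whole left side, are added on the right to absorb the deficiency. -/
lemma monomial_mem_edgeIdealG_pow {K : Type} [Field K] {n : ℕ} {G : SimpleGraph (Fin n)}
    (hbip : G.Colorable 2) {k : ℕ} (w : Fin n →₀ ℕ)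
    (hw : ∀ C : Set (Fin n), (∀ a b, G.Adj a b → a ∈ C ∨ b ∈ C) → k ≤ ∑ v with v ∈ C, w v) :
    monomial w (1 : K) ∈ edgeIdealG K G ^ k := by
  obtain ⟨c⟩ := hbip
  let ι := Σ v : Fin n, Fin (w v)
  -- The copies of the vertices in `C`; their number is the weight of `C`.
  let F : Set (Fin n) → Finset ι := fun C => Finset.univ.filter fun x : ι => x.1 ∈ C
  have hF : ∀ C x, x ∈ F C ↔ x.1 ∈ C := fun C x => by simp [F]
  have hcard : ∀ C : Set (Fin n), (F C).card = ∑ v with v ∈ C, w v := by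
    intro C
    have : F C =
        (Finset.univ.filter fun v => v ∈ C).sigma fun v => (Finset.univ : Finset (Fin (w v))) := by
      ext x
      rw [hF, Finset.mem_sigma]
      simp
    rw [this, Finset.card_sigma]
    simp
  let L := {x : ι // c x.1 = 0}
  have hLcard : Fintype.card L = (F {v | c v = 0}).card := by
    rw [Fintype.card_subtype]
    congr 1
    ext x
    simp [hF]
  have hkL : k ≤ Fintype.card L := by
    rw [hLcard, hcard]
    apply hw
    intro a b hab
    have := c.valid hab
    simp only [Set.mem_ofPred_eq]
    omega
  let d := Fintype.card L - k
  let t : L → Finset (ι ⊕ Fin d) := fun x =>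
    (Finset.univ.filter fun y : ι => G.Adj x.1.1 y.1).disjSum Finset.univ
  obtain ⟨f, hf, hft⟩ := (Finset.all_card_le_biUnion_card_iff_exists_injective t).1 (by
    intro s
    rcases s.eq_empty_or_nonempty with rfl | hs
    · simp
    let S : Set (Fin n) := {v | ∃ x ∈ s, x.1.1 = v}
    let N : Set (Fin n) := {v | ∃ x ∈ s, G.Adj x.1.1 v}
    have h1 : s.biUnion t = (F N).disjSum Finset.univ := by
      obtain ⟨x0, hx0⟩ := hs
      ext (y | y)
      · simp [t, N, hF]
      · simp only [t, Finset.mem_biUnion, Finset.inr_mem_disjSum, Finset.mem_univ, and_true,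
          iff_true]
        exact ⟨x0, hx0⟩
    rw [h1, Finset.card_disjSum, Finset.card_univ, Fintype.card_fin]
    -- Trading `S` for its neighbourhood `N` in the left side gives a vertex cover, of weight `≥ k`.
    have h2 := hw ({v | c v = 0 ∧ v ∉ S} ∪ N) (by
      have aux : ∀ a b, G.Adj a b → c a = 0 →
          a ∈ ({v | c v = 0 ∧ v ∉ S} ∪ N : Set (Fin n)) ∨
          b ∈ ({v | c v = 0 ∧ v ∉ S} ∪ N : Set (Fin n)) := by
        intro a b hab ha
        by_cases haS : a ∈ S
        · obtain ⟨x, hx, rfl⟩ := haS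
          exact Or.inr (Or.inr ⟨x, hx, hab⟩)
        · exact Or.inl (Or.inl ⟨ha, haS⟩)
      intro a b hab
      by_cases ha : c a = 0
      · exact aux a b hab ha
      · have := c.valid hab
        exact (aux b a hab.symm (by omega)).symm)
    rw [← hcard] at h2
    have h3 : (F ({v | c v = 0 ∧ v ∉ S} ∪ N)).card ≤
        (F {v | c v = 0 ∧ v ∉ S}).card +
        (F N).card := by
      refine le_trans (Finset.card_le_card ?_) (Finset.card_union_le _ _)
      intro x
      simp only [hF, Finset.mem_union, Set.mem_union]
      exact id
    have h4 : (F {v | c v = 0 ∧ v ∉ S}).card + s.card ≤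
        Fintype.card L := by
      rw [hLcard, ← Finset.card_map (Function.Embedding.subtype _), ← Finset.card_union_of_disjoint]
      · apply Finset.card_le_card
        intro x
        simp only [Finset.mem_union, hF, Finset.mem_map, Set.mem_ofPred_eq]
        rintro (⟨h, _⟩ | ⟨y, _, rfl⟩)
        · exact h
        · exact y.2
      · rw [Finset.disjoint_left]
        intro x hx hx'
        simp only [hF, Finset.mem_map, Set.mem_ofPred_eq] at hx hx'
        obtain ⟨y, hy, rfl⟩ := hx'
        exact hx.2 ⟨y, hy, rfl⟩
    omega)
  -- `T` consists of the left copies matched to genuine right copies.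
  let T : Finset L := Finset.univ.filter fun x => (f x).isLeft
  have hT : k ≤ T.card := by
    have h1 : (Finset.univ.filter fun x : L => ¬ (f x).isLeft).card ≤ d := by
      calc _ = ((Finset.univ.filter fun x : L => ¬ (f x).isLeft).image f).card :=
            (Finset.card_image_of_injective _ hf).symm
        _ ≤ ((Finset.univ : Finset (Fin d)).map Function.Embedding.inr).card := by
            apply Finset.card_le_card
            intro y
            simp only [Finset.mem_image, Finset.mem_filter, Finset.mem_map]
            rintro ⟨x, ⟨_, hx⟩, rfl⟩
            rcases hfx : f x with y | y
            · simp [hfx] at hx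
            · exact ⟨y, by simp⟩
        _ = d := by simp
    have h2 := Finset.card_filter_add_card_filter_not (s := (Finset.univ : Finset L))
      (fun x => ((f x).isLeft : Prop))
    rw [Finset.card_univ] at h2
    change T.card + _ = _ at h2
    omega
  obtain ⟨T', hT'T, hT'⟩ := Finset.exists_subset_card_eq hT
  let g : L → ι := fun x => (f x).elim id fun _ => x.1
  have hg : ∀ x ∈ T', f x = Sum.inl (g x) := by
    intro x hx
    have := (Finset.mem_filter.1 (hT'T hx)).2
    rcases hfx : f x with y | y
    · simp [g, hfx]
    · simp [hfx] at this
  have hadj : ∀ x ∈ T', G.Adj x.1.1 (g x).1 := by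
    intro x hx
    have := hft x
    rw [hg x hx] at this
    simpa [t] using this
  have hmem : ∏ x ∈ T', ((X x.1.1 : MvPoly K (Fin n)) * X (g x).1) ∈ edgeIdealG K G ^ k := by
    have := Ideal.prod_mem_prod (s := T') (I := fun _ => edgeIdealG K G)
      (x := fun x => (X x.1.1 : MvPoly K (Fin n)) * X (g x).1)
      fun x hx => Ideal.subset_span ⟨_, _, hadj x hx, rfl⟩
    simpa [hT'] using this
  have hw' : monomial w (1 : K) = ∏ x : ι, (X x.1 : MvPoly K (Fin n)) := by
    rw [Fintype.prod_sigma, monomial_eq, Finsupp.prod_fintype _ _ (by simp)]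
    simp
  refine Ideal.mem_of_dvd _ ?_ hmem
  -- The chosen left copies and their partners are pairwise distinct copies.
  have hginj : Set.InjOn g T' := by
    intro x hx y hy hxy
    apply hf
    rw [hg x hx, hg y hy, hxy]
  have hdisj : Disjoint (T'.image Subtype.val) (T'.image g) := by
    rw [Finset.disjoint_left]
    intro x hx hx'
    obtain ⟨y, hy, rfl⟩ := Finset.mem_image.1 hx
    obtain ⟨z, hz, hzy⟩ := Finset.mem_image.1 hx'
    have h1 := c.valid (hadj z hz)
    rw [hzy, y.2, z.2] at h1
    exact h1 rfl
  rw [hw', Finset.prod_mul_distrib,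
    ← Finset.prod_image (s := T') (g := (Subtype.val : L → ι))
      (f := fun x : ι => (X x.1 : MvPoly K (Fin n))) (Subtype.val_injective.injOn),
    ← Finset.prod_image (s := T') (g := g)
      (f := fun x : ι => (X x.1 : MvPoly K (Fin n))) hginj,
    ← Finset.prod_union hdisj]
  exact Finset.prod_dvd_prod_of_subset _ _ _ (Finset.subset_univ _)

/-! ### Colon ideals -/

/-- Setting `x_i = 1` sends the edge ideal into `(I(G) : x_i)`, hence `I(G)^k` into
`(I(G) : x_i)^k`; applied to monomials this gives the inclusion
`(I(G)^k : x_i^k) ⊆ (I(G) : x_i)^k`. -/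
lemma monomial_mem_colon_pow {K : Type} [Field K] {n : ℕ} {G : SimpleGraph (Fin n)} {i : Fin n}
    {k l : ℕ} {m : Fin n →₀ ℕ}
    (h : monomial (m + Finsupp.single i l) (1 : K) ∈ edgeIdealG K G ^ k) :
    monomial m (1 : K) ∈
      ((edgeIdealG K G).colon (Ideal.span {(X i : MvPoly K (Fin n))})) ^ k := by
  classical
  set J := (edgeIdealG K G).colon (Ideal.span {(X i : MvPoly K (Fin n))}) with hJ
  let φ : MvPoly K (Fin n) →ₐ[K] MvPoly K (Fin n) :=
    aeval fun j => if j = i then 1 else X j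
  have hX : ∀ a b, G.Adj a b → (X a * X b : MvPoly K (Fin n)) ∈ edgeIdealG K G :=
    fun a b hab => Ideal.subset_span ⟨a, b, hab, rfl⟩
  have hmemJ : ∀ g, g ∈ J ↔ g * X i ∈ edgeIdealG K G := by
    intro g
    rw [hJ, Ideal.span, Submodule.mem_colon_span_singleton, smul_eq_mul]
  have hφI : (edgeIdealG K G).map φ ≤ J := by
    rw [edgeIdealG, Ideal.map_span, Ideal.span_le]
    rintro _ ⟨_, ⟨a, b, hab, rfl⟩, rfl⟩
    rw [SetLike.mem_coe, hmemJ, map_mul]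
    by_cases ha : a = i
    · subst ha
      have hb : b ≠ a := hab.ne'
      simpa [φ, hb] using hX b a hab.symm
    · by_cases hb : b = i
      · subst hb
        simpa [φ, ha] using hX a b hab
      · simpa [φ, ha, hb] using Ideal.mul_mem_right (X i) _ (hX a b hab)
  have h1 : φ (monomial (m + Finsupp.single i l) (1 : K)) ∈ J ^ k := by
    have := Ideal.mem_map_of_mem φ h
    rw [Ideal.map_pow] at this
    exact Ideal.pow_right_mono hφI k this
  refine Ideal.mem_of_dvd _ ?_ h1
  rw [aeval_monomial, map_one, one_mul, monomial_eq, C_1, one_mul,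
    Finsupp.prod_fintype _ _ (by simp), Finsupp.prod_fintype _ _ (by simp)]
  apply Finset.prod_dvd_prod_of_dvd
  intro j _
  by_cases hj : j = i
  · simp [hj]
  · simp [hj, Finsupp.single_eq_of_ne hj]

lemma pow_colon_eq {K : Type} [Field K] {n : ℕ} {G : SimpleGraph (Fin n)} {i : Fin n} {k : ℕ} :
    (edgeIdealG K G ^ k).colon (Ideal.span {(X i : MvPoly K (Fin n)) ^ k}) =
      ((edgeIdealG K G).colon (Ideal.span {(X i : MvPoly K (Fin n))})) ^ k := by
  classical
  apply le_antisymm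
  · intro f hf
    rw [Ideal.span, Submodule.mem_colon_span_singleton, smul_eq_mul, mem_edgeIdealG_pow_iff] at hf
    rw [f.as_sum]
    refine Ideal.sum_mem _ fun m hm => ?_
    have h1 : monomial m (1 : K) ∈
        ((edgeIdealG K G).colon (Ideal.span {(X i : MvPoly K (Fin n))})) ^ k := by
      refine monomial_mem_colon_pow (l := k) (hf _ ?_)
      rw [mem_support_iff, X_pow_eq_monomial, coeff_mul_monomial, mul_one]
      exact mem_support_iff.1 hm
    have := Ideal.mul_mem_left _ (C (coeff m f)) h1
    rwa [C_mul_monomial, mul_one] at this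
  · intro f hf
    rw [Ideal.span, Submodule.mem_colon_span_singleton, smul_eq_mul]
    have h1 := Ideal.mul_mem_mul hf
      (Ideal.pow_mem_pow (Ideal.mem_span_singleton_self (X i : MvPoly K (Fin n))) k)
    rw [← mul_pow] at h1
    refine Ideal.pow_right_mono ?_ k h1
    rw [Ideal.mul_le]
    intro r hr s hs
    exact Submodule.mem_colon.1 hr s hs

lemma pow_le_symbPow {K : Type} [Field K] {σ : Type} (J : Ideal (MvPoly K σ)) (k : ℕ) :
    J ^ k ≤ symbPow K J k := by
  refine le_iInf₂ fun p hp => Ideal.pow_right_mono ?_ k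
  have := (AssociatedPrimes.mem_iff.1 hp).annihilator_le
  rwa [Submodule.annihilator_top, Ideal.annihilator_quotient] at this

/-- A prime `P ⊇ J` contains a prime minimal over `J`, and that one is associated to `R/J`. -/
lemma symbPow_le_pow {K : Type} [Field K] {n : ℕ} {J P : Ideal (MvPoly K (Fin n))}
    (hP : P.IsPrime) (hJP : J ≤ P) (k : ℕ) : symbPow K J k ≤ P ^ k := by
  obtain ⟨p, hp, hpP⟩ := Ideal.exists_minimalPrimes_le hJP
  refine (iInf₂_le p ?_).trans (Ideal.pow_right_mono hpP k)
  apply Module.associatedPrimes.minimalPrimes_annihilator_subset_associatedPrimes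
  rwa [Ideal.annihilator_quotient]

lemma symbPow_le_colon {K : Type} [Field K] {n : ℕ} {G : SimpleGraph (Fin n)}
    (hbip : G.Colorable 2) {k : ℕ} {i : Fin n} :
    symbPow K ((edgeIdealG K G).colon (Ideal.span {(X i : MvPoly K (Fin n))})) k ≤
      (edgeIdealG K G ^ k).colon (Ideal.span {(X i : MvPoly K (Fin n)) ^ k}) := by
  classical
  intro f hf
  rw [Ideal.span, Submodule.mem_colon_span_singleton, smul_eq_mul, mem_edgeIdealG_pow_iff]
  intro m' hm'
  rw [X_pow_eq_monomial, mem_support_iff, coeff_mul_monomial'] at hm'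
  split_ifs at hm' with hle
  swap
  · exact absurd rfl hm'
  obtain ⟨m, rfl⟩ : ∃ m, m' = m + Finsupp.single i k := ⟨_, (tsub_add_cancel_of_le hle).symm⟩
  rw [add_tsub_cancel_right, mul_one] at hm'
  apply monomial_mem_edgeIdealG_pow hbip
  intro D hD
  by_cases hi : i ∈ D
  · refine le_trans ?_ (Finset.single_le_sum (fun _ _ => Nat.zero_le _)
      (Finset.mem_filter.2 ⟨Finset.mem_univ i, hi⟩))
    simp
  · -- As `x_i ∉ (x_v : v ∈ D)`, this prime contains `(I(G) : x_i)`.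
    have hJ : (edgeIdealG K G).colon (Ideal.span {(X i : MvPoly K (Fin n))}) ≤
        coverPrime K D := by
      intro g hg
      rw [Ideal.span, Submodule.mem_colon_span_singleton, smul_eq_mul] at hg
      have hI : edgeIdealG K G ≤ coverPrime K D := by
        rw [edgeIdealG, Ideal.span_le]
        rintro _ ⟨a, b, hab, rfl⟩
        rcases hD a b hab with h | h
        · exact Ideal.mul_mem_right _ _ (Ideal.subset_span ⟨a, h, rfl⟩)
        · exact Ideal.mul_mem_left _ _ (Ideal.subset_span ⟨b, h, rfl⟩)
      exact ((coverPrime_isPrime K D).mem_or_mem (hI hg)).resolve_right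
        (X_notMem_coverPrime K hi)
    have h1 := symbPow_le_pow (coverPrime_isPrime K D) hJ k hf
    refine (le_sum_of_mem_coverPrime_pow h1 (mem_support_iff.2 hm')).trans ?_
    refine (Finset.sum_le_sum fun v _ => ?_).trans_eq (by congr)
    simp

/-- for a bipartite graph `G`, the colon ideal `(I(G) : x_i)` is
normally torsion-free and `(I(G)^k : x_i^k) = (I(G) : x_i)^k`. -/
theorem stmt16 (K : Type) [Field K] (n : ℕ) (G : SimpleGraph (Fin n))
    (hbip : G.Colorable 2) (k : ℕ) (hk : 1 ≤ k) (i : Fin n) :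
    ((edgeIdealG K G).colon (Ideal.span {(MvPolynomial.X i : MvPoly K (Fin n))})) ^ k =
      symbPow K ((edgeIdealG K G).colon
        (Ideal.span {(MvPolynomial.X i : MvPoly K (Fin n))})) k ∧
    (edgeIdealG K G ^ k).colon (Ideal.span {(MvPolynomial.X i : MvPoly K (Fin n)) ^ k}) =
      ((edgeIdealG K G).colon (Ideal.span {(MvPolynomial.X i : MvPoly K (Fin n))})) ^ k := by
  exact ⟨le_antisymm (pow_le_symbPow _ k) ((symbPow_le_colon hbip).trans_eq pow_colon_eq),
    pow_colon_eq⟩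
end
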